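/- Let α ∈ (−1, 0] and define the probability density μ_α(x) = ((1+α)/π) |x|^{2α} (1+|x|^{2(1+α)})^{−2} on ℝ². For every smooth compactly supported function u on ℝ², setting v = e^{u} μ_α / ∫_{ℝ²} e^{u} μ_α dx, one has 0 ≤ ∫_{ℝ²} v log(v/μ_α) dx − 4π(1+α) ∫_{ℝ²} (v−μ_α) (−Δ)^{−1}(v−μ_α) dx ≤ (1/(16π(1+α))) ∫_{ℝ²} |∇u|² dx − log( ∫_{ℝ²} e^{u} μ_α dx ) + ∫_{ℝ²} u μ_α dx. -/

import Mathlib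

open MeasureTheory Real

noncomputable section

/-- `(−Δ)⁻¹ g` in dimension 2: convolution with the logarithmic kernel
`G_2(x) = −(1/(2π)) log |x|`. -/
def invLap2 (g : EuclideanSpace ℝ (Fin 2) → ℝ) (x : EuclideanSpace ℝ (Fin 2)) : ℝ :=
  -(1 / (2 * Real.pi)) * ∫ y, Real.log ‖x - y‖ * g y

/-- The probability density `μ_α(x) = ((1+α)/π) |x|^{2α} (1+|x|^{2(1+α)})^{−2}` on `ℝ²`. -/
def muAlpha (α : ℝ) (x : EuclideanSpace ℝ (Fin 2)) : ℝ :=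
  (1 + α) / Real.pi * ‖x‖ ^ (2 * α) / (1 + ‖x‖ ^ (2 * (1 + α))) ^ 2

open Filter Set Topology

/-!
Write `f = v - μ_α` and `c = 4π(1 + α)`; since `log (v / μ_α) = u - log ∫ e^u μ_α`, the entropy
is `∫ v u - log ∫ e^u μ_α`. The upper bound is the Legendre duality of the logarithmic energy and
the Dirichlet energy: `∫ f u ≤ c ∫ f (-Δ)⁻¹ f + (4c)⁻¹ ∫ |∇u|²`. For the lower bound, the
Gibbs variational principle bounds the entropy from below by `∫ v ψ - log ∫ e^ψ μ_α`, and the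
weighted Onofri inequality for `ψ = 2c (-Δ)⁻¹ f` turns this into `c ∫ f (-Δ)⁻¹ f`. To make sense
of these integrations by parts, `(-Δ)⁻¹ = ∫ e^{tΔ} dt` is truncated to `e^A ≤ t ≤ e^B`; the
truncated potential is `C¹`, vanishes at infinity and has finite energy, and the diverging constant
in the limit disappears because `∫ f = 0`.

The Onofri inequality with `α = 0` is proved by mass transport: a Knothe map between two large
squares carries `e^Ψ μ₀` to `μ₀`, and the arithmetic-geometric mean inequality for its Jacobian
followed by integration by parts gives the inequality up to boundary terms. The weighted case
follows by composing with `x ↦ |x|^γ x`, where `γ + 1 = (1 + α)⁻¹`, which multiplies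
the Dirichlet energy by at most `(1 + α)⁻¹`.
-/

/-! ### Squares in the plane -/

/-- The closed square `[-L, L]²`. -/
def square (L : ℝ) : Set (ℝ × ℝ) := Icc (-L) L ×ˢ Icc (-L) L

/-- The integral of `k` over the four edges of the square `[-L, L]²`. -/
def squareBoundaryIntegral (L : ℝ) (k : ℝ × ℝ → ℝ) : ℝ :=
  ∫ t in -L..L, (k (L, t) + k (-L, t)) + (k (t, L) + k (t, -L))

lemma isCompact_square (L : ℝ) : IsCompact (square L) := isCompact_Icc.prod isCompact_Icc

lemma measurableSet_square (L : ℝ) : MeasurableSet (square L) :=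
  (isCompact_square L).isClosed.measurableSet

lemma integrableOn_square {F : ℝ × ℝ → ℝ} (hF : Continuous F) (L : ℝ) :
    IntegrableOn F (square L) :=
  hF.continuousOn.integrableOn_compact (isCompact_square L)

section SquareIntegrals

variable {F F' G G' : ℝ × ℝ → ℝ} {L : ℝ}

lemma setIntegral_square (hF : Continuous F) (hL : 0 ≤ L) :
    ∫ p in square L, F p = ∫ x in -L..L, ∫ y in -L..L, F (x, y) := by
  have hle : -L ≤ L := by linarith
  rw [square, Measure.volume_eq_prod, setIntegral_prod _
    (integrableOn_square hF L)]
  simp only [intervalIntegral.integral_of_le hle, integral_Icc_eq_integral_Ioc]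

lemma setIntegral_square_swap (hF : Continuous F) (hL : 0 ≤ L) :
    ∫ p in square L, F p = ∫ y in -L..L, ∫ x in -L..L, F (x, y) := by
  rw [square, Measure.volume_eq_prod, ← setIntegral_prod_swap]
  exact setIntegral_square (F := F ∘ Prod.swap) (by fun_prop) hL

lemma setIntegral_square_deriv_fst (hF : ∀ x y, HasDerivAt (fun t => F (t, y)) (F' (x, y)) x)
    (hF' : Continuous F') (hL : 0 ≤ L) :
    ∫ p in square L, F' p = ∫ y in -L..L, F (L, y) - F (-L, y) := by
  rw [setIntegral_square_swap hF' hL]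
  refine intervalIntegral.integral_congr fun y _ => ?_
  exact intervalIntegral.integral_eq_sub_of_hasDerivAt (fun x _ => hF x y)
    (Continuous.intervalIntegrable (by fun_prop) _ _)

lemma setIntegral_square_deriv_snd (hF : ∀ x y, HasDerivAt (fun t => F (x, t)) (F' (x, y)) y)
    (hF' : Continuous F') (hL : 0 ≤ L) :
    ∫ p in square L, F' p = ∫ x in -L..L, F (x, L) - F (x, -L) := by
  rw [setIntegral_square hF' hL]
  refine intervalIntegral.integral_congr fun x _ => ?_
  exact intervalIntegral.integral_eq_sub_of_hasDerivAt (fun y _ => hF x y)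
    (Continuous.intervalIntegrable (by fun_prop) _ _)

end SquareIntegrals

lemma tendsto_setIntegral_square {F : ℝ × ℝ → ℝ} (hF : Integrable F) :
    Tendsto (fun L => ∫ p in square L, F p) atTop (𝓝 (∫ p, F p)) := by
  have hcover : AECover volume atTop square :=
    { measurableSet := measurableSet_square
      ae_eventually_mem := Eventually.of_forall fun p => by
        filter_upwards [eventually_ge_atTop |p.1|, eventually_ge_atTop |p.2|] with L h₁ h₂
        exact ⟨abs_le.mp h₁, abs_le.mp h₂⟩ }
  exact hcover.integral_tendsto_of_countably_generated hF

/-! ### Monotone rearrangement on the line -/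

section MonotoneRearrangement

variable {f g : ℝ → ℝ} {m : ℝ}

lemma hasDerivAt_primitive (hf : Continuous f) (a x : ℝ) :
    HasDerivAt (fun y => ∫ t in a..y, f t) (f x) x :=
  intervalIntegral.integral_hasDerivAt_right (hf.intervalIntegrable _ _)
    (hf.stronglyMeasurableAtFilter _ _) hf.continuousAt

lemma strictMono_primitive (hf : Continuous f) (hpos : ∀ x, 0 < f x) (a : ℝ) :
    StrictMono fun x => ∫ t in a..x, f t :=
  strictMono_of_deriv_pos fun x => by
    rw [(hasDerivAt_primitive hf a x).deriv]; exact hpos x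

lemma surjective_primitive (hf : Continuous f) (hm : 0 < m) (hfm : ∀ x, m ≤ f x) (a : ℝ) :
    Function.Surjective fun x => ∫ t in a..x, f t := by
  have hcont : Continuous fun x => ∫ t in a..x, f t :=
    continuous_iff_continuousAt.2 fun x => (hasDerivAt_primitive hf a x).continuousAt
  have hlower : Monotone fun x => (∫ t in a..x, f t) - m * x :=
    monotone_of_hasDerivAt_nonneg
      (fun x => (hasDerivAt_primitive hf a x).sub ((hasDerivAt_id x).const_mul m))
      fun x => by simpa using hfm x
  have hlin : ∀ c : ℝ, Tendsto (fun x => m * x + c) atTop atTop ∧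
      Tendsto (fun x => m * x + c) atBot atBot := fun c =>
    ⟨tendsto_atTop_add_const_right _ _ (tendsto_id.const_mul_atTop hm),
      tendsto_atBot_add_const_right _ _ (tendsto_id.const_mul_atBot hm)⟩
  refine hcont.surjective ?_ ?_
  · refine tendsto_atTop_mono' _ ?_ (hlin (-(m * a))).1
    filter_upwards [eventually_ge_atTop a] with x hx
    have := hlower hx
    simp only [intervalIntegral.integral_same] at this
    linarith
  · refine tendsto_atBot_mono' _ ?_ (hlin (-(m * a))).2
    filter_upwards [eventually_le_atBot a] with x hx
    have := hlower hx
    simp only [intervalIntegral.integral_same] at this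
    linarith

/-- The increasing bijection `x ↦ ∫ t in a..x, f t` of the line, for a density `f` that is bounded
below by a positive constant. -/
def primitiveIso (hf : Continuous f) (hm : 0 < m) (hfm : ∀ x, m ≤ f x) (a : ℝ) : ℝ ≃o ℝ :=
  (strictMono_primitive hf (fun x => hm.trans_le (hfm x)) a).orderIsoOfSurjective _
    (surjective_primitive hf hm hfm a)

lemma primitiveIso_apply (hf : Continuous f) (hm : 0 < m) (hfm : ∀ x, m ≤ f x) (a x : ℝ) :
    primitiveIso hf hm hfm a x = ∫ t in a..x, f t := rfl

lemma hasDerivAt_primitiveIso_symm_comp (hf : Continuous f) (hg : Continuous g) (hm : 0 < m)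
    (hgm : ∀ x, m ≤ g x) (a c x : ℝ) :
    HasDerivAt (fun x => (primitiveIso hg hm hgm c).symm (∫ t in a..x, f t))
      (f x / g ((primitiveIso hg hm hgm c).symm (∫ t in a..x, f t))) x := by
  set G := primitiveIso hg hm hgm c
  have hinv : HasDerivAt G.symm (g (G.symm (∫ t in a..x, f t)))⁻¹ (∫ t in a..x, f t) :=
    HasDerivAt.of_local_left_inverse G.symm.continuous.continuousAt
      (hasDerivAt_primitive hg c _) (hm.trans_le (hgm _)).ne'
      (Eventually.of_forall G.apply_symm_apply)
  rw [div_eq_inv_mul]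
  exact hinv.comp x (hasDerivAt_primitive hf a x)

end MonotoneRearrangement

lemma continuous_of_strictMono_apply_eq {X : Type*} [TopologicalSpace X] {G : X → ℝ → ℝ}
    {F T : X → ℝ} (hmono : ∀ x, StrictMono (G x)) (hG : ∀ c, Continuous fun x => G x c)
    (hF : Continuous F) (hT : ∀ x, G x (T x) = F x) : Continuous T := by
  refine OrderTopology.continuous_iff.2 fun c => ⟨?_, ?_⟩
  · convert isOpen_lt (hG c) hF using 1
    ext x
    simp only [mem_preimage, mem_Ioi, mem_ofPred_eq, ← hT x, (hmono x).lt_iff_lt]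
  · convert isOpen_lt hF (hG c) using 1
    ext x
    simp only [mem_preimage, mem_Iio, mem_ofPred_eq, ← hT x, (hmono x).lt_iff_lt]

lemma exists_continuous_transport {X : Type*} [TopologicalSpace X] {f g : X → ℝ → ℝ} {m : ℝ}
    (hf : Continuous (Function.uncurry f)) (hg : Continuous (Function.uncurry g)) (hm : 0 < m)
    (hgm : ∀ x t, m ≤ g x t) {a b c d : ℝ}
    (hmass : ∀ x, ∫ t in a..b, f x t = ∫ t in c..d, g x t) :
    ∃ T : X → ℝ → ℝ, Continuous (Function.uncurry T) ∧
      (∀ x t, HasDerivAt (T x) (f x t / g x (T x t)) t) ∧ (∀ x, T x a = c) ∧ ∀ x, T x b = d := by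
  have hfx : ∀ x, Continuous (f x) := fun x => hf.comp (by fun_prop : Continuous fun t => (x, t))
  have hgx : ∀ x, Continuous (g x) := fun x => hg.comp (by fun_prop : Continuous fun t => (x, t))
  let I : X → ℝ ≃o ℝ := fun x => primitiveIso (hgx x) hm (hgm x) c
  refine ⟨fun x t => (I x).symm (∫ s in a..t, f x s), ?_, fun x t => ?_, fun x => ?_, fun x => ?_⟩
  · refine continuous_of_strictMono_apply_eq (G := fun p : X × ℝ => I p.1)
      (fun p => (I p.1).strictMono) (fun s => ?_) ?_ fun p => (I p.1).apply_symm_apply _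
    · exact intervalIntegral.continuous_parametric_intervalIntegral_of_continuous
        (f := fun p : X × ℝ => g p.1) (by fun_prop) continuous_const
    · exact intervalIntegral.continuous_parametric_intervalIntegral_of_continuous
        (f := fun p : X × ℝ => f p.1) (by fun_prop) continuous_snd
  · exact hasDerivAt_primitiveIso_symm_comp (hfx x) (hgx x) hm (hgm x) a c t
  · exact (I x).symm_apply_eq.2 (by simp only [I, primitiveIso_apply,
      intervalIntegral.integral_same])
  · exact (I x).symm_apply_eq.2 (by rw [primitiveIso_apply, hmass])

/-! ### The Knothe map between two squares -/

/-- A triangular (Knothe) map `(x, y) ↦ (fst x, snd (x, y))` from the square `[-L, L]²` with density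
`f` onto the square `[-L', L']²` with density `g`; `fstDeriv` and `sndDeriv` are the diagonal
entries of its Jacobian matrix. -/
structure KnotheMap (f g : ℝ × ℝ → ℝ) (L L' : ℝ) where
  fst : ℝ → ℝ
  fstDeriv : ℝ → ℝ
  snd : ℝ × ℝ → ℝ
  sndDeriv : ℝ × ℝ → ℝ
  continuous_fstDeriv : Continuous fstDeriv
  continuous_snd : Continuous snd
  continuous_sndDeriv : Continuous sndDeriv
  hasDerivAt_fst : ∀ x, HasDerivAt fst (fstDeriv x) x
  hasDerivAt_snd : ∀ x y, HasDerivAt (fun t => snd (x, t)) (sndDeriv (x, y)) y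
  fstDeriv_pos : ∀ x, 0 < fstDeriv x
  sndDeriv_pos : ∀ p, 0 < sndDeriv p
  fst_left : fst (-L) = -L'
  fst_right : fst L = L'
  snd_bot : ∀ x, snd (x, -L) = -L'
  snd_top : ∀ x, snd (x, L) = L'
  jacobian : ∀ p ∈ square L, f p = g (fst p.1, snd p) * (fstDeriv p.1 * sndDeriv p)

section KnotheExistence

variable {f g : ℝ × ℝ → ℝ} {L L' m : ℝ}

lemma continuous_partialIntegral (hf : Continuous f) (a : ℝ) :
    Continuous fun p : ℝ × ℝ => ∫ t in a..p.2, f (p.1, t) :=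
  intervalIntegral.continuous_parametric_intervalIntegral_of_continuous (by fun_prop) (by fun_prop)

lemma const_le_marginal (hf : Continuous f) (hfm : ∀ p, m ≤ f p) (hL : 0 ≤ L) (x : ℝ) :
    (L - -L) * m ≤ ∫ t in -L..L, f (x, t) := by
  rw [← smul_eq_mul, ← intervalIntegral.integral_const]
  exact intervalIntegral.integral_mono_on (by linarith) (continuous_const.intervalIntegrable _ _)
    (Continuous.intervalIntegrable (by fun_prop) _ _) fun t _ => hfm (x, t)

lemma exists_transport_of_marginals (hf : Continuous f) (hg : Continuous g) (hm : 0 < m)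
    (hfm : ∀ p, m ≤ f p) (hgm : ∀ p, m ≤ g p) (hL : 0 < L) (hL' : 0 < L')
    (hmass : ∫ p in square L, f p = ∫ p in square L', g p) :
    ∃ T P : ℝ → ℝ, Continuous P ∧ (∀ x, 0 < P x) ∧ (∀ x, HasDerivAt T (P x) x) ∧
      T (-L) = -L' ∧ T L = L' ∧
      ∀ x, ∫ t in -L..L, f (x, t) / P x = ∫ t in -L'..L', g (T x, t) := by
  set F : ℝ → ℝ := fun x => ∫ t in -L..L, f (x, t)
  set G : ℝ → ℝ := fun x => ∫ t in -L'..L', g (x, t)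
  have hFc : Continuous F := (continuous_partialIntegral hf (-L)).comp
    (by fun_prop : Continuous fun x : ℝ => (x, L))
  have hGc : Continuous G := (continuous_partialIntegral hg (-L')).comp
    (by fun_prop : Continuous fun x : ℝ => (x, L'))
  have hF₀ : ∀ x, 0 < F x := fun x =>
    (mul_pos (by linarith) hm).trans_le (const_le_marginal hf hfm hL.le x)
  have hGm : ∀ x, (L' - -L') * m ≤ G x := const_le_marginal hg hgm hL'.le
  have hm' : 0 < (L' - -L') * m := mul_pos (by linarith) hm
  have hG₀ : ∀ x, 0 < G x := fun x => hm'.trans_le (hGm x)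
  have hFG : ∫ t in -L..L, F t = ∫ t in -L'..L', G t := by
    rw [← setIntegral_square hf hL.le, hmass, setIntegral_square hg hL'.le]
  obtain ⟨T, -, hTd, hTneg, hTpos⟩ := exists_continuous_transport (X := Unit)
    (f := fun _ => F) (g := fun _ => G) (by fun_prop) (by fun_prop) hm' (fun _ => hGm)
    (fun _ => hFG)
  have hTc : Continuous (T ()) := continuous_iff_continuousAt.2 fun x => (hTd () x).continuousAt
  refine ⟨T (), fun x => F x / G (T () x), hFc.div (hGc.comp hTc) fun x => (hG₀ _).ne',
    fun x => div_pos (hF₀ x) (hG₀ _), hTd (), hTneg (), hTpos (), fun x => ?_⟩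
  rw [intervalIntegral.integral_div]
  exact div_div_cancel₀ (hF₀ x).ne'

lemma nonempty_knotheMap_of_le (hf : Continuous f) (hg : Continuous g) (hm : 0 < m)
    (hfm : ∀ p, m ≤ f p) (hgm : ∀ p, m ≤ g p) (hL : 0 < L) (hL' : 0 < L')
    (hmass : ∫ p in square L, f p = ∫ p in square L', g p) :
    Nonempty (KnotheMap f g L L') := by
  have hf₀ : ∀ p, 0 < f p := fun p => hm.trans_le (hfm p)
  have hg₀ : ∀ p, 0 < g p := fun p => hm.trans_le (hgm p)
  obtain ⟨T, P, hPc, hP₀, hTd, hTneg, hTpos, hfibre⟩ :=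
    exists_transport_of_marginals hf hg hm hfm hgm hL hL' hmass
  have hTc : Continuous T := continuous_iff_continuousAt.2 fun x => (hTd x).continuousAt
  have hfP : Continuous fun p : ℝ × ℝ => f p / P p.1 :=
    hf.div (hPc.comp continuous_fst) fun p => (hP₀ _).ne'
  obtain ⟨S, hSc, hSd, hSneg, hSpos⟩ := exists_continuous_transport
    (f := fun x t => f (x, t) / P x) (g := fun x t => g (T x, t)) hfP (by fun_prop) hm
    (fun x t => hgm (T x, t)) hfibre
  exact ⟨{
    fst := T, fstDeriv := P, snd := Function.uncurry S
    sndDeriv := fun p => f p / P p.1 / g (T p.1, Function.uncurry S p)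
    continuous_fstDeriv := hPc, continuous_snd := hSc
    continuous_sndDeriv := hfP.div (by fun_prop) fun p => (hg₀ _).ne'
    hasDerivAt_fst := hTd, hasDerivAt_snd := hSd, fstDeriv_pos := hP₀
    sndDeriv_pos := fun p => div_pos (div_pos (hf₀ p) (hP₀ _)) (hg₀ _)
    fst_left := hTneg, fst_right := hTpos, snd_bot := hSneg, snd_top := hSpos
    jacobian := fun p _ => by
      rw [mul_comm (P p.1), ← mul_assoc, mul_div_cancel₀ _ (hg₀ _).ne',
        div_mul_cancel₀ _ (hP₀ _).ne'] }⟩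

end KnotheExistence

namespace KnotheMap

variable {f g : ℝ × ℝ → ℝ} {L L' : ℝ} (T : KnotheMap f g L L')

/-- The underlying map of the plane. -/
def toFun (p : ℝ × ℝ) : ℝ × ℝ := (T.fst p.1, T.snd p)

lemma continuous_fst : Continuous T.fst :=
  continuous_iff_continuousAt.2 fun x => (T.hasDerivAt_fst x).continuousAt

lemma continuous_toFun : Continuous T.toFun :=
  (T.continuous_fst.comp _root_.continuous_fst).prodMk T.continuous_snd

lemma mapsTo_square : MapsTo T.toFun (square L) (square L') := by
  rintro ⟨x, y⟩ ⟨hx, hy⟩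
  have hfst : Monotone T.fst :=
    monotone_of_hasDerivAt_nonneg T.hasDerivAt_fst fun x => (T.fstDeriv_pos x).le
  have hsnd : Monotone fun t => T.snd (x, t) :=
    monotone_of_hasDerivAt_nonneg (T.hasDerivAt_snd x) fun y => (T.sndDeriv_pos (x, y)).le
  exact ⟨⟨T.fst_left.ge.trans (hfst hx.1), (hfst hx.2).trans T.fst_right.le⟩,
    ⟨(T.snd_bot x).ge.trans (hsnd hy.1), (hsnd hy.2).trans (T.snd_top x).le⟩⟩

lemma setIntegral_comp (hg : Continuous g) {H : ℝ × ℝ → ℝ} (hH : Continuous H)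
    (hL : 0 ≤ L) (hL' : 0 ≤ L') :
    ∫ p in square L, H (T.toFun p) * f p = ∫ q in square L', H q * g q := by
  have hHg : Continuous fun q => H q * g q := hH.mul hg
  have hfibre : ∀ x, ∫ y in -L..L, H (T.toFun (x, y)) * g (T.toFun (x, y)) * T.sndDeriv (x, y) =
      ∫ t in -L'..L', H (T.fst x, t) * g (T.fst x, t) := fun x => by
    have hsubst := intervalIntegral.integral_comp_mul_deriv (a := -L) (b := L)
      (g := fun t => H (T.fst x, t) * g (T.fst x, t)) (fun y _ => T.hasDerivAt_snd x y)
      (T.continuous_sndDeriv.comp (by fun_prop)).continuousOn (by fun_prop)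
    rwa [T.snd_bot, T.snd_top] at hsubst
  have := T.continuous_toFun
  have := T.continuous_fstDeriv
  have := T.continuous_sndDeriv
  calc ∫ p in square L, H (T.toFun p) * f p
    _ = ∫ p in square L, H (T.toFun p) * g (T.toFun p) * T.sndDeriv p * T.fstDeriv p.1 :=
      setIntegral_congr_fun (measurableSet_square L) fun p hp => by
        simp only [T.jacobian p hp, toFun]; ring
    _ = ∫ x in -L..L, ∫ y in -L..L,
          H (T.toFun (x, y)) * g (T.toFun (x, y)) * T.sndDeriv (x, y) * T.fstDeriv x :=
      setIntegral_square (by fun_prop) hL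
    _ = ∫ x in -L..L, (∫ t in -L'..L', H (T.fst x, t) * g (T.fst x, t)) * T.fstDeriv x := by
      simp only [intervalIntegral.integral_mul_const, hfibre]
    _ = ∫ s in -L'..L', ∫ t in -L'..L', H (s, t) * g (s, t) := by
      have hsubst := intervalIntegral.integral_comp_mul_deriv (a := -L) (b := L)
        (fun x _ => T.hasDerivAt_fst x) T.continuous_fstDeriv.continuousOn
        (intervalIntegral.continuous_parametric_intervalIntegral_of_continuous'
          (f := fun s t => H (s, t) * g (s, t)) (μ := volume) hHg (-L') L')
      rwa [T.fst_left, T.fst_right] at hsubst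
    _ = ∫ q in square L', H q * g q := (setIntegral_square hHg hL').symm

end KnotheMap

/-- The nearest-point projection of the plane onto `[-L, L]²`. -/
def squareClamp (L : ℝ) (p : ℝ × ℝ) : ℝ × ℝ :=
  (max (-L) (min L p.1), max (-L) (min L p.2))

lemma continuous_squareClamp (L : ℝ) : Continuous (squareClamp L) := by
  unfold squareClamp; fun_prop

lemma squareClamp_mem {L : ℝ} (hL : 0 ≤ L) (p : ℝ × ℝ) : squareClamp L p ∈ square L := by
  have hle : -L ≤ L := by linarith
  exact ⟨⟨le_max_left _ _, max_le hle (min_le_left _ _)⟩,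
    ⟨le_max_left _ _, max_le hle (min_le_left _ _)⟩⟩

lemma squareClamp_of_mem {L : ℝ} {p : ℝ × ℝ} (hp : p ∈ square L) : squareClamp L p = p := by
  obtain ⟨⟨h₁, h₂⟩, h₃, h₄⟩ := hp
  simp only [squareClamp, min_eq_right h₂, max_eq_right h₁, min_eq_right h₄, max_eq_right h₃]

lemma exists_pos_le_comp_squareClamp {f : ℝ × ℝ → ℝ} (hf : Continuous f) (hpos : ∀ p, 0 < f p)
    {L : ℝ} (hL : 0 ≤ L) : ∃ m, 0 < m ∧ ∀ p, m ≤ f (squareClamp L p) := by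
  obtain ⟨q, -, hq⟩ := (isCompact_square L).exists_isMinOn ⟨_, squareClamp_mem hL 0⟩ hf.continuousOn
  exact ⟨f q, hpos q, fun p => hq (squareClamp_mem hL p)⟩

lemma nonempty_knotheMap {f g : ℝ × ℝ → ℝ} {L L' : ℝ} (hf : Continuous f) (hg : Continuous g)
    (hf₀ : ∀ p, 0 < f p) (hg₀ : ∀ p, 0 < g p) (hL : 0 < L) (hL' : 0 < L')
    (hmass : ∫ p in square L, f p = ∫ p in square L', g p) : Nonempty (KnotheMap f g L L') := by
  obtain ⟨a, ha, hfa⟩ := exists_pos_le_comp_squareClamp hf hf₀ hL.le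
  obtain ⟨b, hb, hgb⟩ := exists_pos_le_comp_squareClamp hg hg₀ hL'.le
  have hclamp : ∀ (F : ℝ × ℝ → ℝ) (r : ℝ),
      ∫ p in square r, F (squareClamp r p) = ∫ p in square r, F p := fun F r =>
    setIntegral_congr_fun (measurableSet_square r) fun p hp => by
      simp only [squareClamp_of_mem hp]
  obtain ⟨T⟩ := nonempty_knotheMap_of_le (hf.comp (continuous_squareClamp L))
    (hg.comp (continuous_squareClamp L')) (lt_min ha hb)
    (fun p => (min_le_left a b).trans (hfa p)) (fun p => (min_le_right a b).trans (hgb p)) hL hL'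
    (by simpa only [Function.comp_apply, hclamp] using hmass)
  refine ⟨{ T with jacobian := fun p hp => ?_ }⟩
  have hjac := T.jacobian p hp
  have hTp : squareClamp L' (T.fst p.1, T.snd p) = _ := squareClamp_of_mem (T.mapsTo_square hp)
  simpa only [Function.comp_apply, squareClamp_of_mem hp, hTp] using hjac

/-! ### The transport inequality on squares -/

section TransportInequality

variable {k k₁ k₂ l : ℝ × ℝ → ℝ} {L L' Λ : ℝ}

namespace KnotheMap

variable (T : KnotheMap (fun p => k p ^ 2) (fun q => l q ^ 2) L L')

lemma two_mul_div_le_trace (hl₀ : ∀ p, 0 < l p) {p : ℝ × ℝ} (hp : p ∈ square L) :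
    2 * (k p / l (T.toFun p)) ≤ T.fstDeriv p.1 + T.sndDeriv p := by
  have hP := T.fstDeriv_pos p.1
  have hQ := T.sndDeriv_pos p
  have hjac : (k p / l (T.toFun p)) ^ 2 = T.fstDeriv p.1 * T.sndDeriv p := by
    rw [div_pow, T.jacobian p hp]
    exact mul_div_cancel_left₀ _ (pow_pos (hl₀ _) 2).ne'
  refine le_of_sq_le_sq ?_ (by positivity)
  nlinarith [sq_nonneg (T.fstDeriv p.1 - T.sndDeriv p)]

lemma two_mul_setIntegral_le_trace (hk : Continuous k) (hl : Continuous l) (hk₀ : ∀ p, 0 < k p)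
    (hl₀ : ∀ p, 0 < l p) (hL : 0 ≤ L) (hL' : 0 ≤ L') :
    2 * ∫ q in square L', l q ≤ ∫ p in square L, k p * (T.fstDeriv p.1 + T.sndDeriv p) := by
  have := T.continuous_fstDeriv
  have := T.continuous_sndDeriv
  have hlinv : Continuous fun q => (l q)⁻¹ := hl.inv₀ fun q => (hl₀ q).ne'
  have hlinvT : Continuous fun p => (l (T.toFun p))⁻¹ := hlinv.comp T.continuous_toFun
  calc 2 * ∫ q in square L', l q
    _ = 2 * ∫ q in square L', (l q)⁻¹ * l q ^ 2 := by
      congr 2 with q; rw [sq, inv_mul_cancel_left₀ (hl₀ q).ne']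
    _ = ∫ p in square L, 2 * ((l (T.toFun p))⁻¹ * k p ^ 2) := by
      rw [← T.setIntegral_comp (by fun_prop) hlinv hL hL', integral_const_mul]
    _ ≤ _ := by
      refine setIntegral_mono_on (integrableOn_square (by fun_prop) L)
        (integrableOn_square (by fun_prop) L) (measurableSet_square L) fun p hp => ?_
      calc 2 * ((l (T.toFun p))⁻¹ * k p ^ 2) = k p * (2 * (k p / l (T.toFun p))) := by ring
        _ ≤ _ := mul_le_mul_of_nonneg_left (T.two_mul_div_le_trace hl₀ hp) (hk₀ p).le

lemma setIntegral_mul_trace (hk : Continuous k)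
    (hk₁ : ∀ x y, HasDerivAt (fun t => k (t, y)) (k₁ (x, y)) x) (hk₁c : Continuous k₁)
    (hk₂ : ∀ x y, HasDerivAt (fun t => k (x, t)) (k₂ (x, y)) y) (hk₂c : Continuous k₂)
    (hL : 0 ≤ L) :
    ∫ p in square L, k p * (T.fstDeriv p.1 + T.sndDeriv p) =
      L' * squareBoundaryIntegral L k -
        ∫ p in square L, (k₁ p * T.fst p.1 + k₂ p * T.snd p) := by
  have := T.continuous_fst
  have := T.continuous_snd
  have := T.continuous_fstDeriv
  have := T.continuous_sndDeriv
  have hfst : ∫ p in square L, (k₁ p * T.fst p.1 + k p * T.fstDeriv p.1) =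
      ∫ y in -L..L, L' * (k (L, y) + k (-L, y)) := by
    rw [setIntegral_square_deriv_fst (F := fun p => k p * T.fst p.1)
      (fun x y => (hk₁ x y).mul (T.hasDerivAt_fst x)) (by fun_prop) hL]
    simp only [T.fst_left, T.fst_right]
    congr 1 with y; ring
  have hsnd : ∫ p in square L, (k₂ p * T.snd p + k p * T.sndDeriv p) =
      ∫ x in -L..L, L' * (k (x, L) + k (x, -L)) := by
    rw [setIntegral_square_deriv_snd (F := fun p => k p * T.snd p)
      (fun x y => (hk₂ x y).mul (T.hasDerivAt_snd x y)) (by fun_prop) hL]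
    simp only [T.snd_bot, T.snd_top]
    congr 1 with x; ring
  rw [squareBoundaryIntegral, intervalIntegral.integral_add
    (Continuous.intervalIntegrable (by fun_prop) _ _)
    (Continuous.intervalIntegrable (by fun_prop) _ _), mul_add,
    ← intervalIntegral.integral_const_mul, ← intervalIntegral.integral_const_mul, ← hfst, ← hsnd,
    ← integral_add (integrableOn_square (by fun_prop) L) (integrableOn_square (by fun_prop) L),
    ← integral_sub (integrableOn_square (by fun_prop) L) (integrableOn_square (by fun_prop) L)]
  congr 1 with p; ring

lemma neg_setIntegral_le (hk : Continuous k) (hl : Continuous l) (hk₀ : ∀ p, 0 < k p)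
    (hk₁c : Continuous k₁) (hk₂c : Continuous k₂) (hL : 0 ≤ L) (hL' : 0 ≤ L') (hΛ : 0 < Λ) :
    -∫ p in square L, (k₁ p * T.fst p.1 + k₂ p * T.snd p) ≤
      (Λ * (∫ p in square L, (k₁ p ^ 2 + k₂ p ^ 2) / k p ^ 2) +
        Λ⁻¹ * ∫ q in square L', (q.1 ^ 2 + q.2 ^ 2) * l q ^ 2) / 2 := by
  have := T.continuous_fst
  have := T.continuous_snd
  have hgrad : Continuous fun p => (k₁ p ^ 2 + k₂ p ^ 2) / k p ^ 2 :=
    Continuous.div (by fun_prop) (by fun_prop) fun p => (pow_pos (hk₀ p) 2).ne'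
  rw [← T.setIntegral_comp (H := fun q => q.1 ^ 2 + q.2 ^ 2) (by fun_prop) (by fun_prop) hL hL',
    ← integral_neg, ← integral_const_mul, ← integral_const_mul,
    ← integral_add (integrableOn_square (by fun_prop) L)
      (integrableOn_square (by unfold toFun; fun_prop) L), ← integral_div]
  refine setIntegral_mono_on (integrableOn_square (by fun_prop) L)
    (integrableOn_square (by unfold toFun; fun_prop) L) (measurableSet_square L) fun p _ => ?_
  have hyoung : ∀ a b : ℝ, -(a * b) ≤ (Λ * (a ^ 2 / k p ^ 2) + Λ⁻¹ * (b ^ 2 * k p ^ 2)) / 2 := by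
    intro a b
    have hk := (hk₀ p).ne'
    have hsq : 0 ≤ Λ⁻¹ * (Λ * (a / k p) + b * k p) ^ 2 := by positivity
    have hexpand : Λ⁻¹ * (Λ * (a / k p) + b * k p) ^ 2 =
        Λ * (a ^ 2 / k p ^ 2) + Λ⁻¹ * (b ^ 2 * k p ^ 2) + 2 * (a * b) := by
      field_simp
      ring
    linarith
  have h₁ := hyoung (k₁ p) (T.fst p.1)
  have h₂ := hyoung (k₂ p) (T.snd p)
  simp only [toFun, add_div, mul_add, add_mul] at *
  linarith

end KnotheMap

theorem two_mul_setIntegral_square_le (hk : Continuous k) (hl : Continuous l)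
    (hk₀ : ∀ p, 0 < k p) (hl₀ : ∀ p, 0 < l p)
    (hk₁ : ∀ x y, HasDerivAt (fun t => k (t, y)) (k₁ (x, y)) x) (hk₁c : Continuous k₁)
    (hk₂ : ∀ x y, HasDerivAt (fun t => k (x, t)) (k₂ (x, y)) y) (hk₂c : Continuous k₂)
    (hL : 0 < L) (hL' : 0 < L') (hΛ : 0 < Λ)
    (hmass : ∫ p in square L, k p ^ 2 = ∫ q in square L', l q ^ 2) :
    2 * ∫ q in square L', l q ≤ L' * squareBoundaryIntegral L k +
      (Λ * (∫ p in square L, (k₁ p ^ 2 + k₂ p ^ 2) / k p ^ 2) +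
        Λ⁻¹ * ∫ q in square L', (q.1 ^ 2 + q.2 ^ 2) * l q ^ 2) / 2 := by
  obtain ⟨T⟩ := nonempty_knotheMap (hk.pow 2) (hl.pow 2) (fun p => pow_pos (hk₀ p) 2)
    (fun p => pow_pos (hl₀ p) 2) hL hL' hmass
  calc 2 * ∫ q in square L', l q
    _ ≤ ∫ p in square L, k p * (T.fstDeriv p.1 + T.sndDeriv p) :=
      T.two_mul_setIntegral_le_trace hk hl hk₀ hl₀ hL.le hL'.le
    _ = _ := T.setIntegral_mul_trace hk hk₁ hk₁c hk₂ hk₂c hL.le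
    _ ≤ _ := by
      rw [sub_eq_add_neg]
      exact add_le_add_right (T.neg_setIntegral_le hk hl hk₀ hk₁c hk₂c hL.le hL'.le hΛ) _

end TransportInequality

/-! ### Radial integrals in the plane -/

/-- The Euclidean plane. -/
abbrev E2 : Type := EuclideanSpace ℝ (Fin 2)

/-- The volume-preserving identification `(x, y) ↦ !₂[x, y]` of `ℝ × ℝ` with the Euclidean plane. -/
def planeEquiv : (ℝ × ℝ) ≃ᵐ E2 :=
  MeasurableEquiv.finTwoArrow.symm.trans (MeasurableEquiv.toLp 2 (Fin 2 → ℝ))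

lemma planeEquiv_apply (p : ℝ × ℝ) : planeEquiv p = !₂[p.1, p.2] := rfl

lemma measurePreserving_planeEquiv : MeasurePreserving planeEquiv volume volume :=
  (volume_preserving_finTwoArrow ℝ).symm.trans
    (EuclideanSpace.volume_preserving_symm_measurableEquiv_toLp (Fin 2)).symm

lemma norm_planeEquiv_sq (p : ℝ × ℝ) : ‖planeEquiv p‖ ^ 2 = p.1 ^ 2 + p.2 ^ 2 := by
  rw [planeEquiv_apply, EuclideanSpace.norm_sq_eq]; simp

lemma integral_comp_planeEquiv (F : E2 → ℝ) : ∫ p, F (planeEquiv p) = ∫ x, F x :=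
  measurePreserving_planeEquiv.integral_comp planeEquiv.measurableEmbedding F

lemma integrable_comp_planeEquiv {F : E2 → ℝ} :
    Integrable (fun p => F (planeEquiv p)) ↔ Integrable F :=
  measurePreserving_planeEquiv.integrable_comp_emb planeEquiv.measurableEmbedding

lemma integrable_norm_sq_iff {F : ℝ → ℝ} :
    Integrable (fun x : E2 => F (‖x‖ ^ 2)) ↔ IntegrableOn F (Ioi 0) := by
  rw [integrable_fun_norm_addHaar (volume : Measure E2) (f := fun r => F (r ^ 2)),
    ← integrableOn_Ioi_comp_rpow_iff F two_ne_zero]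
  simp only [finrank_euclideanSpace_fin, Nat.reduceSub, pow_one, smul_eq_mul, abs_two, mul_assoc,
    rpow_two, show (2 : ℝ) - 1 = 1 by norm_num, rpow_one]
  exact (integrable_const_mul_iff (isUnit_iff_ne_zero.2 two_ne_zero) _).symm

lemma integral_norm_sq (F : ℝ → ℝ) : ∫ x : E2, F (‖x‖ ^ 2) = π * ∫ s in Ioi 0, F s := by
  rw [integral_fun_norm_addHaar (volume : Measure E2) (f := fun r => F (r ^ 2)),
    ← integral_comp_rpow_Ioi_of_pos (g := F) two_pos]
  simp only [finrank_euclideanSpace_fin, Measure.real, EuclideanSpace.volume_ball_fin_two,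
    ENNReal.ofReal_one, one_pow, one_mul, ENNReal.toReal_ofReal pi_pos.le, Nat.reduceSub, pow_one,
    smul_eq_mul, mul_assoc, rpow_two, show (2 : ℝ) - 1 = 1 by norm_num, rpow_one,
    integral_const_mul, nsmul_eq_mul]
  push_cast
  ring

lemma integrable_sq_add_sq_iff {F : ℝ → ℝ} :
    Integrable (fun p : ℝ × ℝ => F (p.1 ^ 2 + p.2 ^ 2)) ↔ IntegrableOn F (Ioi 0) := by
  rw [← integrable_norm_sq_iff, ← integrable_comp_planeEquiv]
  simp only [norm_planeEquiv_sq]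

lemma integral_sq_add_sq (F : ℝ → ℝ) :
    ∫ p : ℝ × ℝ, F (p.1 ^ 2 + p.2 ^ 2) = π * ∫ s in Ioi 0, F s := by
  rw [← integral_norm_sq, ← integral_comp_planeEquiv]
  simp only [norm_planeEquiv_sq]

lemma hasDerivAt_neg_inv_one_add {s : ℝ} (hs : 0 ≤ s) :
    HasDerivAt (fun s : ℝ => -(1 + s)⁻¹) ((1 + s) ^ 2)⁻¹ s := by
  have hs' : 1 + s ≠ 0 := by positivity
  exact (((hasDerivAt_id s).const_add 1).inv hs').neg.congr_deriv (by simp [neg_div])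

lemma tendsto_neg_inv_one_add : Tendsto (fun s : ℝ => -(1 + s)⁻¹) atTop (𝓝 0) := by
  simpa using (tendsto_inv_atTop_zero.comp (tendsto_atTop_add_const_left _ (1 : ℝ) tendsto_id)).neg

lemma integrableOn_Ioi_inv_sq_one_add : IntegrableOn (fun s : ℝ => ((1 + s) ^ 2)⁻¹) (Ioi 0) :=
  integrableOn_Ioi_deriv_of_nonneg' (fun _ hs => hasDerivAt_neg_inv_one_add hs)
    (fun s _ => by positivity) tendsto_neg_inv_one_add

lemma integral_Ioi_inv_sq_one_add : ∫ s in Ioi (0 : ℝ), ((1 + s) ^ 2)⁻¹ = 1 := by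
  rw [integral_Ioi_of_hasDerivAt_of_nonneg' (fun _ hs => hasDerivAt_neg_inv_one_add hs)
    (fun s _ => by positivity) tendsto_neg_inv_one_add]
  norm_num

section LogQuotient

variable {a : ℝ}

lemma hasDerivAt_log_sub_log (ha : 0 < a) {s : ℝ} (hs : 0 ≤ s) :
    HasDerivAt (fun s => log (1 + a * s) - log (1 + s)) ((a - 1) / ((1 + a * s) * (1 + s))) s := by
  have h₁ := (((hasDerivAt_id s).const_mul a).const_add 1).log (by simp only [id]; positivity)
  have h₂ := ((hasDerivAt_id s).const_add 1).log (by simp only [id]; positivity)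
  refine (h₁.sub h₂).congr_deriv ?_
  have : 1 + a * s ≠ 0 := by positivity
  have : 1 + s ≠ 0 := by positivity
  simp only [id]
  field_simp
  ring

lemma tendsto_log_sub_log (ha : 0 < a) :
    Tendsto (fun s => log (1 + a * s) - log (1 + s)) atTop (𝓝 (log a)) := by
  have hinv : Tendsto (fun s : ℝ => s⁻¹) atTop (𝓝 0) := tendsto_inv_atTop_zero
  have hquot : Tendsto (fun s : ℝ => (s⁻¹ + a) / (s⁻¹ + 1)) atTop (𝓝 ((0 + a) / (0 + 1))) :=
    (hinv.add_const a).div (hinv.add_const 1) (by norm_num)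
  simp only [zero_add, div_one] at hquot
  refine (hquot.log ha.ne').congr' ?_
  filter_upwards [eventually_gt_atTop 0] with s hs
  rw [← log_div (by positivity) (by positivity)]
  congr 1
  field_simp

lemma integrableOn_sub_one_div_mul (ha : 0 < a) :
    IntegrableOn (fun s => (a - 1) / ((1 + a * s) * (1 + s))) (Ioi 0) := by
  have hden : ∀ s ∈ Ioi (0 : ℝ), 0 ≤ (1 + a * s) * (1 + s) := fun s hs => by
    have : 0 < s := hs
    positivity
  rcases le_total 1 a with h | h
  · exact integrableOn_Ioi_deriv_of_nonneg' (fun _ hs => hasDerivAt_log_sub_log ha hs)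
      (fun s hs => div_nonneg (by linarith) (hden s hs)) (tendsto_log_sub_log ha)
  · exact integrableOn_Ioi_deriv_of_nonpos' (fun _ hs => hasDerivAt_log_sub_log ha hs)
      (fun s hs => div_nonpos_of_nonpos_of_nonneg (by linarith) (hden s hs))
      (tendsto_log_sub_log ha)

lemma integral_sub_one_div_mul (ha : 0 < a) :
    ∫ s in Ioi 0, (a - 1) / ((1 + a * s) * (1 + s)) = log a := by
  rw [integral_Ioi_of_hasDerivAt_of_tendsto' (fun _ hs => hasDerivAt_log_sub_log ha hs)
    (integrableOn_sub_one_div_mul ha) (tendsto_log_sub_log ha)]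
  simp

end LogQuotient

/-- The weight `1 + |p|²`; `(π * planeWeight ^ 2)⁻¹` is the density `μ₀` in product coordinates. -/
def planeWeight (p : ℝ × ℝ) : ℝ := 1 + (p.1 ^ 2 + p.2 ^ 2)

lemma planeWeight_pos (p : ℝ × ℝ) : 0 < planeWeight p := by unfold planeWeight; positivity

lemma continuous_planeWeight : Continuous planeWeight := by unfold planeWeight; fun_prop

lemma continuous_inv_planeWeight : Continuous fun p => (planeWeight p)⁻¹ :=
  continuous_planeWeight.inv₀ fun p => (planeWeight_pos p).ne'

lemma integrable_inv_planeWeight_sq : Integrable fun p => (planeWeight p ^ 2)⁻¹ :=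
  integrable_sq_add_sq_iff.2 integrableOn_Ioi_inv_sq_one_add

lemma integral_inv_planeWeight_sq : ∫ p, (planeWeight p ^ 2)⁻¹ = π := by
  simp only [planeWeight]
  rw [integral_sq_add_sq (fun s => ((1 + s) ^ 2)⁻¹), integral_Ioi_inv_sq_one_add, mul_one]

lemma setIntegral_square_mul {F : ℝ × ℝ → ℝ} (hF : Continuous F) {ρ L : ℝ} (hρ : 0 ≤ ρ)
    (hL : 0 ≤ L) :
    ∫ p in square (ρ * L), F p = ρ ^ 2 * ∫ p in square L, F (ρ * p.1, ρ * p.2) := by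
  rw [setIntegral_square hF (mul_nonneg hρ hL), setIntegral_square (by fun_prop) hL, ← mul_neg,
    ← intervalIntegral.smul_integral_comp_mul_left]
  simp only [← intervalIntegral.smul_integral_comp_mul_left (fun y => F (_, y)) ρ, smul_eq_mul,
    intervalIntegral.integral_const_mul]
  ring

lemma tendsto_setIntegral_square_mul_sub {ρ : ℝ} (hρ : 0 < ρ) :
    Tendsto (fun L => (∫ p in square (ρ * L), (planeWeight p)⁻¹) -
      ∫ p in square L, (planeWeight p)⁻¹) atTop (𝓝 (2 * π * log ρ)) := by
  have hρ2 : 0 < ρ ^ 2 := by positivity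
  have hlim := tendsto_setIntegral_square
    (integrable_sq_add_sq_iff.2 (integrableOn_sub_one_div_mul hρ2))
  rw [integral_sq_add_sq (fun s => (ρ ^ 2 - 1) / ((1 + ρ ^ 2 * s) * (1 + s))),
    integral_sub_one_div_mul hρ2, log_pow, Nat.cast_two, mul_left_comm, ← mul_assoc] at hlim
  have hcont := continuous_inv_planeWeight
  have hcontρ : Continuous fun p : ℝ × ℝ => (planeWeight (ρ * p.1, ρ * p.2))⁻¹ :=
    hcont.comp (by fun_prop)
  refine hlim.congr' ?_
  filter_upwards [eventually_ge_atTop 0] with L hL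
  rw [setIntegral_square_mul hcont hρ.le hL, ← integral_const_mul,
    ← integral_sub (integrableOn_square (by fun_prop) L) (integrableOn_square hcont L)]
  congr 1 with p
  simp only [planeWeight, mul_pow]
  have : 1 + ρ ^ 2 * (p.1 ^ 2 + p.2 ^ 2) ≠ 0 := by positivity
  have : 1 + (ρ ^ 2 * p.1 ^ 2 + ρ ^ 2 * p.2 ^ 2) ≠ 0 := by positivity
  have : 1 + (p.1 ^ 2 + p.2 ^ 2) ≠ 0 := by positivity
  field_simp
  ring

/-! ### The Onofri inequality in the plane -/

section Boundary

variable {F G : ℝ × ℝ → ℝ} {L : ℝ}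

lemma squareBoundaryIntegral_const_mul (c : ℝ) :
    squareBoundaryIntegral L (fun p => c * F p) = c * squareBoundaryIntegral L F := by
  simp only [squareBoundaryIntegral, ← intervalIntegral.integral_const_mul]
  congr 1 with t; ring

lemma squareBoundaryIntegral_add (hF : Continuous F) (hG : Continuous G) :
    squareBoundaryIntegral L (fun p => F p + G p) =
      squareBoundaryIntegral L F + squareBoundaryIntegral L G := by
  simp only [squareBoundaryIntegral]
  rw [← intervalIntegral.integral_add (Continuous.intervalIntegrable (by fun_prop) _ _)
    (Continuous.intervalIntegrable (by fun_prop) _ _)]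
  congr 1 with t; ring

lemma abs_squareBoundaryIntegral_le (hG : Continuous G) (hL : 0 ≤ L)
    (hFG : ∀ p, L ≤ ‖p‖ → |F p| ≤ G p) :
    |squareBoundaryIntegral L F| ≤ squareBoundaryIntegral L G := by
  rw [← Real.norm_eq_abs, squareBoundaryIntegral, squareBoundaryIntegral]
  refine intervalIntegral.norm_integral_le_of_norm_le (by linarith)
    (Eventually.of_forall fun t _ => ?_) (Continuous.intervalIntegrable (by fun_prop) _ _)
  have hfst : ∀ s t : ℝ, |s| = L → L ≤ ‖(s, t)‖ := fun s t hs => hs ▸ norm_fst_le (s, t)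
  have hsnd : ∀ s t : ℝ, |t| = L → L ≤ ‖(s, t)‖ := fun s t ht => ht ▸ norm_snd_le (s, t)
  have hpos : |L| = L := abs_of_nonneg hL
  have hneg : |-L| = L := by rw [abs_neg, hpos]
  exact (norm_add_le _ _).trans (add_le_add
    ((norm_add_le _ _).trans (add_le_add (hFG _ (hfst _ _ hpos)) (hFG _ (hfst _ _ hneg))))
    ((norm_add_le _ _).trans (add_le_add (hFG _ (hsnd _ _ hpos)) (hFG _ (hsnd _ _ hneg)))))

end Boundary

section GreenIdentity

variable {Ψ Ψ₁ Ψ₂ : ℝ × ℝ → ℝ} {L : ℝ}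

lemma hasDerivAt_planeWeight_fst (x y : ℝ) :
    HasDerivAt (fun t => planeWeight (t, y)) (2 * x) x := by
  simpa [planeWeight] using (((hasDerivAt_pow 2 x).add_const (y ^ 2)).const_add 1)

lemma hasDerivAt_planeWeight_snd (x y : ℝ) :
    HasDerivAt (fun t => planeWeight (x, t)) (2 * y) y := by
  simpa [planeWeight] using (((hasDerivAt_pow 2 y).const_add (x ^ 2)).const_add 1)

-- The divergence of `Ψ(p) p / planeWeight p` is `∇Ψ · p / planeWeight + 2 Ψ / planeWeight ^ 2`.
lemma mul_squareBoundaryIntegral_div_planeWeight (hΨ : Continuous Ψ)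
    (hΨ₁ : ∀ x y, HasDerivAt (fun t => Ψ (t, y)) (Ψ₁ (x, y)) x) (hΨ₁c : Continuous Ψ₁)
    (hΨ₂ : ∀ x y, HasDerivAt (fun t => Ψ (x, t)) (Ψ₂ (x, y)) y) (hΨ₂c : Continuous Ψ₂)
    (hL : 0 ≤ L) :
    L * squareBoundaryIntegral L (fun p => Ψ p / planeWeight p) =
      (∫ p in square L, (Ψ₁ p * p.1 + Ψ₂ p * p.2) / planeWeight p) +
        2 * ∫ p in square L, Ψ p / planeWeight p ^ 2 := by
  have hR := continuous_planeWeight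
  have hR₀ := fun p => (planeWeight_pos p).ne'
  have hR₀2 := fun p => pow_ne_zero 2 (hR₀ p)
  have hfst : ∫ p in square L, ((Ψ₁ p * p.1 + Ψ p) * planeWeight p - Ψ p * p.1 * (2 * p.1)) /
      planeWeight p ^ 2 =
      ∫ t in -L..L, L * (Ψ (L, t) / planeWeight (L, t) + Ψ (-L, t) / planeWeight (-L, t)) := by
    rw [setIntegral_square_deriv_fst (F := fun p => Ψ p * p.1 / planeWeight p)
      (fun x y => (((hΨ₁ x y).mul (hasDerivAt_id x)).div (hasDerivAt_planeWeight_fst x y)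
        (hR₀ _)).congr_deriv (by simp))
      (by fun_prop (disch := assumption)) hL]
    congr 1 with t; ring
  have hsnd : ∫ p in square L, ((Ψ₂ p * p.2 + Ψ p) * planeWeight p - Ψ p * p.2 * (2 * p.2)) /
      planeWeight p ^ 2 =
      ∫ t in -L..L, L * (Ψ (t, L) / planeWeight (t, L) + Ψ (t, -L) / planeWeight (t, -L)) := by
    rw [setIntegral_square_deriv_snd (F := fun p => Ψ p * p.2 / planeWeight p)
      (fun x y => (((hΨ₂ x y).mul (hasDerivAt_id y)).div (hasDerivAt_planeWeight_snd x y)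
        (hR₀ _)).congr_deriv (by simp))
      (by fun_prop (disch := assumption)) hL]
    congr 1 with t; ring
  rw [squareBoundaryIntegral, intervalIntegral.integral_add
    (Continuous.intervalIntegrable (by fun_prop (disch := simp [hR₀])) _ _)
    (Continuous.intervalIntegrable (by fun_prop (disch := simp [hR₀])) _ _), mul_add,
    ← intervalIntegral.integral_const_mul, ← intervalIntegral.integral_const_mul, ← hfst, ← hsnd,
    ← integral_const_mul,
    ← integral_add (integrableOn_square (by fun_prop (disch := assumption)) L)
      (integrableOn_square (by fun_prop (disch := assumption)) L),
    ← integral_add (integrableOn_square (by fun_prop (disch := assumption)) L)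
      (integrableOn_square (by fun_prop (disch := assumption)) L)]
  congr 1 with p
  have := hR₀ p
  field_simp
  simp only [planeWeight]
  ring

lemma mul_squareBoundaryIntegral_inv_planeWeight (hL : 0 ≤ L) :
    L * squareBoundaryIntegral L (fun p => (planeWeight p)⁻¹) =
      2 * ∫ p in square L, (planeWeight p ^ 2)⁻¹ := by
  simpa using mul_squareBoundaryIntegral_div_planeWeight (Ψ := fun _ => 1) (Ψ₁ := 0) (Ψ₂ := 0)
    continuous_const (fun _ _ => hasDerivAt_const _ _) continuous_const
    (fun _ _ => hasDerivAt_const _ _) continuous_const hL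

end GreenIdentity

section BoundaryLimits

variable {Φ : ℝ × ℝ → ℝ} {c : ℝ}

lemma tendsto_mul_squareBoundaryIntegral_inv_planeWeight :
    Tendsto (fun L => L * squareBoundaryIntegral L fun p => (planeWeight p)⁻¹) atTop
      (𝓝 (2 * π)) := by
  have hlim := (tendsto_setIntegral_square integrable_inv_planeWeight_sq).const_mul 2
  rw [integral_inv_planeWeight_sq] at hlim
  refine hlim.congr' ?_
  filter_upwards [eventually_ge_atTop 0] with L hL
  exact (mul_squareBoundaryIntegral_inv_planeWeight hL).symm

lemma tendsto_mul_squareBoundaryIntegral_of_tendsto_zero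
    (hlim : Tendsto Φ (cocompact (ℝ × ℝ)) (𝓝 0)) :
    Tendsto (fun L => L * squareBoundaryIntegral L fun p => Φ p * (planeWeight p)⁻¹) atTop
      (𝓝 0) := by
  rw [Metric.tendsto_nhds]
  intro ε hε
  obtain ⟨r, hr⟩ := Metric.closedBall_compl_subset_of_mem_cocompact
    (hlim (Metric.ball_mem_nhds 0 (show 0 < ε / (2 * π + 1) by positivity))) 0
  have hbound := tendsto_mul_squareBoundaryIntegral_inv_planeWeight.eventually
    (gt_mem_nhds (show 2 * π < 2 * π + 1 by linarith))
  filter_upwards [eventually_gt_atTop r, eventually_gt_atTop 0, hbound] with L hrL hL hb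
  have hsmall : |squareBoundaryIntegral L fun p => Φ p * (planeWeight p)⁻¹| ≤
      squareBoundaryIntegral L fun p => ε / (2 * π + 1) * (planeWeight p)⁻¹ := by
    refine abs_squareBoundaryIntegral_le (continuous_inv_planeWeight.const_mul _) hL.le
      fun p hp => ?_
    have hp' : p ∈ (Metric.closedBall (0 : ℝ × ℝ) r)ᶜ := by
      simpa using hrL.trans_le hp
    have hΦp : |Φ p| < ε / (2 * π + 1) := by simpa using hr hp'
    have hinv : 0 < (planeWeight p)⁻¹ := inv_pos.2 (planeWeight_pos p)
    rw [abs_mul, abs_of_pos hinv]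
    exact mul_le_mul_of_nonneg_right hΦp.le hinv.le
  rw [squareBoundaryIntegral_const_mul] at hsmall
  rw [dist_zero_right, Real.norm_eq_abs, abs_mul, abs_of_pos hL]
  calc L * |squareBoundaryIntegral L fun p => Φ p * (planeWeight p)⁻¹|
    _ ≤ ε / (2 * π + 1) * (L * squareBoundaryIntegral L fun p => (planeWeight p)⁻¹) := by
      rw [mul_left_comm]; exact mul_le_mul_of_nonneg_left hsmall hL.le
    _ < ε / (2 * π + 1) * (2 * π + 1) := mul_lt_mul_of_pos_left hb (by positivity)
    _ = ε := div_mul_cancel₀ _ (by positivity)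

lemma tendsto_mul_squareBoundaryIntegral (hΦ : Continuous Φ)
    (hlim : Tendsto Φ (cocompact (ℝ × ℝ)) (𝓝 c)) :
    Tendsto (fun L => L * squareBoundaryIntegral L fun p => Φ p * (planeWeight p)⁻¹) atTop
      (𝓝 (2 * π * c)) := by
  have hcont := continuous_inv_planeWeight
  have hzero := tendsto_mul_squareBoundaryIntegral_of_tendsto_zero
    (Φ := fun p => Φ p - c) (by simpa using hlim.sub_const c)
  have hsum := hzero.add (tendsto_mul_squareBoundaryIntegral_inv_planeWeight.const_mul c)
  rw [zero_add, mul_comm c] at hsum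
  refine hsum.congr fun L => ?_
  rw [mul_left_comm c, ← mul_add, ← squareBoundaryIntegral_const_mul c,
    ← squareBoundaryIntegral_add (by fun_prop) (by fun_prop)]
  congr 2 with p
  ring

end BoundaryLimits

section ExpWeight

variable {X : Type*} [MeasurableSpace X] {ν : Measure X} {w ψ : X → ℝ} {M : ℝ}

lemma integrable_mul_of_abs_le (hw : Integrable w ν) (hψ : AEStronglyMeasurable ψ ν)
    (hM : ∀ x, |ψ x| ≤ M) : Integrable (fun x => ψ x * w x) ν :=
  hw.bdd_mul hψ (Eventually.of_forall hM)

lemma integrable_exp_mul (hw : Integrable w ν) (hψ : AEStronglyMeasurable ψ ν)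
    (hM : ∀ x, |ψ x| ≤ M) : Integrable (fun x => exp (ψ x) * w x) ν :=
  integrable_mul_of_abs_le hw (continuous_exp.comp_aestronglyMeasurable hψ) (M := exp M)
    fun x => by simpa using (le_abs_self _).trans (hM x)

lemma integral_exp_mul_pos (hw : Integrable w ν) (hw₀ : ∀ x, 0 ≤ w x) (hpos : 0 < ∫ x, w x ∂ν)
    (hψ : AEStronglyMeasurable ψ ν) (hM : ∀ x, |ψ x| ≤ M) :
    0 < ∫ x, exp (ψ x) * w x ∂ν :=
  calc 0
    _ < exp (-M) * ∫ x, w x ∂ν := mul_pos (exp_pos _) hpos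
    _ = ∫ x, exp (-M) * w x ∂ν := (integral_const_mul _ _).symm
    _ ≤ ∫ x, exp (ψ x) * w x ∂ν :=
      integral_mono (hw.const_mul _) (integrable_exp_mul hw hψ hM) fun x =>
        mul_le_mul_of_nonneg_right (exp_le_exp.2 (neg_le_of_abs_le (hM x))) (hw₀ x)

end ExpWeight

section PlanarOnofri

variable {Ψ Ψ₁ Ψ₂ : ℝ × ℝ → ℝ}

lemma hasDerivAt_exp_half_mul_inv {f w : ℝ → ℝ} {f' w' x : ℝ} (hf : HasDerivAt f f' x)
    (hw : HasDerivAt w w' x) (hx : w x ≠ 0) :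
    HasDerivAt (fun t => exp (f t / 2) * (w t)⁻¹)
      (exp (f x / 2) * (w x)⁻¹ * (f' / 2 - w' / w x)) x :=
  ((hf.div_const 2).exp.mul (hw.inv hx)).congr_deriv
    (by simp only [Pi.inv_apply]; field_simp; ring)

lemma setIntegral_square_sq_mul_inv_planeWeight_sq (L : ℝ) :
    ∫ q in square L, (q.1 ^ 2 + q.2 ^ 2) * ((planeWeight q)⁻¹) ^ 2 =
      (∫ q in square L, (planeWeight q)⁻¹) - ∫ q in square L, (planeWeight q ^ 2)⁻¹ := by
  have hR := continuous_inv_planeWeight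
  simp only [← inv_pow]
  rw [← integral_sub (integrableOn_square hR L) (integrableOn_square (by fun_prop) L)]
  congr 1 with q
  have := (planeWeight_pos q).ne'
  field_simp
  simp only [planeWeight]
  ring

lemma setIntegral_square_grad_log_sq (hΨ₁c : Continuous Ψ₁) (hΨ₂c : Continuous Ψ₂) (L : ℝ) :
    ∫ p in square L, ((Ψ₁ p / 2 - 2 * p.1 / planeWeight p) ^ 2 +
        (Ψ₂ p / 2 - 2 * p.2 / planeWeight p) ^ 2) =
      (∫ p in square L, (Ψ₁ p ^ 2 + Ψ₂ p ^ 2)) / 4 -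
        2 * (∫ p in square L, (Ψ₁ p * p.1 + Ψ₂ p * p.2) / planeWeight p) +
        4 * ((∫ p in square L, (planeWeight p)⁻¹) - ∫ p in square L, (planeWeight p ^ 2)⁻¹) := by
  have hR := continuous_planeWeight
  have := continuous_inv_planeWeight
  have hR₀ := fun p => (planeWeight_pos p).ne'
  rw [← setIntegral_square_sq_mul_inv_planeWeight_sq, ← integral_div, ← integral_const_mul,
    ← integral_sub (integrableOn_square (by fun_prop) L)
      (integrableOn_square (by fun_prop (disch := assumption)) L),
    ← integral_const_mul, ← integral_add
      (integrableOn_square (by fun_prop (disch := assumption)) L)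
      (integrableOn_square (by fun_prop) L)]
  congr 1 with p
  have := hR₀ p
  field_simp
  ring

lemma setIntegral_square_inv_planeWeight_sub_le (hΨ : Continuous Ψ)
    (hΨ₁ : ∀ x y, HasDerivAt (fun t => Ψ (t, y)) (Ψ₁ (x, y)) x) (hΨ₁c : Continuous Ψ₁)
    (hΨ₂ : ∀ x y, HasDerivAt (fun t => Ψ (x, t)) (Ψ₂ (x, y)) y) (hΨ₂c : Continuous Ψ₂)
    {L L' : ℝ} (hL : 0 < L) (hL' : 0 < L') {s : ℝ} (hs : 0 < s)
    (hmass : ∫ p in square L, exp (Ψ p) * (planeWeight p ^ 2)⁻¹ =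
      s ^ 2 * ∫ q in square L', (planeWeight q ^ 2)⁻¹) :
    (∫ q in square L', (planeWeight q)⁻¹) - ∫ p in square L, (planeWeight p)⁻¹ ≤
      L' * squareBoundaryIntegral L (fun p => exp (Ψ p / 2) * (planeWeight p)⁻¹) / s +
        (∫ p in square L, (Ψ₁ p ^ 2 + Ψ₂ p ^ 2)) / 16 -
        (∫ p in square L, (Ψ₁ p * p.1 + Ψ₂ p * p.2) / planeWeight p) / 2 -
        (∫ p in square L, (planeWeight p ^ 2)⁻¹) - ∫ q in square L', (planeWeight q ^ 2)⁻¹ := by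
  have hR := continuous_planeWeight
  have := continuous_inv_planeWeight
  have hRpos := fun p => inv_pos.2 (planeWeight_pos p)
  have hR₀ := fun p => (planeWeight_pos p).ne'
  let k : ℝ × ℝ → ℝ := fun p => exp (Ψ p / 2) * (planeWeight p)⁻¹
  have hk₀ : ∀ p, 0 < k p := fun p => mul_pos (exp_pos _) (hRpos p)
  have hmass' : ∫ p in square L, k p ^ 2 = ∫ q in square L', (s * (planeWeight q)⁻¹) ^ 2 := by
    simp only [k, mul_pow, inv_pow, integral_const_mul, ← hmass, ← exp_nat_mul, Nat.cast_ofNat,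
      mul_div_cancel₀ _ (two_ne_zero (α := ℝ))]
  have key := two_mul_setIntegral_square_le (Λ := s / 2) (k := k)
    (k₁ := fun p => k p * (Ψ₁ p / 2 - 2 * p.1 / planeWeight p))
    (k₂ := fun p => k p * (Ψ₂ p / 2 - 2 * p.2 / planeWeight p))
    (by fun_prop) (by fun_prop) hk₀ (fun p => mul_pos hs (hRpos p))
    (fun x y => hasDerivAt_exp_half_mul_inv (hΨ₁ x y) (hasDerivAt_planeWeight_fst x y) (hR₀ _))
    (by fun_prop (disch := assumption))
    (fun x y => hasDerivAt_exp_half_mul_inv (hΨ₂ x y) (hasDerivAt_planeWeight_snd x y) (hR₀ _))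
    (by fun_prop (disch := assumption)) hL hL' (half_pos hs) hmass'
  simp only [mul_pow, ← mul_add, mul_div_cancel_left₀ _ (pow_ne_zero 2 (hk₀ _).ne'),
    setIntegral_square_grad_log_sq hΨ₁c hΨ₂c, mul_left_comm _ (s ^ 2), integral_const_mul,
    setIntegral_square_sq_mul_inv_planeWeight_sq] at key
  rw [show ∀ C, s ^ 2 * ((s / 2)⁻¹ * C) = 2 * s * C from fun C => by field_simp] at key
  have hcancel := mul_div_cancel₀ (L' * squareBoundaryIntegral L k) hs.ne'
  refine le_of_mul_le_mul_left ?_ hs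
  linarith

lemma exists_abs_le_of_tendsto_cocompact {X : Type*} [TopologicalSpace X] {ψ : X → ℝ}
    (hψ : Continuous ψ) (hlim : Tendsto ψ (cocompact X) (𝓝 0)) : ∃ M, ∀ x, |ψ x| ≤ M :=
  ⟨_, (⟨⟨ψ, hψ⟩, hlim⟩ : ZeroAtInftyContinuousMap X ℝ).toBCF.norm_coe_le_norm⟩

lemma tendsto_mul_squareBoundaryIntegral_exp_half (hΨ : Continuous Ψ)
    (hlim : Tendsto Ψ (cocompact (ℝ × ℝ)) (𝓝 0)) :
    Tendsto (fun L => L * squareBoundaryIntegral L fun p => exp (Ψ p / 2) * (planeWeight p)⁻¹)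
      atTop (𝓝 (2 * π)) := by
  have hcont : Continuous fun p => exp (Ψ p / 2) := by fun_prop
  have hone : Tendsto (fun p => exp (Ψ p / 2)) (cocompact (ℝ × ℝ)) (𝓝 1) := by
    simpa using (hlim.div_const 2).rexp
  simpa using tendsto_mul_squareBoundaryIntegral hcont hone

lemma tendsto_setIntegral_square_radialDeriv_div_planeWeight (hΨ : Continuous Ψ)
    (hΨ₁ : ∀ x y, HasDerivAt (fun t => Ψ (t, y)) (Ψ₁ (x, y)) x) (hΨ₁c : Continuous Ψ₁)
    (hΨ₂ : ∀ x y, HasDerivAt (fun t => Ψ (x, t)) (Ψ₂ (x, y)) y) (hΨ₂c : Continuous Ψ₂)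
    (hlim : Tendsto Ψ (cocompact (ℝ × ℝ)) (𝓝 0)) :
    Tendsto (fun L => ∫ p in square L, (Ψ₁ p * p.1 + Ψ₂ p * p.2) / planeWeight p) atTop
      (𝓝 (-(2 * ∫ p, Ψ p * (planeWeight p ^ 2)⁻¹))) := by
  obtain ⟨M, hM⟩ := exists_abs_le_of_tendsto_cocompact hΨ hlim
  have hbulk := (tendsto_setIntegral_square (integrable_mul_of_abs_le
    integrable_inv_planeWeight_sq hΨ.aestronglyMeasurable hM)).const_mul 2
  have hboundary := tendsto_mul_squareBoundaryIntegral_of_tendsto_zero hlim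
  have hdiff := hboundary.sub hbulk
  rw [zero_sub] at hdiff
  refine hdiff.congr' ?_
  filter_upwards [eventually_ge_atTop 0] with L hL
  simp only [← div_eq_mul_inv]
  rw [mul_squareBoundaryIntegral_div_planeWeight hΨ hΨ₁ hΨ₁c hΨ₂ hΨ₂c hL, add_sub_cancel_right]

theorem log_integral_exp_planeWeight_le (hΨ : Continuous Ψ)
    (hΨ₁ : ∀ x y, HasDerivAt (fun t => Ψ (t, y)) (Ψ₁ (x, y)) x) (hΨ₁c : Continuous Ψ₁)
    (hΨ₂ : ∀ x y, HasDerivAt (fun t => Ψ (x, t)) (Ψ₂ (x, y)) y) (hΨ₂c : Continuous Ψ₂)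
    (hlim : Tendsto Ψ (cocompact (ℝ × ℝ)) (𝓝 0))
    (henergy : Integrable fun p => Ψ₁ p ^ 2 + Ψ₂ p ^ 2) :
    log ((∫ p, exp (Ψ p) * (planeWeight p ^ 2)⁻¹) / π) ≤
      (∫ p, (Ψ₁ p ^ 2 + Ψ₂ p ^ 2)) / (16 * π) + (∫ p, Ψ p * (planeWeight p ^ 2)⁻¹) / π := by
  have hw := integrable_inv_planeWeight_sq
  have hw₀ : ∀ p, 0 < (planeWeight p ^ 2)⁻¹ := fun p => inv_pos.2 (pow_pos (planeWeight_pos p) 2)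
  obtain ⟨M, hM⟩ := exists_abs_le_of_tendsto_cocompact hΨ hlim
  have hexp := integrable_exp_mul hw hΨ.aestronglyMeasurable hM
  have hZ := integral_exp_mul_pos hw (fun p => (hw₀ p).le) (integral_inv_planeWeight_sq ▸ pi_pos)
    hΨ.aestronglyMeasurable hM
  set Z := (∫ p, exp (Ψ p) * (planeWeight p ^ 2)⁻¹) / π
  have hZ₀ : 0 < Z := div_pos hZ pi_pos
  -- The difference of the integrals of `planeWeight⁻¹` over the squares of half-sides `ρ * L` and
  -- `L` converges to `2 * π * log ρ`, which for this dilation factor is `π * log Z`.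
  set ρ := √Z
  have hρ : 0 < ρ := sqrt_pos.2 hZ₀
  have hB := tendsto_setIntegral_square hw
  rw [integral_inv_planeWeight_sq] at hB
  have hBρ : Tendsto (fun L => ∫ q in square (ρ * L), (planeWeight q ^ 2)⁻¹) atTop (𝓝 π) :=
    hB.comp (tendsto_id.const_mul_atTop hρ)
  have hs : Tendsto (fun L => √((∫ p in square L, exp (Ψ p) * (planeWeight p ^ 2)⁻¹) /
      ∫ q in square (ρ * L), (planeWeight q ^ 2)⁻¹)) atTop (𝓝 ρ) :=
    ((tendsto_setIntegral_square hexp).div hBρ pi_ne_zero).sqrt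
  have hbdry := (tendsto_mul_squareBoundaryIntegral_exp_half hΨ hlim).const_mul ρ
  have hgreen := tendsto_setIntegral_square_radialDeriv_div_planeWeight hΨ hΨ₁ hΨ₁c hΨ₂ hΨ₂c hlim
  have hle := le_of_tendsto_of_tendsto (tendsto_setIntegral_square_mul_sub hρ)
    (((((hbdry.div hs hρ.ne').add ((tendsto_setIntegral_square henergy).div_const 16)).sub
      (hgreen.div_const 2)).sub hB).sub hBρ) (by
    filter_upwards [eventually_gt_atTop 0, hs.eventually (lt_mem_nhds hρ),
      hBρ.eventually (lt_mem_nhds pi_pos)] with L hL hsL hBL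
    simp only [Pi.div_apply, ← mul_assoc]
    exact setIntegral_square_inv_planeWeight_sub_le hΨ hΨ₁ hΨ₁c hΨ₂ hΨ₂c hL (mul_pos hρ hL) hsL
      (by rw [sq_sqrt (sqrt_pos.1 hsL).le, div_mul_cancel₀ _ hBL.ne']))
  rw [log_sqrt hZ₀.le, mul_div_cancel_left₀ _ hρ.ne'] at hle
  rw [div_add_div _ _ (by positivity) pi_ne_zero, le_div_iff₀ (by positivity)]
  nlinarith [pi_pos]

end PlanarOnofri

section EuclideanOnofri

variable {Φ : E2 → ℝ}

lemma continuous_planeEquiv : Continuous planeEquiv := by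
  simp only [funext planeEquiv_apply]
  fun_prop

lemma norm_le_norm_planeEquiv (p : ℝ × ℝ) : ‖p‖ ≤ ‖planeEquiv p‖ := by
  refine max_le ?_ ?_ <;> refine abs_le_of_sq_le_sq ?_ (norm_nonneg _) <;>
    rw [norm_planeEquiv_sq] <;> linarith [sq_nonneg p.1, sq_nonneg p.2]

lemma tendsto_planeEquiv_cocompact : Tendsto planeEquiv (cocompact (ℝ × ℝ)) (cocompact E2) := by
  rw [← Metric.cobounded_eq_cocompact, ← Metric.cobounded_eq_cocompact,
    ← comap_norm_atTop (E := E2), tendsto_comap_iff]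
  exact tendsto_atTop_mono norm_le_norm_planeEquiv tendsto_norm_cobounded_atTop

lemma planeWeight_eq (p : ℝ × ℝ) : planeWeight p = 1 + ‖planeEquiv p‖ ^ 2 := by
  rw [norm_planeEquiv_sq]; rfl

lemma hasDerivAt_planeEquiv_fst (x y : ℝ) :
    HasDerivAt (fun t => planeEquiv (t, y)) !₂[1, 0] x := by
  rw [show (fun t => planeEquiv (t, y)) = fun t : ℝ => t • !₂[(1 : ℝ), 0] + !₂[0, y] by
    ext t i; fin_cases i <;> simp [planeEquiv_apply]]
  simpa using ((hasDerivAt_id x).smul_const (!₂[(1 : ℝ), 0] : E2)).add_const (!₂[0, y] : E2)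

lemma hasDerivAt_planeEquiv_snd (x y : ℝ) :
    HasDerivAt (fun t => planeEquiv (x, t)) !₂[0, 1] y := by
  rw [show (fun t => planeEquiv (x, t)) = fun t : ℝ => t • !₂[(0 : ℝ), 1] + !₂[x, 0] by
    ext t i; fin_cases i <;> simp [planeEquiv_apply]]
  simpa using ((hasDerivAt_id y).smul_const (!₂[(0 : ℝ), 1] : E2)).add_const (!₂[x, 0] : E2)

lemma norm_dual_sq (l : E2 →L[ℝ] ℝ) : ‖l‖ ^ 2 = l !₂[1, 0] ^ 2 + l !₂[0, 1] ^ 2 := by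
  obtain ⟨w, rfl⟩ := (InnerProductSpace.toDual ℝ E2).surjective l
  rw [LinearIsometryEquiv.norm_map]
  simp [EuclideanSpace.norm_sq_eq, PiLp.inner_apply]

theorem log_integral_exp_inv_one_add_norm_sq_le (hΦ : ContDiff ℝ 1 Φ)
    (hlim : Tendsto Φ (cocompact E2) (𝓝 0)) (henergy : Integrable fun x => ‖fderiv ℝ Φ x‖ ^ 2) :
    log ((∫ x, exp (Φ x) * ((1 + ‖x‖ ^ 2) ^ 2)⁻¹) / π) ≤
      (∫ x, ‖fderiv ℝ Φ x‖ ^ 2) / (16 * π) + (∫ x, Φ x * ((1 + ‖x‖ ^ 2) ^ 2)⁻¹) / π := by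
  have hcont := hΦ.continuous
  have hcont' := hΦ.continuous_fderiv one_ne_zero
  have hequiv := continuous_planeEquiv
  have hd : ∀ x, HasFDerivAt Φ (fderiv ℝ Φ x) x := fun x =>
    (hΦ.differentiable one_ne_zero x).hasFDerivAt
  rw [← integral_comp_planeEquiv, ← integral_comp_planeEquiv fun x => ‖fderiv ℝ Φ x‖ ^ 2,
    ← integral_comp_planeEquiv fun x => Φ x * _]
  rw [← integrable_comp_planeEquiv] at henergy
  simp only [norm_dual_sq, ← planeWeight_eq] at henergy ⊢
  exact log_integral_exp_planeWeight_le (by fun_prop)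
    (fun x y => (hd _).comp_hasDerivAt x (hasDerivAt_planeEquiv_fst x y)) (by fun_prop)
    (fun x y => (hd _).comp_hasDerivAt y (hasDerivAt_planeEquiv_snd x y)) (by fun_prop)
    (hlim.comp tendsto_planeEquiv_cocompact) henergy

lemma integrable_inv_one_add_norm_sq :
    Integrable fun x : E2 => ((1 + ‖x‖ ^ 2) ^ 2)⁻¹ :=
  integrable_norm_sq_iff.2 integrableOn_Ioi_inv_sq_one_add

lemma integral_inv_one_add_norm_sq : ∫ x : E2, ((1 + ‖x‖ ^ 2) ^ 2)⁻¹ = π := by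
  rw [integral_norm_sq fun s => ((1 + s) ^ 2)⁻¹, integral_Ioi_inv_sq_one_add, mul_one]

lemma integrable_norm_mul_inv_one_add_norm_sq :
    Integrable fun x : E2 => ‖x‖ * ((1 + ‖x‖ ^ 2) ^ 2)⁻¹ := by
  have hdim : (Module.finrank ℝ E2 : ℝ) < 3 := by simp; norm_num
  refine (integrable_rpow_neg_one_add_norm_sq (μ := volume) hdim).mono'
    (Continuous.aestronglyMeasurable (by fun_prop (disch := intros; positivity)))
    (Eventually.of_forall fun x => ?_)
  have hpos : 0 < 1 + ‖x‖ ^ 2 := by positivity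
  have hle : ‖x‖ ≤ (1 + ‖x‖ ^ 2) ^ (1 / 2 : ℝ) := by
    rw [← sqrt_eq_rpow]; exact le_sqrt_of_sq_le (by linarith)
  rw [Real.norm_eq_abs, abs_of_nonneg (by positivity)]
  calc ‖x‖ * ((1 + ‖x‖ ^ 2) ^ 2)⁻¹
    _ ≤ (1 + ‖x‖ ^ 2) ^ (1 / 2 : ℝ) * ((1 + ‖x‖ ^ 2) ^ 2)⁻¹ := by gcongr
    _ = (1 + ‖x‖ ^ 2) ^ (-3 / 2 : ℝ) := by
      rw [show ((1 + ‖x‖ ^ 2) ^ 2)⁻¹ = (1 + ‖x‖ ^ 2) ^ (-2 : ℝ) by rw [rpow_neg hpos.le, rpow_two],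
        ← rpow_add hpos]
      norm_num

end EuclideanOnofri

/-! ### The radial power map -/

section RadialPow

variable {E : Type*} [NormedAddCommGroup E] [InnerProductSpace ℝ E] {γ : ℝ}

/-- The radial power map `x ↦ |x| ^ γ x`, with which `μ₀` is transformed into `μ_α`. -/
def radialPow (γ : ℝ) (x : E) : E := ‖x‖ ^ γ • x

/-- The derivative `v ↦ |x| ^ γ v + γ |x| ^ (γ - 2) ⟨x, v⟩ x` of `radialPow γ` at `x`; its value at
`x = 0` is correct because `inner ℝ 0 v = 0`, whatever `‖0‖ ^ (γ - 2)` is. -/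
def radialPowDeriv (γ : ℝ) (x : E) : E →L[ℝ] E :=
  ‖x‖ ^ γ • ContinuousLinearMap.id ℝ E + (γ * ‖x‖ ^ (γ - 2)) • (innerSL ℝ x).smulRight x

lemma radialPowDeriv_apply (γ : ℝ) (x v : E) :
    radialPowDeriv γ x v = ‖x‖ ^ γ • v + (γ * ‖x‖ ^ (γ - 2) * inner ℝ x v) • x := by
  simp [radialPowDeriv, smul_smul]

lemma norm_radialPow (hγ : 0 ≤ γ) (x : E) : ‖radialPow γ x‖ = ‖x‖ ^ (γ + 1) := by
  rw [radialPow, norm_smul, norm_of_nonneg (by positivity),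
    rpow_add_one' (norm_nonneg _) (by positivity)]

lemma norm_radialPowDeriv_le (hγ : 0 ≤ γ) (x : E) :
    ‖radialPowDeriv γ x‖ ≤ (1 + γ) * ‖x‖ ^ γ := by
  refine ContinuousLinearMap.opNorm_le_bound _ (by positivity) fun v => ?_
  rw [radialPowDeriv_apply]
  rcases eq_or_ne x 0 with rfl | hx
  · rw [inner_zero_left, smul_zero, add_zero, norm_smul, norm_of_nonneg (by positivity), mul_assoc]
    exact le_mul_of_one_le_left (by positivity) (by linarith)
  have hn : 0 < ‖x‖ := norm_pos_iff.2 hx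
  have hpow : ‖x‖ ^ (γ - 2) * (‖x‖ * ‖x‖) = ‖x‖ ^ γ := by
    rw [← sq, ← rpow_two, ← rpow_add hn, sub_add_cancel]
  calc ‖‖x‖ ^ γ • v + (γ * ‖x‖ ^ (γ - 2) * inner ℝ x v) • x‖
    _ ≤ ‖x‖ ^ γ * ‖v‖ + γ * ‖x‖ ^ (γ - 2) * |inner ℝ x v| * ‖x‖ := by
      refine (norm_add_le _ _).trans_eq ?_
      rw [norm_smul, norm_smul, norm_mul, norm_of_nonneg (by positivity : 0 ≤ ‖x‖ ^ γ),
        norm_of_nonneg (by positivity : 0 ≤ γ * ‖x‖ ^ (γ - 2)), Real.norm_eq_abs]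
    _ ≤ ‖x‖ ^ γ * ‖v‖ + γ * ‖x‖ ^ (γ - 2) * (‖x‖ * ‖v‖) * ‖x‖ := by
      gcongr; exact abs_real_inner_le_norm x v
    _ = (1 + γ) * ‖x‖ ^ γ * ‖v‖ := by rw [← hpow]; ring

lemma radialPow_zero : (radialPow 0 : E → E) = id := by ext x; simp [radialPow]

lemma radialPowDeriv_zero (x : E) : radialPowDeriv 0 x = ContinuousLinearMap.id ℝ E := by
  ext v; simp [radialPowDeriv_apply]

lemma radialPowDeriv_apply_zero (hγ : 0 < γ) : radialPowDeriv γ (0 : E) = 0 := by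
  ext v; simp [radialPowDeriv_apply, zero_rpow hγ.ne']

lemma hasFDerivAt_norm_rpow_of_ne_zero {x : E} (hx : x ≠ 0) :
    HasFDerivAt (fun x : E => ‖x‖ ^ γ) ((γ * ‖x‖ ^ (γ - 2)) • innerSL ℝ x) x := by
  have hn : 0 < ‖x‖ := norm_pos_iff.2 hx
  have hsq := (hasStrictFDerivAt_norm_sq x).hasFDerivAt.rpow_const (p := γ / 2)
    (Or.inl (by positivity))
  refine (hsq.congr_fderiv ?_).congr_of_eventuallyEq (Eventually.of_forall fun y => ?_)
  · rw [← rpow_two, ← rpow_mul hn.le, show 2 * (γ / 2 - 1) = γ - 2 by ring, two_smul, ← two_smul ℝ,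
      smul_smul]
    congr 1; ring
  · simp only
    rw [← rpow_two, ← rpow_mul (norm_nonneg _), mul_div_cancel₀ _ two_ne_zero]

lemma hasFDerivAt_radialPow (hγ : 0 ≤ γ) (x : E) :
    HasFDerivAt (radialPow γ) (radialPowDeriv γ x) x := by
  rcases hγ.eq_or_lt with rfl | hγ'
  · rw [radialPow_zero, radialPowDeriv_zero]; exact hasFDerivAt_id x
  rcases eq_or_ne x 0 with rfl | hx
  · rw [radialPowDeriv_apply_zero hγ', hasFDerivAt_iff_isLittleO_nhds_zero]
    have hlim : Tendsto (fun x : E => ‖x‖ ^ γ) (𝓝 0) (𝓝 0) := by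
      simpa [zero_rpow hγ'.ne'] using
        (continuous_norm.rpow_const fun _ : E => Or.inr hγ).tendsto 0
    simpa [radialPow] using ((Asymptotics.isLittleO_one_iff ℝ).2 hlim).smul_isBigO
      (Asymptotics.isBigO_refl (fun x : E => x) (𝓝 0))
  · refine ((hasFDerivAt_norm_rpow_of_ne_zero hx).smul (hasFDerivAt_id x)).congr_fderiv ?_
    ext v
    simp [radialPowDeriv_apply]

lemma continuous_radialPowDeriv (hγ : 0 ≤ γ) : Continuous (radialPowDeriv γ : E → E →L[ℝ] E) := by
  rcases hγ.eq_or_lt with rfl | hγ'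
  · simp only [funext radialPowDeriv_zero]; exact continuous_const
  refine continuous_iff_continuousAt.2 fun x => ?_
  rcases eq_or_ne x 0 with rfl | hx
  · rw [ContinuousAt, radialPowDeriv_apply_zero hγ', tendsto_zero_iff_norm_tendsto_zero]
    have hlim : Tendsto (fun x : E => (1 + γ) * ‖x‖ ^ γ) (𝓝 0) (𝓝 0) := by
      simpa [zero_rpow hγ'.ne'] using
        ((continuous_norm.rpow_const fun _ : E => Or.inr hγ).const_mul (1 + γ)).tendsto 0
    exact squeeze_zero (fun _ => norm_nonneg _) (norm_radialPowDeriv_le hγ) hlim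
  · have hrpow : ∀ q : ℝ, ContinuousAt (fun x : E => ‖x‖ ^ q) x := fun q =>
      continuous_norm.continuousAt.rpow_const (Or.inl (norm_ne_zero_iff.2 hx))
    have hrankOne : Continuous fun x : E => (innerSL ℝ x).smulRight x :=
      (ContinuousLinearMap.smulRightL ℝ E E).continuous₂.comp
        ((innerSL ℝ (E := E)).continuous.prodMk continuous_id)
    exact ((hrpow γ).smul continuousAt_const).add
      (((hrpow (γ - 2)).const_mul γ).smul hrankOne.continuousAt)

lemma radialPow_injective (hγ : 0 ≤ γ) : Function.Injective (radialPow γ : E → E) := by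
  intro x y h
  have hn : ‖x‖ = ‖y‖ := by
    have := congrArg norm h
    rw [norm_radialPow hγ, norm_radialPow hγ] at this
    exact (rpow_left_inj (norm_nonneg _) (norm_nonneg _) (by positivity)).1 this
  rcases eq_or_ne x 0 with rfl | hx
  · exact (norm_eq_zero.1 (hn ▸ norm_zero)).symm
  · simp only [radialPow, ← hn] at h
    exact smul_right_injective _ (rpow_pos_of_pos (norm_pos_iff.2 hx) γ).ne' h

lemma image_radialPow_compl_zero (hγ : 0 ≤ γ) : radialPow γ '' {(0 : E)}ᶜ = {0}ᶜ := by
  ext y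
  constructor
  · rintro ⟨x, hx, rfl⟩
    exact smul_ne_zero (rpow_pos_of_pos (norm_pos_iff.2 hx) γ).ne' hx
  · intro hy
    have hn : 0 < ‖y‖ := norm_pos_iff.2 hy
    have hexp : (1 / (γ + 1) - 1 + 1) * γ + (1 / (γ + 1) - 1) = 0 := by field_simp; ring
    refine ⟨‖y‖ ^ (1 / (γ + 1) - 1) • y, smul_ne_zero (rpow_pos_of_pos hn _).ne' hy, ?_⟩
    rw [radialPow, smul_smul, norm_smul, norm_of_nonneg (by positivity), ← rpow_add_one hn.ne',
      ← rpow_mul hn.le, ← rpow_add hn, hexp, rpow_zero, one_smul]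

lemma tendsto_radialPow_cocompact [ProperSpace E] (hγ : 0 ≤ γ) :
    Tendsto (radialPow γ : E → E) (cocompact E) (cocompact E) := by
  rw [← Metric.cobounded_eq_cocompact, ← comap_norm_atTop, tendsto_comap_iff]
  simp only [Function.comp_def, norm_radialPow hγ]
  exact (tendsto_rpow_atTop (by positivity)).comp tendsto_comap

end RadialPow

section RadialPowPlane

variable {γ : ℝ}

lemma ae_ne_zero : ∀ᵐ x : E2, x ≠ 0 := compl_mem_ae_iff.2 (measure_singleton 0)

lemma det_radialPowDeriv {x : E2} (hx : x ≠ 0) :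
    (radialPowDeriv γ x).det = (1 + γ) * ‖x‖ ^ (2 * γ) := by
  have hn : 0 < ‖x‖ := norm_pos_iff.2 hx
  have hinner (i : Fin 2) : inner ℝ x (EuclideanSpace.single i (1 : ℝ)) = x i := by
    simp [PiLp.inner_apply]
  rw [ContinuousLinearMap.det, ← LinearMap.det_toMatrix (EuclideanSpace.basisFun (Fin 2) ℝ).toBasis,
    Matrix.det_fin_two]
  simp only [Fin.isValue, LinearMap.toMatrix_apply, OrthonormalBasis.coe_toBasis,
    EuclideanSpace.basisFun_apply, ContinuousLinearMap.coe_coe, radialPowDeriv_apply, hinner,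
    map_add, map_smul, Finsupp.coe_add, Finsupp.coe_smul, Pi.add_apply, Pi.smul_apply,
    OrthonormalBasis.coe_toBasis_repr_apply, EuclideanSpace.basisFun_repr, PiLp.single_eq_same,
    smul_eq_mul, mul_one, ne_eq, zero_ne_one, not_false_eq_true, PiLp.single_eq_of_ne, mul_zero,
    zero_add, one_ne_zero]
  have hsq : ‖x‖ ^ 2 = x 0 ^ 2 + x 1 ^ 2 := by simp [EuclideanSpace.norm_sq_eq]
  have hcross : ‖x‖ ^ γ * (‖x‖ ^ (γ - 2) * ‖x‖ ^ 2) = ‖x‖ ^ (2 * γ) := by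
    rw [← rpow_two, ← rpow_add hn, ← rpow_add hn]; congr 1; ring
  have hdiag : ‖x‖ ^ γ * ‖x‖ ^ γ = ‖x‖ ^ (2 * γ) := by rw [← rpow_add hn, two_mul]
  rw [hsq] at hcross
  linear_combination hdiag + γ * hcross

lemma ae_abs_det_radialPowDeriv_smul (hγ : 0 ≤ γ) (F : E2 → ℝ) :
    (fun x => |(radialPowDeriv γ x).det| • F (radialPow γ x)) =ᵐ[volume]
      fun x => (1 + γ) * ‖x‖ ^ (2 * γ) * F (radialPow γ x) := by
  filter_upwards [ae_ne_zero] with x hx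
  rw [det_radialPowDeriv hx, abs_of_nonneg (by positivity), smul_eq_mul]

lemma integral_comp_radialPow (hγ : 0 ≤ γ) (F : E2 → ℝ) :
    ∫ x, (1 + γ) * ‖x‖ ^ (2 * γ) * F (radialPow γ x) = ∫ x, F x := by
  have h := integral_image_eq_integral_abs_det_fderiv_smul volume
    (measurableSet_singleton (0 : E2)).compl
    (fun x _ => (hasFDerivAt_radialPow hγ x).hasFDerivWithinAt) (radialPow_injective hγ).injOn F
  rw [image_radialPow_compl_zero hγ, restrict_compl_singleton] at h
  rw [h, integral_congr_ae (ae_abs_det_radialPowDeriv_smul hγ F)]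

lemma integrable_comp_radialPow_iff (hγ : 0 ≤ γ) {F : E2 → ℝ} :
    Integrable (fun x => (1 + γ) * ‖x‖ ^ (2 * γ) * F (radialPow γ x)) ↔ Integrable F := by
  have h := integrableOn_image_iff_integrableOn_abs_det_fderiv_smul volume
    (measurableSet_singleton (0 : E2)).compl
    (fun x _ => (hasFDerivAt_radialPow hγ x).hasFDerivWithinAt) (radialPow_injective hγ).injOn F
  rw [image_radialPow_compl_zero hγ, IntegrableOn, IntegrableOn, restrict_compl_singleton] at h
  rw [h, integrable_congr (ae_abs_det_radialPowDeriv_smul hγ F)]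

end RadialPowPlane

/-! ### The weighted Onofri inequality -/

section Weighted

variable {α : ℝ}

lemma muAlpha_nonneg (hα : -1 < α) (x : E2) : 0 ≤ muAlpha α x := by
  have : 0 < 1 + α := by linarith
  rw [muAlpha]; positivity

/-- The exponent `γ` for which `radialPow γ` pulls `μ_α` back to `μ₀`: `γ + 1 = (1 + α)⁻¹`. -/
def powExponent (α : ℝ) : ℝ := (1 + α)⁻¹ - 1

lemma one_add_powExponent (α : ℝ) : 1 + powExponent α = (1 + α)⁻¹ := add_sub_cancel _ _

lemma powExponent_nonneg (hα : -1 < α) (hα' : α ≤ 0) : 0 ≤ powExponent α :=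
  sub_nonneg.2 ((one_le_inv₀ (by linarith)).2 (by linarith))

lemma norm_radialPow_rpow (hα : -1 < α) (hα' : α ≤ 0) (x : E2) (q : ℝ) :
    ‖radialPow (powExponent α) x‖ ^ q = ‖x‖ ^ (q / (1 + α)) := by
  rw [norm_radialPow (powExponent_nonneg hα hα'), add_comm, one_add_powExponent,
    ← rpow_mul (norm_nonneg _), inv_mul_eq_div]

lemma jacobian_mul_muAlpha_radialPow (hα : -1 < α) (hα' : α ≤ 0) {x : E2} (hx : x ≠ 0) :
    (1 + powExponent α) * ‖x‖ ^ (2 * powExponent α) * muAlpha α (radialPow (powExponent α) x) =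
      ((1 + ‖x‖ ^ 2) ^ 2)⁻¹ / π := by
  have hα₀ : 0 < 1 + α := by linarith
  have hn : 0 < ‖x‖ := norm_pos_iff.2 hx
  have hcancel : ‖x‖ ^ (2 * powExponent α) * ‖x‖ ^ (2 * α / (1 + α)) = 1 := by
    have hexp : 2 * powExponent α + 2 * α / (1 + α) = 0 := by rw [powExponent]; field_simp; ring
    rw [← rpow_add hn, hexp, rpow_zero]
  rw [muAlpha, norm_radialPow_rpow hα hα', norm_radialPow_rpow hα hα',
    mul_div_cancel_right₀ _ hα₀.ne', rpow_two, one_add_powExponent]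
  calc (1 + α)⁻¹ * ‖x‖ ^ (2 * powExponent α) *
        ((1 + α) / π * ‖x‖ ^ (2 * α / (1 + α)) / (1 + ‖x‖ ^ 2) ^ 2)
    _ = ‖x‖ ^ (2 * powExponent α) * ‖x‖ ^ (2 * α / (1 + α)) * (((1 + ‖x‖ ^ 2) ^ 2)⁻¹ / π) := by
      field_simp
    _ = ((1 + ‖x‖ ^ 2) ^ 2)⁻¹ / π := by rw [hcancel, one_mul]

lemma ae_jacobian_mul_muAlpha_radialPow (hα : -1 < α) (hα' : α ≤ 0) (F : E2 → ℝ) :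
    (fun x => (1 + powExponent α) * ‖x‖ ^ (2 * powExponent α) *
        (F (radialPow (powExponent α) x) * muAlpha α (radialPow (powExponent α) x))) =ᵐ[volume]
      fun x => F (radialPow (powExponent α) x) * ((1 + ‖x‖ ^ 2) ^ 2)⁻¹ / π := by
  filter_upwards [ae_ne_zero] with x hx
  rw [mul_left_comm, jacobian_mul_muAlpha_radialPow hα hα' hx, mul_div_assoc]

lemma integral_mul_muAlpha (hα : -1 < α) (hα' : α ≤ 0) (F : E2 → ℝ) :
    ∫ x, F x * muAlpha α x =
      (∫ x, F (radialPow (powExponent α) x) * ((1 + ‖x‖ ^ 2) ^ 2)⁻¹) / π := by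
  rw [← integral_comp_radialPow (powExponent_nonneg hα hα'), ← integral_div,
    integral_congr_ae (ae_jacobian_mul_muAlpha_radialPow hα hα' F)]

lemma integrable_mul_muAlpha_iff (hα : -1 < α) (hα' : α ≤ 0) {F : E2 → ℝ} :
    Integrable (fun x => F x * muAlpha α x) ↔
      Integrable fun x => F (radialPow (powExponent α) x) * ((1 + ‖x‖ ^ 2) ^ 2)⁻¹ := by
  rw [← integrable_comp_radialPow_iff (powExponent_nonneg hα hα'),
    integrable_congr (ae_jacobian_mul_muAlpha_radialPow hα hα' F)]
  exact integrable_mul_const_iff (isUnit_iff_ne_zero.2 (inv_ne_zero pi_ne_zero)) _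

lemma integrable_muAlpha (hα : -1 < α) (hα' : α ≤ 0) : Integrable (muAlpha α) := by
  simpa using (integrable_mul_muAlpha_iff hα hα' (F := fun _ => 1)).2
    (by simpa using integrable_inv_one_add_norm_sq)

lemma integral_muAlpha (hα : -1 < α) (hα' : α ≤ 0) : ∫ x, muAlpha α x = 1 := by
  simpa [integral_inv_one_add_norm_sq, pi_ne_zero] using
    integral_mul_muAlpha hα hα' (fun _ => 1)

lemma integrable_norm_rpow_mul_muAlpha (hα : -1 < α) (hα' : α ≤ 0) :
    Integrable fun x : E2 => ‖x‖ ^ (1 + α) * muAlpha α x := by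
  have hα₀ : 1 + α ≠ 0 := by linarith
  refine (integrable_mul_muAlpha_iff hα hα' (F := fun x => ‖x‖ ^ (1 + α))).2 ?_
  simpa only [norm_radialPow_rpow hα hα', div_self hα₀, rpow_one] using
    integrable_norm_mul_inv_one_add_norm_sq

variable {ψ : E2 → ℝ}

lemma norm_fderiv_comp_radialPow_sq_le {γ : ℝ} (hγ : 0 ≤ γ) (hψ : Differentiable ℝ ψ) (x : E2) :
    ‖fderiv ℝ (ψ ∘ radialPow γ) x‖ ^ 2 ≤
      (1 + γ) * ((1 + γ) * ‖x‖ ^ (2 * γ) * ‖fderiv ℝ ψ (radialPow γ x)‖ ^ 2) := by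
  have hle : ‖fderiv ℝ (ψ ∘ radialPow γ) x‖ ≤
      ‖fderiv ℝ ψ (radialPow γ x)‖ * ((1 + γ) * ‖x‖ ^ γ) := by
    rw [((hψ _).hasFDerivAt.comp x (hasFDerivAt_radialPow hγ x)).fderiv]
    exact (ContinuousLinearMap.opNorm_comp_le _ _).trans
      (mul_le_mul_of_nonneg_left (norm_radialPowDeriv_le hγ x) (norm_nonneg _))
  calc ‖fderiv ℝ (ψ ∘ radialPow γ) x‖ ^ 2
    _ ≤ (‖fderiv ℝ ψ (radialPow γ x)‖ * ((1 + γ) * ‖x‖ ^ γ)) ^ 2 := by gcongr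
    _ = _ := by rw [mul_comm 2 γ, rpow_mul (norm_nonneg _), rpow_two]; ring

lemma contDiff_radialPow {γ : ℝ} (hγ : 0 ≤ γ) : ContDiff ℝ 1 (radialPow γ : E2 → E2) := by
  refine contDiff_one_iff_fderiv.2 ⟨fun x => (hasFDerivAt_radialPow hγ x).differentiableAt, ?_⟩
  rw [funext fun x => (hasFDerivAt_radialPow (E := E2) hγ x).fderiv]
  exact continuous_radialPowDeriv hγ

theorem log_integral_exp_muAlpha_le (hα : -1 < α) (hα' : α ≤ 0) (hψ : ContDiff ℝ 1 ψ)
    (hlim : Tendsto ψ (cocompact E2) (𝓝 0)) (henergy : Integrable fun x => ‖fderiv ℝ ψ x‖ ^ 2) :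
    log (∫ x, exp (ψ x) * muAlpha α x) ≤
      1 / (16 * π * (1 + α)) * (∫ x, ‖fderiv ℝ ψ x‖ ^ 2) + ∫ x, ψ x * muAlpha α x := by
  have hγ := powExponent_nonneg hα hα'
  set γ := powExponent α
  have hΦ : ContDiff ℝ 1 (ψ ∘ radialPow γ) := hψ.comp (contDiff_radialPow hγ)
  have hbound := norm_fderiv_comp_radialPow_sq_le hγ (hψ.differentiable one_ne_zero)
  have hmajorant := ((integrable_comp_radialPow_iff hγ).2 henergy).const_mul (1 + γ)
  have hΦenergy : Integrable fun x => ‖fderiv ℝ (ψ ∘ radialPow γ) x‖ ^ 2 :=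
    hmajorant.mono' ((hΦ.continuous_fderiv one_ne_zero).norm.pow 2).aestronglyMeasurable
      (Eventually.of_forall fun x => by simpa using hbound x)
  have hle : ∫ x, ‖fderiv ℝ (ψ ∘ radialPow γ) x‖ ^ 2 ≤
      (1 + α)⁻¹ * ∫ x, ‖fderiv ℝ ψ x‖ ^ 2 := by
    rw [← one_add_powExponent, ← integral_comp_radialPow hγ fun x => ‖fderiv ℝ ψ x‖ ^ 2,
      ← integral_const_mul]
    exact integral_mono hΦenergy hmajorant hbound
  rw [integral_mul_muAlpha hα hα' (fun x => exp (ψ x)), integral_mul_muAlpha hα hα' ψ]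
  refine (log_integral_exp_inv_one_add_norm_sq_le hΦ
    (hlim.comp (tendsto_radialPow_cocompact hγ)) hΦenergy).trans (add_le_add_left ?_ _)
  calc (∫ x, ‖fderiv ℝ (ψ ∘ radialPow γ) x‖ ^ 2) / (16 * π)
    _ ≤ ((1 + α)⁻¹ * ∫ x, ‖fderiv ℝ ψ x‖ ^ 2) / (16 * π) := by gcongr
    _ = 1 / (16 * π * (1 + α)) * ∫ x, ‖fderiv ℝ ψ x‖ ^ 2 := by
      have hα₀ : 1 + α ≠ 0 := by linarith
      field_simp

end Weighted

/-! ### The truncated Green function -/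

section TruncGreen

/-- The planar heat kernel `(4πt)⁻¹ exp (-|x|² / 4t)` multiplied by `t`, in the variables
`τ = log t` and `q = |x|²`, so that integrating it in `τ` integrates the heat kernel in `t`. -/
def heatProfile (τ q : ℝ) : ℝ := 1 / (4 * π) * exp (-(exp (-τ) / 4) * q)

/-- The Green function of the plane truncated to times `e^A ≤ t ≤ e^B`, as a function of
`q = |x|²`. -/
def truncGreen (A B q : ℝ) : ℝ := ∫ τ in A..B, heatProfile τ q

/-- The radial slope of the truncated Green function: its gradient at `x` is
`-truncGreenSlope A B (|x|²) • x`. -/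
def truncGreenSlope (A B q : ℝ) : ℝ := ∫ τ in A..B, exp (-τ) / 2 * heatProfile τ q

variable {A B τ q r : ℝ}

lemma continuous_uncurry_heatProfile : Continuous fun p : ℝ × ℝ => heatProfile p.1 p.2 := by
  unfold heatProfile; fun_prop

lemma continuous_heatProfile (τ : ℝ) : Continuous (heatProfile τ) := by
  unfold heatProfile; fun_prop

lemma continuous_heatProfile_left (q : ℝ) : Continuous fun τ => heatProfile τ q := by
  unfold heatProfile; fun_prop

lemma heatProfile_pos (τ q : ℝ) : 0 < heatProfile τ q := by unfold heatProfile; positivity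

lemma heatProfile_le (τ : ℝ) (hq : 0 ≤ q) : heatProfile τ q ≤ 1 / (4 * π) := by
  refine mul_le_of_le_one_right (by positivity) (exp_le_one_iff.2 ?_)
  rw [neg_mul, neg_nonpos]
  positivity

lemma heatProfile_mono (hτB : τ ≤ B) (hq : 0 ≤ q) : heatProfile τ q ≤ heatProfile B q := by
  unfold heatProfile; gcongr

lemma hasDerivAt_heatProfile (τ q : ℝ) :
    HasDerivAt (heatProfile τ) (-(1 / 2) * (exp (-τ) / 2 * heatProfile τ q)) q :=
  ((hasDerivAt_const_mul (x := q) (-(exp (-τ) / 4))).exp.const_mul _).congr_deriv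
    (by rw [heatProfile]; ring)

lemma hasDerivAt_heatProfile_left (τ q : ℝ) :
    HasDerivAt (fun τ => heatProfile τ q) (q * (exp (-τ) / 4) * heatProfile τ q) τ :=
  (((((hasDerivAt_neg τ).exp.div_const 4).neg.mul_const q).exp).const_mul _).congr_deriv
    (by simp only [heatProfile, Pi.neg_apply]; ring)

lemma tendsto_heatProfile_atTop (q : ℝ) :
    Tendsto (fun τ => heatProfile τ q) atTop (𝓝 (1 / (4 * π))) := by
  simpa [heatProfile] using
    (((tendsto_exp_neg_atTop_nhds_zero.div_const 4).neg.mul_const q).rexp).const_mul (1 / (4 * π))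

lemma tendsto_heatProfile_atBot (hq : 0 < q) :
    Tendsto (fun τ => heatProfile τ q) atBot (𝓝 0) := by
  have hexp : Tendsto (fun τ : ℝ => exp (-τ) / 4 * q) atBot atTop :=
    ((tendsto_exp_atTop.comp tendsto_neg_atBot_atTop).atTop_div_const four_pos).atTop_mul_const hq
  simpa [heatProfile, Function.comp_def] using
    (tendsto_exp_neg_atTop_nhds_zero.comp hexp).const_mul (1 / (4 * π))

lemma continuous_truncGreen (A B : ℝ) : Continuous (truncGreen A B) :=
  intervalIntegral.continuous_parametric_intervalIntegral_of_continuous'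
    (f := fun q τ => heatProfile τ q) (continuous_uncurry_heatProfile.comp continuous_swap) A B

lemma continuous_truncGreenSlope (A B : ℝ) : Continuous (truncGreenSlope A B) := by
  have := continuous_uncurry_heatProfile
  exact intervalIntegral.continuous_parametric_intervalIntegral_of_continuous'
    (f := fun q τ => exp (-τ) / 2 * heatProfile τ q)
    (((continuous_exp.comp continuous_snd.neg).div_const 2).mul (this.comp continuous_swap)) A B

lemma truncGreen_add (A B C q : ℝ) : truncGreen A B q + truncGreen B C q = truncGreen A C q :=
  intervalIntegral.integral_add_adjacent_intervals
    ((continuous_heatProfile_left q).intervalIntegrable _ _)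
    ((continuous_heatProfile_left q).intervalIntegrable _ _)

lemma truncGreen_nonneg (hAB : A ≤ B) (q : ℝ) : 0 ≤ truncGreen A B q :=
  intervalIntegral.integral_nonneg hAB fun τ _ => (heatProfile_pos τ q).le

lemma truncGreenSlope_nonneg (hAB : A ≤ B) (q : ℝ) : 0 ≤ truncGreenSlope A B q :=
  intervalIntegral.integral_nonneg hAB fun τ _ => by have := heatProfile_pos τ q; positivity

lemma truncGreen_le (hAB : A ≤ B) (hq : 0 ≤ q) :
    truncGreen A B q ≤ (B - A) * heatProfile B q := by
  rw [← smul_eq_mul, ← intervalIntegral.integral_const]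
  exact intervalIntegral.integral_mono_on hAB
    ((continuous_heatProfile_left q).intervalIntegrable _ _) intervalIntegrable_const
    fun τ hτ => heatProfile_mono hτ.2 hq

lemma abs_truncGreen_le (hAB : A ≤ B) (hq : 0 ≤ q) :
    |truncGreen A B q| ≤ (B - A) * (1 / (4 * π)) := by
  rw [abs_of_nonneg (truncGreen_nonneg hAB q)]
  exact (truncGreen_le hAB hq).trans
    (mul_le_mul_of_nonneg_left (heatProfile_le B hq) (sub_nonneg.2 hAB))

lemma truncGreenSlope_le (hAB : A ≤ B) (hq : 0 ≤ q) :
    truncGreenSlope A B q ≤ (B - A) * (exp (-A) / 2 * heatProfile B q) := by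
  have hcont := continuous_heatProfile_left q
  rw [← smul_eq_mul, ← intervalIntegral.integral_const]
  refine intervalIntegral.integral_mono_on hAB (Continuous.intervalIntegrable (by fun_prop) _ _)
    intervalIntegrable_const fun τ hτ => ?_
  have := heatProfile_pos τ q
  gcongr
  exacts [hτ.1, heatProfile_mono hτ.2 hq]

lemma hasDerivAt_truncGreen (A B q : ℝ) :
    HasDerivAt (truncGreen A B) (-(1 / 2) * truncGreenSlope A B q) q := by
  have hcont' (x : ℝ) : Continuous fun τ => -(1 / 2) * (exp (-τ) / 2 * heatProfile τ x) := by
    have := continuous_heatProfile_left x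
    fun_prop
  rw [truncGreenSlope, ← intervalIntegral.integral_const_mul]
  refine (intervalIntegral.hasDerivAt_integral_of_dominated_loc_of_deriv_le
    (F := fun q τ => heatProfile τ q) (F' := fun q τ => -(1 / 2) * (exp (-τ) / 2 * heatProfile τ q))
    (bound := fun τ => exp (-τ) / 4 * heatProfile τ (q - 1)) (Metric.ball_mem_nhds q one_pos)
    (Eventually.of_forall fun x => (continuous_heatProfile_left x).aestronglyMeasurable)
    ((continuous_heatProfile_left q).intervalIntegrable _ _) (hcont' q).aestronglyMeasurable
    (Eventually.of_forall fun τ _ x hx => ?_) (Continuous.intervalIntegrable ?_ _ _)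
    (Eventually.of_forall fun τ _ x _ => hasDerivAt_heatProfile τ x)).2
  · have hx' : q - 1 ≤ x := by
      linarith [(abs_lt.1 (Real.dist_eq x q ▸ Metric.mem_ball.1 hx)).1]
    have hpos := heatProfile_pos τ x
    calc ‖-(1 / 2) * (exp (-τ) / 2 * heatProfile τ x)‖
      _ = exp (-τ) / 4 * heatProfile τ x := by
        rw [neg_mul, norm_neg, Real.norm_of_nonneg (by positivity)]; ring
      _ ≤ exp (-τ) / 4 * heatProfile τ (q - 1) := by
        unfold heatProfile
        refine mul_le_mul_of_nonneg_left (mul_le_mul_of_nonneg_left (exp_le_exp.2 ?_)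
          (by positivity)) (by positivity)
        exact mul_le_mul_of_nonpos_left hx' (neg_nonpos.2 (by positivity))
  · have := continuous_heatProfile_left (q - 1)
    fun_prop

lemma mul_truncGreenSlope (A B q : ℝ) :
    q * truncGreenSlope A B q = 2 * (heatProfile B q - heatProfile A q) := by
  have hcont := continuous_heatProfile_left q
  rw [← intervalIntegral.integral_eq_sub_of_hasDerivAt
    (fun τ _ => hasDerivAt_heatProfile_left τ q) (Continuous.intervalIntegrable (by fun_prop) _ _),
    truncGreenSlope, ← intervalIntegral.integral_const_mul, ← intervalIntegral.integral_const_mul]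
  exact intervalIntegral.integral_congr fun τ _ => by ring

lemma hasDerivAt_truncGreen_sq (A B : ℝ) (hr : r ≠ 0) :
    HasDerivAt (fun r => truncGreen A B (r ^ 2))
      (-2 * (heatProfile B (r ^ 2) - heatProfile A (r ^ 2)) * r⁻¹) r := by
  refine ((hasDerivAt_truncGreen A B (r ^ 2)).comp r (hasDerivAt_pow 2 r)).congr_deriv ?_
  have hslope := mul_truncGreenSlope A B (r ^ 2)
  push_cast
  field_simp
  linear_combination -hslope

lemma pos_of_mem_uIcc_one (hr : 0 < r) {ρ : ℝ} (hρ : ρ ∈ uIcc 1 r) : 0 < ρ :=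
  (lt_min one_pos hr).trans_le hρ.1

lemma intervalIntegrable_const_mul_inv (c : ℝ) (hr : 0 < r) :
    IntervalIntegrable (fun ρ : ℝ => c * ρ⁻¹) volume 1 r :=
  (continuousOn_const.mul (continuousOn_id.inv₀ fun _ hρ =>
    (pos_of_mem_uIcc_one hr hρ).ne')).intervalIntegrable

lemma integral_const_mul_inv (c : ℝ) (hr : 0 < r) : ∫ ρ in (1 : ℝ)..r, c * ρ⁻¹ = c * log r := by
  rw [intervalIntegral.integral_const_mul, integral_inv_of_pos one_pos hr, div_one]

lemma truncGreen_sub_eq_integral (A B : ℝ) (hr : 0 < r) :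
    truncGreen A B (r ^ 2) - truncGreen A B 1 =
      ∫ ρ in (1 : ℝ)..r, -2 * (heatProfile B (ρ ^ 2) - heatProfile A (ρ ^ 2)) * ρ⁻¹ := by
  have hA := continuous_heatProfile A
  have hB := continuous_heatProfile B
  rw [intervalIntegral.integral_eq_sub_of_hasDerivAt (f := fun r => truncGreen A B (r ^ 2))
    (fun ρ hρ => hasDerivAt_truncGreen_sq A B (pos_of_mem_uIcc_one hr hρ).ne'), one_pow]
  refine ContinuousOn.intervalIntegrable (ContinuousOn.mul (by fun_prop) ?_)
  exact continuousOn_id.inv₀ fun ρ hρ => (pos_of_mem_uIcc_one hr hρ).ne'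

lemma norm_heatProfile_sub_mul_inv_le (hAB : A ≤ B) {ρ : ℝ} (hρ : 0 < ρ) :
    ‖-2 * (heatProfile B (ρ ^ 2) - heatProfile A (ρ ^ 2)) * ρ⁻¹‖ ≤ 1 / (2 * π) * ρ⁻¹ := by
  have hmono := heatProfile_mono hAB (sq_nonneg ρ)
  have hle := heatProfile_le B (sq_nonneg ρ)
  have hpos := heatProfile_pos A (ρ ^ 2)
  rw [norm_mul, Real.norm_of_nonneg (inv_nonneg.2 hρ.le), neg_mul, norm_neg,
    Real.norm_of_nonneg (by linarith)]
  gcongr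
  calc 2 * (heatProfile B (ρ ^ 2) - heatProfile A (ρ ^ 2))
    _ ≤ 2 * (1 / (4 * π)) := by linarith
    _ = 1 / (2 * π) := by field_simp; norm_num

lemma abs_truncGreen_sub_le (hAB : A ≤ B) (hr : 0 < r) :
    |truncGreen A B (r ^ 2) - truncGreen A B 1| ≤ 1 / (2 * π) * |log r| := by
  rw [truncGreen_sub_eq_integral A B hr, ← Real.norm_eq_abs]
  refine (intervalIntegral.norm_integral_le_abs_of_norm_le
    ((ae_restrict_iff' measurableSet_uIoc).2 (Eventually.of_forall fun ρ hρ =>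
      norm_heatProfile_sub_mul_inv_le hAB (pos_of_mem_uIcc_one hr (uIoc_subset_uIcc hρ))))
    (intervalIntegrable_const_mul_inv _ hr)).trans_eq ?_
  rw [integral_const_mul_inv _ hr, abs_mul, abs_of_pos (by positivity)]

lemma tendsto_truncGreen_sub {ι : Type*} {l : Filter ι} [l.IsCountablyGenerated] {a b : ι → ℝ}
    (hab : ∀ n, a n ≤ b n) (ha : Tendsto a l atBot) (hb : Tendsto b l atTop) (hr : 0 < r) :
    Tendsto (fun n => truncGreen (a n) (b n) (r ^ 2) - truncGreen (a n) (b n) 1) l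
      (𝓝 (-(1 / (2 * π)) * log r)) := by
  simp only [truncGreen_sub_eq_integral _ _ hr]
  rw [← integral_const_mul_inv _ hr]
  refine intervalIntegral.tendsto_integral_filter_of_dominated_convergence
    (fun ρ => 1 / (2 * π) * ρ⁻¹) (Eventually.of_forall fun n => ?_)
    (Eventually.of_forall fun n => Eventually.of_forall fun ρ hρ =>
      norm_heatProfile_sub_mul_inv_le (hab n) (pos_of_mem_uIcc_one hr (uIoc_subset_uIcc hρ)))
    (intervalIntegrable_const_mul_inv _ hr) (Eventually.of_forall fun ρ hρ => ?_)
  · have hmeas := fun τ => (continuous_heatProfile τ).measurable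
    exact Measurable.aestronglyMeasurable (by fun_prop)
  · have hρ₀ := pos_of_mem_uIcc_one hr (uIoc_subset_uIcc hρ)
    have hlim := ((((tendsto_heatProfile_atTop (ρ ^ 2)).comp hb).sub
      ((tendsto_heatProfile_atBot (sq_pos_of_pos hρ₀)).comp ha)).const_mul (-2)).mul_const ρ⁻¹
    rwa [show -2 * (1 / (4 * π) - 0) = -(1 / (2 * π)) by field_simp; norm_num] at hlim

end TruncGreen

/-! ### The heat semigroup of the plane -/

section HeatSemigroup

lemma integral_exp_neg_mul_norm_sq {κ : ℝ} (hκ : 0 < κ) :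
    ∫ x : E2, exp (-κ * ‖x‖ ^ 2) = π / κ := by
  rw [GaussianFourier.integral_rexp_neg_mul_sq_norm hκ]
  simp

lemma integrable_heatProfile_norm_sq (τ : ℝ) : Integrable fun x : E2 => heatProfile τ (‖x‖ ^ 2) :=
  integrable_norm_sq_iff.2 ((exp_neg_integrableOn_Ioi 0 (by positivity)).const_mul _)

lemma integral_heatProfile_norm_sq (τ : ℝ) : ∫ x : E2, heatProfile τ (‖x‖ ^ 2) = exp τ := by
  simp only [heatProfile]
  rw [integral_const_mul, integral_exp_neg_mul_norm_sq (by positivity), exp_neg]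
  field_simp

lemma integrable_norm_mul_heatProfile (τ : ℝ) :
    Integrable fun x : E2 => ‖x‖ * heatProfile τ (‖x‖ ^ 2) := by
  have hradial := (integrableOn_rpow_mul_exp_neg_mul_rpow (s := 1 / 2) (by norm_num) one_pos
    (by positivity : 0 < exp (-τ) / 4)).const_mul (1 / (4 * π))
  refine (integrable_norm_sq_iff.2 hradial).congr (Eventually.of_forall fun x => ?_)
  simp only [heatProfile, rpow_one, ← sqrt_eq_rpow, sqrt_sq (norm_nonneg x)]
  ring

lemma exists_mul_heatProfile_le (τ : ℝ) : ∃ C, ∀ r : ℝ, r * heatProfile τ (r ^ 2) ≤ C := by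
  set κ := exp (-τ) / 4 with hκ
  have hκ₀ : 0 < κ := by positivity
  refine ⟨(1 + 1 / κ) * (1 / (4 * π)), fun r => ?_⟩
  have hr : r ≤ (1 + 1 / κ) * exp (κ * r ^ 2) :=
    calc r
      _ ≤ 1 + r ^ 2 := by nlinarith [sq_nonneg (r - 1)]
      _ ≤ 1 + r ^ 2 + (κ * r ^ 2 + 1 / κ) := le_add_of_nonneg_right (by positivity)
      _ = (1 + 1 / κ) * (κ * r ^ 2 + 1) := by field_simp; ring
      _ ≤ (1 + 1 / κ) * exp (κ * r ^ 2) := by gcongr; exact add_one_le_exp _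
  calc r * heatProfile τ (r ^ 2)
    _ ≤ (1 + 1 / κ) * exp (κ * r ^ 2) * heatProfile τ (r ^ 2) :=
      mul_le_mul_of_nonneg_right hr (heatProfile_pos _ _).le
    _ = (1 + 1 / κ) * (1 / (4 * π)) := by
      rw [heatProfile, ← hκ, neg_mul, exp_neg]
      field_simp

lemma integral_eq_sq_mul_integral_add_smul (F : E2 → ℝ) (y : E2) {r : ℝ} (hr : r ≠ 0) :
    ∫ x, F x = r ^ 2 * ∫ z, F (y + r • z) := by
  rw [Measure.integral_comp_smul volume (fun x => F (y + x)) r, integral_add_left_eq_self,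
    finrank_euclideanSpace_fin, smul_eq_mul, abs_of_nonneg (by positivity),
    mul_inv_cancel_left₀ (pow_ne_zero 2 hr)]

lemma norm_sub_sq_div_add_norm_sub_sq_div {E : Type*} [NormedAddCommGroup E]
    [InnerProductSpace ℝ E] {a b : ℝ} (ha : a ≠ 0) (hb : b ≠ 0) (hab : a + b ≠ 0) (x y z : E) :
    ‖x - y‖ ^ 2 / a + ‖x - z‖ ^ 2 / b = ‖y - z‖ ^ 2 / (a + b) +
      (a + b) / (a * b) * ‖x - (a + b)⁻¹ • (b • y + a • z)‖ ^ 2 := by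
  have hcenter : x - (a + b)⁻¹ • (b • y + a • z) =
      (a + b)⁻¹ • (b • (x - y) + a • (x - z)) := by
    rw [eq_inv_smul_iff₀ hab, smul_sub, smul_inv_smul₀ hab]
    module
  have hdiff : y - z = (x - z) - (x - y) := by abel
  rw [hcenter, hdiff, norm_smul, mul_pow, norm_add_sq_real,
    norm_sub_sq_real (x - z) (x - y)]
  simp only [norm_smul, mul_pow, norm_eq_abs, sq_abs, inner_smul_left, inner_smul_right,
    real_inner_comm (x - y) (x - z), RCLike.conj_to_real]
  field_simp
  ring

/-- `log (e^C + e^τ)`: the logarithm of the sum of the times `e^C` and `e^τ`. -/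
def logAddExp (C τ : ℝ) : ℝ := log (exp C + exp τ)

lemma exp_logAddExp (C τ : ℝ) : exp (logAddExp C τ) = exp C + exp τ := exp_log (by positivity)

lemma hasDerivAt_logAddExp (C τ : ℝ) :
    HasDerivAt (logAddExp C) (exp τ / (exp C + exp τ)) τ :=
  ((hasDerivAt_exp τ).const_add (exp C)).log (by positivity)

lemma logAddExp_mono (C : ℝ) : Monotone (logAddExp C) := fun A B hAB => by
  unfold logAddExp; gcongr

lemma logAddExp_comm (A B : ℝ) : logAddExp A B = logAddExp B A := by
  rw [logAddExp, add_comm, logAddExp]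

lemma logAddExp_self (A : ℝ) : logAddExp A A = A + log 2 := by
  rw [logAddExp, ← two_mul, log_mul two_ne_zero (exp_pos _).ne', log_exp, add_comm]

lemma le_logAddExp (A B : ℝ) : B ≤ logAddExp A B :=
  (le_log_iff_exp_le (by positivity)).2 (le_add_of_nonneg_left (exp_pos A).le)

lemma heatProfile_mul_heatProfile (σ τ : ℝ) (x y z : E2) :
    heatProfile σ (‖x - y‖ ^ 2) * heatProfile τ (‖x - z‖ ^ 2) =
      1 / (4 * π) * heatProfile (logAddExp σ τ) (‖y - z‖ ^ 2) *
        exp (-((exp σ + exp τ) / (4 * exp σ * exp τ)) *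
          ‖x - (exp σ + exp τ)⁻¹ • (exp τ • y + exp σ • z)‖ ^ 2) := by
  have hnorm := norm_sub_sq_div_add_norm_sub_sq_div (exp_pos σ).ne' (exp_pos τ).ne'
    (by positivity) x y z
  simp only [heatProfile, exp_neg σ, exp_neg τ, exp_neg (logAddExp σ τ), exp_logAddExp]
  rw [mul_mul_mul_comm, ← exp_add, ← mul_assoc, mul_assoc (1 / (4 * π) * (1 / (4 * π))), ← exp_add]
  congr 2
  linear_combination (-1 / 4) * hnorm

lemma integral_heatProfile_mul_heatProfile (σ τ : ℝ) (y z : E2) :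
    ∫ x, heatProfile σ (‖x - y‖ ^ 2) * heatProfile τ (‖x - z‖ ^ 2) =
      exp σ * exp τ / (exp σ + exp τ) * heatProfile (logAddExp σ τ) (‖y - z‖ ^ 2) := by
  simp only [heatProfile_mul_heatProfile]
  rw [integral_const_mul, integral_sub_right_eq_self
    (fun x : E2 => exp (-((exp σ + exp τ) / (4 * exp σ * exp τ)) * ‖x‖ ^ 2)),
    integral_exp_neg_mul_norm_sq (by positivity)]
  field_simp

/-- The heat semigroup of the plane at time `e^A`. The Gaussian variable is rescaled to unit time so
that the regularity and the limits in `A` can be read off the argument of `w`. -/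
def heatSemigroup (A : ℝ) (w : E2 → ℝ) (y : E2) : ℝ :=
  ∫ z : E2, heatProfile 0 (‖z‖ ^ 2) * w (y + exp (A / 2) • z)

lemma exp_half_sq (τ : ℝ) : exp (τ / 2) ^ 2 = exp τ := by
  rw [← exp_nat_mul]; congr 1; push_cast; ring

lemma heatProfile_norm_exp_smul (τ : ℝ) (z : E2) :
    heatProfile τ (‖exp (τ / 2) • z‖ ^ 2) = heatProfile 0 (‖z‖ ^ 2) := by
  have hexp : exp (-τ) * exp τ = 1 := by rw [← exp_add, neg_add_cancel, exp_zero]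
  rw [norm_smul, mul_pow, norm_eq_abs, sq_abs, exp_half_sq, heatProfile, heatProfile]
  congr 2
  rw [neg_zero, exp_zero]
  linear_combination (-(‖z‖ ^ 2) / 4) * hexp

lemma heatSemigroup_eq (A : ℝ) (w : E2 → ℝ) (y : E2) :
    heatSemigroup A w y = exp (-A) * ∫ x, heatProfile A (‖x - y‖ ^ 2) * w x := by
  rw [integral_eq_sq_mul_integral_add_smul (fun x => heatProfile A (‖x - y‖ ^ 2) * w x) y
    (exp_pos (A / 2)).ne', exp_half_sq, ← mul_assoc, ← exp_add, neg_add_cancel, exp_zero, one_mul]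
  simp only [add_sub_cancel_left, heatProfile_norm_exp_smul, heatSemigroup]

variable {w : E2 → ℝ} {M L : ℝ}

lemma norm_heatProfile_mul_le (hM : ∀ x, |w x| ≤ M) (τ q : ℝ) (x : E2) :
    ‖heatProfile τ q * w x‖ ≤ M * heatProfile τ q := by
  rw [norm_mul, Real.norm_of_nonneg (heatProfile_pos τ q).le, mul_comm]
  exact mul_le_mul_of_nonneg_right (hM x) (heatProfile_pos τ q).le

lemma abs_heatSemigroup_le (hM : ∀ x, |w x| ≤ M) (A : ℝ) (y : E2) :
    |heatSemigroup A w y| ≤ M := by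
  have hle := norm_integral_le_of_norm_le ((integrable_heatProfile_norm_sq 0).const_mul M)
    (Eventually.of_forall fun z => norm_heatProfile_mul_le hM 0 (‖z‖ ^ 2) (y + exp (A / 2) • z))
  rwa [integral_const_mul, integral_heatProfile_norm_sq, exp_zero, mul_one] at hle

lemma aestronglyMeasurable_heatSemigroup (hw : Continuous w) (A : ℝ) :
    AEStronglyMeasurable (heatSemigroup A w) := by
  have hcont := continuous_heatProfile 0
  have : Continuous fun p : E2 × E2 =>
    heatProfile 0 (‖p.2‖ ^ 2) * w (p.1 + exp (A / 2) • p.2) := by fun_prop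
  exact this.stronglyMeasurable.integral_prod_right.aestronglyMeasurable

section Limits

variable {ι : Type*} {l : Filter ι} [l.IsCountablyGenerated] {a : ι → ℝ}

lemma tendsto_heatSemigroup_of_ae (hw : Continuous w) (hM : ∀ x, |w x| ≤ M) {y : E2} {c : ℝ}
    (hlim : ∀ᵐ z : E2, Tendsto (fun n => w (y + exp (a n / 2) • z)) l (𝓝 c)) :
    Tendsto (fun n => heatSemigroup (a n) w y) l (𝓝 c) := by
  have hcont := continuous_heatProfile 0
  have hc : c = ∫ z : E2, heatProfile 0 (‖z‖ ^ 2) * c := by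
    rw [integral_mul_const, integral_heatProfile_norm_sq, exp_zero, one_mul]
  rw [hc]
  refine tendsto_integral_filter_of_dominated_convergence
    (fun z : E2 => M * heatProfile 0 (‖z‖ ^ 2))
    (Eventually.of_forall fun n => Continuous.aestronglyMeasurable (by fun_prop))
    (Eventually.of_forall fun n => Eventually.of_forall fun z => norm_heatProfile_mul_le hM _ _ _)
    ((integrable_heatProfile_norm_sq 0).const_mul M) ?_
  filter_upwards [hlim] with z hz using hz.const_mul _

lemma tendsto_heatSemigroup_atBot (hw : Continuous w) (hM : ∀ x, |w x| ≤ M)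
    (ha : Tendsto a l atBot) (y : E2) :
    Tendsto (fun n => heatSemigroup (a n) w y) l (𝓝 (w y)) := by
  refine tendsto_heatSemigroup_of_ae hw hM (Eventually.of_forall fun z => ?_)
  have hexp : Tendsto (fun n => exp (a n / 2)) l (𝓝 0) :=
    tendsto_exp_atBot.comp (ha.atBot_div_const two_pos)
  have hpoint := (hexp.smul_const z).const_add y
  rw [zero_smul, add_zero] at hpoint
  exact (hw.tendsto y).comp hpoint

lemma tendsto_heatSemigroup_atTop (hw : Continuous w) (hM : ∀ x, |w x| ≤ M)
    (hlim : Tendsto w (cocompact E2) (𝓝 0)) (ha : Tendsto a l atTop) (y : E2) :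
    Tendsto (fun n => heatSemigroup (a n) w y) l (𝓝 0) := by
  refine tendsto_heatSemigroup_of_ae hw hM ?_
  filter_upwards [ae_ne_zero] with z hz
  have hnorm : Tendsto (fun n => ‖exp (a n / 2) • z‖) l atTop := by
    simp only [norm_smul, norm_eq_abs, abs_exp]
    exact (tendsto_exp_atTop.comp (ha.atTop_div_const two_pos)).atTop_mul_const (norm_pos_iff.2 hz)
  rw [tendsto_norm_atTop_iff_cobounded, Metric.cobounded_eq_cocompact] at hnorm
  exact hlim.comp ((Homeomorph.addLeft y).isClosedEmbedding.tendsto_cocompact.comp hnorm)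

end Limits

lemma norm_fderiv_apply_le (hL : ∀ x, ‖fderiv ℝ w x‖ ≤ L) (x v : E2) :
    ‖fderiv ℝ w x v‖ ≤ L * ‖v‖ :=
  (fderiv ℝ w x).le_of_opNorm_le (hL x) v

lemma hasDerivAt_add_exp_half_smul (y z : E2) (t : ℝ) :
    HasDerivAt (fun t : ℝ => y + exp (t / 2) • z) ((exp (t / 2) / 2) • z) t := by
  have hexp : HasDerivAt (fun t : ℝ => exp (t / 2)) (exp (t / 2) / 2) t :=
    ((hasDerivAt_id t).div_const 2).exp.congr_deriv (by simp only [id]; ring)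
  exact (hexp.smul_const z).const_add y

lemma hasDerivAt_heatSemigroup_rescaled (hw : ContDiff ℝ 1 w) (hM : ∀ x, |w x| ≤ M)
    (hL : ∀ x, ‖fderiv ℝ w x‖ ≤ L) (y : E2) (τ : ℝ) :
    HasDerivAt (fun τ => heatSemigroup τ w y)
      (∫ z : E2, heatProfile 0 (‖z‖ ^ 2) *
        fderiv ℝ w (y + exp (τ / 2) • z) ((exp (τ / 2) / 2) • z)) τ := by
  have hL₀ : 0 ≤ L := (norm_nonneg _).trans (hL 0)
  have hcont := hw.continuous
  have := hw.continuous_fderiv one_ne_zero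
  have hprofile := continuous_heatProfile 0
  refine (hasDerivAt_integral_of_dominated_loc_of_deriv_le
    (F := fun τ (z : E2) => heatProfile 0 (‖z‖ ^ 2) * w (y + exp (τ / 2) • z))
    (F' := fun τ (z : E2) => heatProfile 0 (‖z‖ ^ 2) *
      fderiv ℝ w (y + exp (τ / 2) • z) ((exp (τ / 2) / 2) • z))
    (bound := fun z => L * (exp ((τ + 1) / 2) / 2) * (‖z‖ * heatProfile 0 (‖z‖ ^ 2)))
    (Metric.ball_mem_nhds τ one_pos)
    (Eventually.of_forall fun t => Continuous.aestronglyMeasurable (by fun_prop)) ?_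
    (Continuous.aestronglyMeasurable (by fun_prop)) (Eventually.of_forall fun z t ht => ?_)
    ((integrable_norm_mul_heatProfile 0).const_mul _) (Eventually.of_forall fun z t _ => ?_)).2
  · exact ((integrable_heatProfile_norm_sq 0).const_mul M).mono'
      (Continuous.aestronglyMeasurable (by fun_prop))
      (Eventually.of_forall fun z => norm_heatProfile_mul_le hM _ _ _)
  · have ht' : t ≤ τ + 1 := by
      linarith [(abs_lt.1 (Real.dist_eq t τ ▸ Metric.mem_ball.1 ht)).2]
    have hpos := heatProfile_pos 0 (‖z‖ ^ 2)
    rw [norm_mul, Real.norm_of_nonneg hpos.le]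
    calc heatProfile 0 (‖z‖ ^ 2) * ‖fderiv ℝ w (y + exp (t / 2) • z) ((exp (t / 2) / 2) • z)‖
      _ ≤ heatProfile 0 (‖z‖ ^ 2) * (L * ‖(exp (t / 2) / 2) • z‖) := by
        gcongr; exact norm_fderiv_apply_le hL _ _
      _ ≤ heatProfile 0 (‖z‖ ^ 2) * (L * (exp ((τ + 1) / 2) / 2 * ‖z‖)) := by
        rw [norm_smul, Real.norm_of_nonneg (by positivity)]; gcongr
      _ = _ := by ring
  · exact ((hw.differentiable one_ne_zero _).hasFDerivAt.comp_hasDerivAt t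
      (hasDerivAt_add_exp_half_smul y z t)).const_mul _

lemma hasDerivAt_heatSemigroup (hw : ContDiff ℝ 1 w) (hM : ∀ x, |w x| ≤ M)
    (hL : ∀ x, ‖fderiv ℝ w x‖ ≤ L) (y : E2) (τ : ℝ) :
    HasDerivAt (fun τ => heatSemigroup τ w y)
      (∫ x, exp (-τ) / 2 * heatProfile τ (‖x - y‖ ^ 2) * fderiv ℝ w x (x - y)) τ := by
  refine (hasDerivAt_heatSemigroup_rescaled hw hM hL y τ).congr_deriv ?_
  rw [integral_eq_sq_mul_integral_add_smul (fun x => exp (-τ) / 2 *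
    heatProfile τ (‖x - y‖ ^ 2) * fderiv ℝ w x (x - y)) y (exp_pos (τ / 2)).ne', exp_half_sq,
    ← integral_const_mul]
  refine integral_congr_ae (Eventually.of_forall fun z => ?_)
  have hexp : exp τ * exp (-τ) = 1 := by rw [← exp_add, add_neg_cancel, exp_zero]
  simp only [add_sub_cancel_left, heatProfile_norm_exp_smul, map_smul, smul_eq_mul]
  linear_combination (-(heatProfile 0 (‖z‖ ^ 2)) * exp (τ / 2) / 2 *
    fderiv ℝ w (y + exp (τ / 2) • z) z) * hexp

lemma integrable_heatSemigroup_deriv_prod (hw : ContDiff ℝ 1 w) (hL : ∀ x, ‖fderiv ℝ w x‖ ≤ L)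
    (y : E2) {A B : ℝ} (hAB : A ≤ B) :
    Integrable (Function.uncurry fun τ x =>
        exp (-τ) / 2 * heatProfile τ (‖x - y‖ ^ 2) * fderiv ℝ w x (x - y))
      ((volume.restrict (uIoc A B)).prod volume) := by
  have := hw.continuous_fderiv one_ne_zero
  have hprofile := continuous_uncurry_heatProfile
  have hfin : IsFiniteMeasure (volume.restrict (uIoc A B)) := by
    rw [uIoc_of_le hAB]; infer_instance
  have hbound : Integrable fun x => exp (-A) / 2 * L * (‖x - y‖ * heatProfile B (‖x - y‖ ^ 2)) :=
    ((integrable_norm_mul_heatProfile B).comp_sub_right y).const_mul _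
  refine (hbound.comp_snd (volume.restrict (uIoc A B))).mono' ?_ ?_
  · refine Continuous.aestronglyMeasurable (Continuous.mul (Continuous.mul (by fun_prop) ?_) ?_)
    · exact hprofile.comp (by fun_prop : Continuous fun p : ℝ × E2 => (p.1, ‖p.2 - y‖ ^ 2))
    · fun_prop
  · filter_upwards [Measure.quasiMeasurePreserving_fst.ae (ae_restrict_mem measurableSet_uIoc)]
      with ⟨τ, x⟩ hτ
    rw [uIoc_of_le hAB] at hτ
    have hpos := heatProfile_pos τ (‖x - y‖ ^ 2)
    rw [Function.uncurry_apply_pair, norm_mul, Real.norm_of_nonneg (by positivity)]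
    calc exp (-τ) / 2 * heatProfile τ (‖x - y‖ ^ 2) * ‖fderiv ℝ w x (x - y)‖
      _ ≤ exp (-A) / 2 * heatProfile B (‖x - y‖ ^ 2) * (L * ‖x - y‖) := by
        have hpos' := heatProfile_pos B (‖x - y‖ ^ 2)
        gcongr
        exacts [hτ.1.le, heatProfile_mono hτ.2 (sq_nonneg _), norm_fderiv_apply_le hL _ _]
      _ = _ := by ring

lemma heatSemigroup_sub (hw : ContDiff ℝ 1 w) (hM : ∀ x, |w x| ≤ M)
    (hL : ∀ x, ‖fderiv ℝ w x‖ ≤ L) (y : E2) {A B : ℝ} (hAB : A ≤ B) :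
    heatSemigroup B w y - heatSemigroup A w y =
      ∫ x, truncGreenSlope A B (‖x - y‖ ^ 2) * fderiv ℝ w x (x - y) := by
  have hprod := integrable_heatSemigroup_deriv_prod hw hL y hAB
  rw [← intervalIntegral.integral_eq_sub_of_hasDerivAt
    (fun τ _ => hasDerivAt_heatSemigroup hw hM hL y τ)
    (intervalIntegrable_iff.2 hprod.integral_prod_left), intervalIntegral_integral_swap hprod]
  simp only [intervalIntegral.integral_mul_const, truncGreenSlope]

end HeatSemigroup

/-! ### The truncated logarithmic potential -/

section TruncPotential

/-- The potential of `f` for the truncated Green function, an approximation of `(-Δ)⁻¹ f`. -/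
def truncPotential (A B : ℝ) (f : E2 → ℝ) (x : E2) : ℝ := ∫ y, f y * truncGreen A B (‖x - y‖ ^ 2)

/-- The derivative of the truncated potential, obtained by differentiating the kernel. -/
def truncPotentialDeriv (A B : ℝ) (f : E2 → ℝ) (x : E2) : E2 →L[ℝ] ℝ :=
  ∫ y, (-(f y * truncGreenSlope A B (‖x - y‖ ^ 2))) • innerSL ℝ (x - y)

/-- An integrable radial majorant of the norm of the gradient of the truncated Green function. -/
def slopeEnvelope (A B : ℝ) (x : E2) : ℝ :=
  (B - A) * (exp (-A) / 2) * (‖x‖ * heatProfile B (‖x‖ ^ 2))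

variable {A B C : ℝ}

lemma integrable_slopeEnvelope (A B : ℝ) : Integrable (slopeEnvelope A B) :=
  (integrable_norm_mul_heatProfile B).const_mul _

lemma exists_slopeEnvelope_le (hAB : A ≤ B) : ∃ C, ∀ x, slopeEnvelope A B x ≤ C := by
  obtain ⟨C, hC⟩ := exists_mul_heatProfile_le B
  have : 0 ≤ B - A := sub_nonneg.2 hAB
  exact ⟨(B - A) * (exp (-A) / 2) * C, fun x =>
    mul_le_mul_of_nonneg_left (hC ‖x‖) (by positivity)⟩

lemma truncGreenSlope_mul_norm_le (hAB : A ≤ B) (x : E2) :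
    truncGreenSlope A B (‖x‖ ^ 2) * ‖x‖ ≤ slopeEnvelope A B x := by
  calc truncGreenSlope A B (‖x‖ ^ 2) * ‖x‖
    _ ≤ (B - A) * (exp (-A) / 2 * heatProfile B (‖x‖ ^ 2)) * ‖x‖ := by
      gcongr; exact truncGreenSlope_le hAB (sq_nonneg _)
    _ = slopeEnvelope A B x := by rw [slopeEnvelope]; ring

lemma norm_smul_innerSL_le_slopeEnvelope (hAB : A ≤ B) (t : ℝ) (x : E2) :
    ‖(-(t * truncGreenSlope A B (‖x‖ ^ 2))) • innerSL ℝ x‖ ≤ ‖t‖ * slopeEnvelope A B x := by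
  rw [norm_smul, norm_neg, norm_mul, Real.norm_of_nonneg (truncGreenSlope_nonneg hAB _),
    innerSL_apply_norm, mul_assoc]
  gcongr
  exact truncGreenSlope_mul_norm_le hAB x

lemma hasFDerivAt_truncGreen_norm_sub_sq (A B : ℝ) (x y : E2) :
    HasFDerivAt (fun x : E2 => truncGreen A B (‖x - y‖ ^ 2))
      ((-truncGreenSlope A B (‖x - y‖ ^ 2)) • innerSL ℝ (x - y)) x := by
  have hnorm : HasFDerivAt (fun x : E2 => ‖x - y‖ ^ 2) ((2 : ℝ) • innerSL ℝ (x - y)) x := by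
    refine ((hasFDerivAt_id x).sub_const y).norm_sq.congr_fderiv ?_
    ext v
    simp
  refine ((hasDerivAt_truncGreen A B (‖x - y‖ ^ 2)).comp_hasFDerivAt x hnorm).congr_fderiv ?_
  rw [smul_smul]
  congr 1
  ring

lemma norm_mul_truncGreen_le (hAB : A ≤ B) (t : ℝ) (x : E2) :
    ‖t * truncGreen A B (‖x‖ ^ 2)‖ ≤ (B - A) * (1 / (4 * π)) * ‖t‖ := by
  rw [norm_mul, mul_comm, Real.norm_eq_abs (truncGreen A B _)]
  gcongr
  exact abs_truncGreen_le hAB (sq_nonneg _)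

lemma tendsto_truncGreen_norm_sub_sq_cocompact (hAB : A ≤ B) (y : E2) :
    Tendsto (fun x : E2 => truncGreen A B (‖x - y‖ ^ 2)) (cocompact E2) (𝓝 0) := by
  have hnorm : Tendsto (fun x : E2 => ‖x - y‖) (cocompact E2) atTop :=
    tendsto_norm_cocompact_atTop.comp
      (Homeomorph.subRight y).isClosedEmbedding.tendsto_cocompact
  have hexponent : Tendsto (fun x : E2 => exp (-B) / 4 * ‖x - y‖ ^ 2) (cocompact E2) atTop :=
    ((tendsto_pow_atTop two_ne_zero).comp hnorm).const_mul_atTop (by positivity)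
  have hmajorant := ((tendsto_exp_neg_atTop_nhds_zero.comp hexponent).const_mul
    (1 / (4 * π))).const_mul (B - A)
  rw [mul_zero, mul_zero] at hmajorant
  refine squeeze_zero (fun x => truncGreen_nonneg hAB _)
    (fun x => truncGreen_le hAB (sq_nonneg _)) (hmajorant.congr fun x => ?_)
  simp only [heatProfile, Function.comp, neg_mul]

variable {f : E2 → ℝ} (hf : Integrable f)
include hf

lemma aestronglyMeasurable_mul_truncGreen (A B : ℝ) (x : E2) :
    AEStronglyMeasurable fun y => f y * truncGreen A B (‖x - y‖ ^ 2) := by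
  have hcont := continuous_truncGreen A B
  exact hf.aestronglyMeasurable.mul (Continuous.aestronglyMeasurable (by fun_prop))

lemma integrable_mul_truncGreen (hAB : A ≤ B) (x : E2) :
    Integrable fun y => f y * truncGreen A B (‖x - y‖ ^ 2) :=
  (hf.norm.const_mul _).mono' (aestronglyMeasurable_mul_truncGreen hf A B x)
    (Eventually.of_forall fun _ => norm_mul_truncGreen_le hAB _ _)

lemma abs_truncPotential_le (hAB : A ≤ B) (x : E2) :
    |truncPotential A B f x| ≤ (B - A) * (1 / (4 * π)) * ∫ y, ‖f y‖ := by
  rw [← integral_const_mul]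
  exact norm_integral_le_of_norm_le (hf.norm.const_mul _)
    (Eventually.of_forall fun _ => norm_mul_truncGreen_le hAB _ _)

lemma aestronglyMeasurable_slope_smul_innerSL (A B : ℝ) (x : E2) :
    AEStronglyMeasurable fun y =>
      (-(f y * truncGreenSlope A B (‖x - y‖ ^ 2))) • innerSL ℝ (x - y) := by
  have hcont := continuous_truncGreenSlope A B
  exact (hf.aestronglyMeasurable.mul (Continuous.aestronglyMeasurable (by fun_prop))).neg.smul
    (Continuous.aestronglyMeasurable ((innerSL ℝ).continuous.comp (by fun_prop)))

lemma integrable_norm_mul_slopeEnvelope (hAB : A ≤ B) (x : E2) :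
    Integrable fun y => ‖f y‖ * slopeEnvelope A B (x - y) := by
  obtain ⟨C, hC⟩ := exists_slopeEnvelope_le hAB
  have hcont : Continuous (slopeEnvelope A B) := by
    have := continuous_heatProfile B
    unfold slopeEnvelope; fun_prop
  refine hf.norm.mul_bdd (c := C) (Continuous.aestronglyMeasurable (by fun_prop))
    (Eventually.of_forall fun y => ?_)
  have hnonneg : 0 ≤ slopeEnvelope A B (x - y) :=
    (mul_nonneg (truncGreenSlope_nonneg hAB _) (norm_nonneg _)).trans
      (truncGreenSlope_mul_norm_le hAB _)
  rw [Real.norm_of_nonneg hnonneg]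
  exact hC _

lemma integrable_slope_smul_innerSL (hAB : A ≤ B) (x : E2) :
    Integrable fun y => (-(f y * truncGreenSlope A B (‖x - y‖ ^ 2))) • innerSL ℝ (x - y) :=
  (integrable_norm_mul_slopeEnvelope hf hAB x).mono'
    (aestronglyMeasurable_slope_smul_innerSL hf A B x)
    (Eventually.of_forall fun _ => norm_smul_innerSL_le_slopeEnvelope hAB _ _)

lemma hasFDerivAt_truncPotential (hAB : A ≤ B) (x : E2) :
    HasFDerivAt (truncPotential A B f) (truncPotentialDeriv A B f x) x := by
  obtain ⟨C, hC⟩ := exists_slopeEnvelope_le hAB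
  refine hasFDerivAt_integral_of_dominated_of_fderiv_le
    (F := fun x y => f y * truncGreen A B (‖x - y‖ ^ 2))
    (F' := fun x y => (-(f y * truncGreenSlope A B (‖x - y‖ ^ 2))) • innerSL ℝ (x - y))
    (bound := fun y => ‖f y‖ * C) (Metric.ball_mem_nhds x one_pos)
    (Eventually.of_forall fun x => aestronglyMeasurable_mul_truncGreen hf A B x)
    (integrable_mul_truncGreen hf hAB x) (aestronglyMeasurable_slope_smul_innerSL hf A B x)
    (Eventually.of_forall fun y z _ => ?_) (hf.norm.mul_const C)
    (Eventually.of_forall fun y z _ => ?_)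
  · exact (norm_smul_innerSL_le_slopeEnvelope hAB _ _).trans
      (mul_le_mul_of_nonneg_left (hC _) (norm_nonneg _))
  · refine ((hasFDerivAt_truncGreen_norm_sub_sq A B z y).const_mul (f y)).congr_fderiv ?_
    rw [smul_smul, mul_neg]

lemma fderiv_truncPotential (hAB : A ≤ B) :
    fderiv ℝ (truncPotential A B f) = truncPotentialDeriv A B f :=
  funext fun x => (hasFDerivAt_truncPotential hf hAB x).fderiv

lemma continuous_truncPotentialDeriv (hAB : A ≤ B) : Continuous (truncPotentialDeriv A B f) := by
  obtain ⟨C, hC⟩ := exists_slopeEnvelope_le hAB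
  have hslope := continuous_truncGreenSlope A B
  refine continuous_of_dominated (bound := fun y => ‖f y‖ * C)
    (fun x => aestronglyMeasurable_slope_smul_innerSL hf A B x)
    (fun x => Eventually.of_forall fun y => ?_) (hf.norm.mul_const C)
    (Eventually.of_forall fun y => ?_)
  · exact (norm_smul_innerSL_le_slopeEnvelope hAB _ _).trans
      (mul_le_mul_of_nonneg_left (hC _) (norm_nonneg _))
  · have hscalar : Continuous fun x : E2 => -(f y * truncGreenSlope A B (‖x - y‖ ^ 2)) := by
      fun_prop
    exact hscalar.smul ((innerSL ℝ (E := E2)).continuous.comp (continuous_id.sub continuous_const))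

lemma contDiff_truncPotential (hAB : A ≤ B) : ContDiff ℝ 1 (truncPotential A B f) :=
  contDiff_one_iff_fderiv.2 ⟨fun x => (hasFDerivAt_truncPotential hf hAB x).differentiableAt,
    fderiv_truncPotential hf hAB ▸ continuous_truncPotentialDeriv hf hAB⟩

lemma norm_truncPotentialDeriv_le (hAB : A ≤ B) (x : E2) :
    ‖truncPotentialDeriv A B f x‖ ≤ ∫ y, ‖f y‖ * slopeEnvelope A B (x - y) :=
  norm_integral_le_of_norm_le (integrable_norm_mul_slopeEnvelope hf hAB x)
    (Eventually.of_forall fun _ => norm_smul_innerSL_le_slopeEnvelope hAB _ _)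

lemma exists_norm_truncPotentialDeriv_le (hAB : A ≤ B) :
    ∃ C, ∀ x, ‖truncPotentialDeriv A B f x‖ ≤ C := by
  obtain ⟨C, hC⟩ := exists_slopeEnvelope_le hAB
  refine ⟨∫ y, ‖f y‖ * C, fun x => (norm_truncPotentialDeriv_le hf hAB x).trans ?_⟩
  exact integral_mono (integrable_norm_mul_slopeEnvelope hf hAB x) (hf.norm.mul_const C)
    fun y => mul_le_mul_of_nonneg_left (hC _) (norm_nonneg _)

lemma integrable_prod_mul_slopeEnvelope (A B : ℝ) :
    Integrable (fun p : E2 × E2 => ‖f p.2‖ * slopeEnvelope A B (p.1 - p.2))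
      (volume.prod volume) :=
  hf.norm.convolution_integrand (ContinuousLinearMap.mul ℝ ℝ) (integrable_slopeEnvelope A B)

lemma integrable_norm_sq_truncPotentialDeriv (hAB : A ≤ B) :
    Integrable fun x => ‖truncPotentialDeriv A B f x‖ ^ 2 := by
  obtain ⟨C, hC⟩ := exists_norm_truncPotentialDeriv_le hf hAB
  refine ((integrable_prod_mul_slopeEnvelope hf A B).integral_prod_left.const_mul C).mono'
    ((continuous_truncPotentialDeriv hf hAB).norm.pow 2).aestronglyMeasurable
    (Eventually.of_forall fun x => ?_)
  rw [norm_pow, norm_norm, sq]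
  exact mul_le_mul (hC x) (norm_truncPotentialDeriv_le hf hAB x) (norm_nonneg _)
    ((norm_nonneg _).trans (hC x))

lemma tendsto_truncPotential_cocompact (hAB : A ≤ B) :
    Tendsto (truncPotential A B f) (cocompact E2) (𝓝 0) := by
  have : (cocompact E2).IsCountablyGenerated := by
    rw [← Metric.cobounded_eq_cocompact, ← comap_norm_atTop]; infer_instance
  rw [show (0 : ℝ) = ∫ y, f y * 0 by simp]
  refine tendsto_integral_filter_of_dominated_convergence
    (fun y => (B - A) * (1 / (4 * π)) * ‖f y‖)
    (Eventually.of_forall fun x => aestronglyMeasurable_mul_truncGreen hf A B x)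
    (Eventually.of_forall fun x => Eventually.of_forall fun y => norm_mul_truncGreen_le hAB _ _)
    (hf.norm.const_mul _) (Eventually.of_forall fun y => ?_)
  exact (tendsto_truncGreen_norm_sub_sq_cocompact hAB y).const_mul _

lemma truncPotentialDeriv_apply (hAB : A ≤ B) (x v : E2) :
    truncPotentialDeriv A B f x v =
      -∫ y, f y * truncGreenSlope A B (‖x - y‖ ^ 2) * inner ℝ (x - y) v := by
  rw [truncPotentialDeriv,
    ContinuousLinearMap.integral_apply (integrable_slope_smul_innerSL hf hAB x), ← integral_neg]
  simp only [smul_apply, innerSL_apply_apply, smul_eq_mul, neg_mul]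

end TruncPotential

/-! ### The energy of the truncated potential -/

section Energy

lemma norm_gradient {E : Type*} [NormedAddCommGroup E] [InnerProductSpace ℝ E] [CompleteSpace E]
    (w : E → ℝ) (x : E) : ‖gradient w x‖ = ‖fderiv ℝ w x‖ :=
  LinearIsometryEquiv.norm_map _ _

variable {A B C : ℝ} {f w : E2 → ℝ} {M L : ℝ}

lemma integrable_prod_slope_mul_fderiv (hAB : A ≤ B) (hf : Integrable f) (hw : ContDiff ℝ 1 w)
    (hL : ∀ x, ‖fderiv ℝ w x‖ ≤ L) :
    Integrable (Function.uncurry fun x y : E2 =>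
      f y * truncGreenSlope A B (‖x - y‖ ^ 2) * fderiv ℝ w x (x - y)) (volume.prod volume) := by
  have := hw.continuous_fderiv one_ne_zero
  have hslope := continuous_truncGreenSlope A B
  refine ((integrable_prod_mul_slopeEnvelope hf A B).const_mul L).mono' ?_
    (Eventually.of_forall fun ⟨x, y⟩ => ?_)
  · exact (hf.aestronglyMeasurable.comp_snd.mul
      (Continuous.aestronglyMeasurable (by fun_prop))).mul
      (Continuous.aestronglyMeasurable (Continuous.clm_apply (by fun_prop) (by fun_prop)))
  · have hnonneg := truncGreenSlope_nonneg hAB (‖x - y‖ ^ 2)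
    have hL₀ : 0 ≤ L := (norm_nonneg _).trans (hL 0)
    rw [Function.uncurry_apply_pair, norm_mul, norm_mul, Real.norm_of_nonneg hnonneg]
    calc ‖f y‖ * truncGreenSlope A B (‖x - y‖ ^ 2) * ‖fderiv ℝ w x (x - y)‖
      _ ≤ ‖f y‖ * truncGreenSlope A B (‖x - y‖ ^ 2) * (L * ‖x - y‖) := by
        gcongr; exact norm_fderiv_apply_le hL x _
      _ = L * (‖f y‖ * (truncGreenSlope A B (‖x - y‖ ^ 2) * ‖x - y‖)) := by ring
      _ ≤ L * (‖f y‖ * slopeEnvelope A B (x - y)) := by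
        gcongr; exact truncGreenSlope_mul_norm_le hAB _

/-- Truncating the Green function to the times `[e^A, e^B]` replaces `-Δ φ = f` by
`-Δ φ = P_A f - P_B f`. -/
lemma integral_truncPotentialDeriv_gradient (hAB : A ≤ B) (hf : Integrable f)
    (hw : ContDiff ℝ 1 w) (hM : ∀ x, |w x| ≤ M) (hL : ∀ x, ‖fderiv ℝ w x‖ ≤ L) :
    ∫ x, truncPotentialDeriv A B f x (gradient w x) =
      ∫ y, f y * (heatSemigroup A w y - heatSemigroup B w y) := by
  simp only [truncPotentialDeriv_apply hf hAB, inner_gradient_right,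
    RCLike.conj_to_real]
  rw [integral_neg, integral_integral_swap (integrable_prod_slope_mul_fderiv hAB hf hw hL),
    ← integral_neg]
  congr 1 with y
  rw [← neg_sub (heatSemigroup B w y), heatSemigroup_sub hw hM hL y hAB, mul_neg,
    ← integral_const_mul]
  simp only [mul_assoc]

lemma integrable_heatProfile_mul_heatProfile_prod (hAB : A ≤ B) (C : ℝ) (y z : E2) :
    Integrable (Function.uncurry fun τ x =>
      heatProfile C (‖x - y‖ ^ 2) * heatProfile τ (‖x - z‖ ^ 2))
      ((volume.restrict (uIoc A B)).prod (volume : Measure E2)) := by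
  have hfin : IsFiniteMeasure (volume.restrict (uIoc A B)) := by
    rw [uIoc_of_le hAB]; infer_instance
  have hbound : Integrable fun x => heatProfile C (‖x - y‖ ^ 2) * (1 / (4 * π)) :=
    ((integrable_heatProfile_norm_sq C).comp_sub_right y).mul_const _
  refine (hbound.comp_snd (volume.restrict (uIoc A B))).mono' ?_
    (Eventually.of_forall fun ⟨τ, x⟩ => ?_)
  · refine Continuous.aestronglyMeasurable ?_
    unfold Function.uncurry heatProfile; fun_prop
  · have hC := heatProfile_pos C (‖x - y‖ ^ 2)
    have hτ := heatProfile_pos τ (‖x - z‖ ^ 2)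
    rw [Function.uncurry_apply_pair, Real.norm_of_nonneg (by positivity)]
    gcongr
    exact heatProfile_le _ (sq_nonneg _)

lemma integral_heatProfile_mul_truncGreen (hAB : A ≤ B) (C : ℝ) (y z : E2) :
    exp (-C) * ∫ x, heatProfile C (‖x - y‖ ^ 2) * truncGreen A B (‖x - z‖ ^ 2) =
      truncGreen (logAddExp C A) (logAddExp C B) (‖y - z‖ ^ 2) := by
  simp only [truncGreen, ← intervalIntegral.integral_const_mul]
  rw [← intervalIntegral_integral_swap (integrable_heatProfile_mul_heatProfile_prod hAB C y z),
    ← intervalIntegral.integral_const_mul, ← intervalIntegral.integral_comp_mul_deriv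
      (fun τ _ => hasDerivAt_logAddExp C τ)
      (Continuous.div (by fun_prop) (by fun_prop) fun τ => by positivity).continuousOn
      (continuous_heatProfile_left _)]
  congr 1 with τ
  have hexp : exp (-C) * exp C = 1 := by rw [← exp_add, neg_add_cancel, exp_zero]
  rw [integral_heatProfile_mul_heatProfile, Function.comp]
  linear_combination (exp τ / (exp C + exp τ) * heatProfile (logAddExp C τ) (‖y - z‖ ^ 2)) * hexp

lemma integrable_prod_heatProfile_mul_truncGreen (hAB : A ≤ B) (C : ℝ) (hf : Integrable f)
    (y : E2) :
    Integrable (Function.uncurry fun x z : E2 =>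
      heatProfile C (‖x - y‖ ^ 2) * (f z * truncGreen A B (‖x - z‖ ^ 2)))
      (volume.prod volume) := by
  have hgreen := continuous_truncGreen A B
  have hprofile := continuous_heatProfile C
  refine ((((integrable_heatProfile_norm_sq C).comp_sub_right y).mul_prod hf).norm.const_mul
    ((B - A) * (1 / (4 * π)))).mono' ?_ (Eventually.of_forall fun ⟨x, z⟩ => ?_)
  · exact (Continuous.aestronglyMeasurable (by fun_prop)).mul
      (hf.aestronglyMeasurable.comp_snd.mul (Continuous.aestronglyMeasurable (by fun_prop)))
  · rw [Function.uncurry_apply_pair, ← mul_assoc]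
    exact norm_mul_truncGreen_le hAB _ _

lemma heatSemigroup_truncPotential (hAB : A ≤ B) (C : ℝ) (hf : Integrable f) (y : E2) :
    heatSemigroup C (truncPotential A B f) y =
      truncPotential (logAddExp C A) (logAddExp C B) f y := by
  rw [heatSemigroup_eq]
  simp only [truncPotential, ← integral_const_mul (heatProfile C _)]
  rw [integral_integral_swap (integrable_prod_heatProfile_mul_truncGreen hAB C hf y),
    ← integral_const_mul]
  congr 1 with z
  simp only [← integral_heatProfile_mul_truncGreen hAB C y z,
    mul_left_comm (heatProfile C _) (f z)]
  rw [integral_const_mul, mul_left_comm]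

/-- The quadratic form of the truncated Green function. -/
def greenForm (A B : ℝ) (f : E2 → ℝ) : ℝ := ∫ x, f x * truncPotential A B f x

lemma integrable_prod_mul_truncGreen (hAB : A ≤ B) (hf : Integrable f) :
    Integrable (fun p : E2 × E2 => f p.1 * (f p.2 * truncGreen A B (‖p.1 - p.2‖ ^ 2)))
      (volume.prod volume) := by
  have hgreen := continuous_truncGreen A B
  refine ((hf.mul_prod hf).norm.const_mul ((B - A) * (1 / (4 * π)))).mono'
    (hf.aestronglyMeasurable.comp_fst.mul
      (hf.aestronglyMeasurable.comp_snd.mul (Continuous.aestronglyMeasurable (by fun_prop))))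
    (Eventually.of_forall fun p => ?_)
  rw [← mul_assoc]
  exact norm_mul_truncGreen_le hAB _ _

lemma integrable_mul_truncPotential (hAB : A ≤ B) (hf : Integrable f) :
    Integrable fun x => f x * truncPotential A B f x := by
  simpa only [integral_const_mul, truncPotential] using
    (integrable_prod_mul_truncGreen hAB hf).integral_prod_left

lemma greenForm_eq_integral_prod (hAB : A ≤ B) (hf : Integrable f) :
    greenForm A B f = ∫ p : E2 × E2, f p.1 * (f p.2 * truncGreen A B (‖p.1 - p.2‖ ^ 2))
      ∂(volume.prod volume) := by
  rw [integral_prod _ (integrable_prod_mul_truncGreen hAB hf)]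
  simp only [integral_const_mul]
  rfl

lemma greenForm_add (hAB : A ≤ B) (hBC : B ≤ C) (hf : Integrable f) :
    greenForm A B f + greenForm B C f = greenForm A C f := by
  rw [greenForm_eq_integral_prod hAB hf, greenForm_eq_integral_prod hBC hf,
    greenForm_eq_integral_prod (hAB.trans hBC) hf,
    ← integral_add (integrable_prod_mul_truncGreen hAB hf) (integrable_prod_mul_truncGreen hBC hf)]
  congr 1 with p
  rw [← truncGreen_add A B C]
  ring

lemma add_log_two_le_logAddExp (hAB : A ≤ B) : A + log 2 ≤ logAddExp A B :=
  logAddExp_self A ▸ logAddExp_mono A hAB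

lemma logAddExp_le_add_log_two (hAB : A ≤ B) : logAddExp A B ≤ B + log 2 := by
  rw [← logAddExp_self, logAddExp_comm A B]
  exact logAddExp_mono B hAB

lemma integral_norm_sq_truncPotentialDeriv (hAB : A ≤ B) (hf : Integrable f) :
    ∫ x, ‖truncPotentialDeriv A B f x‖ ^ 2 =
      2 * greenForm (A + log 2) (logAddExp A B) f - greenForm (A + log 2) (B + log 2) f := by
  obtain ⟨L, hL⟩ := exists_norm_truncPotentialDeriv_le hf hAB
  have hfderiv := fderiv_truncPotential hf hAB
  have hbelow := add_log_two_le_logAddExp hAB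
  have habove := logAddExp_le_add_log_two hAB
  have hself (x : E2) : truncPotentialDeriv A B f x (gradient (truncPotential A B f) x) =
      ‖truncPotentialDeriv A B f x‖ ^ 2 := by
    rw [← hfderiv, ← inner_gradient_left, real_inner_self_eq_norm_sq, norm_gradient]
  have henergy := integral_truncPotentialDeriv_gradient hAB hf (contDiff_truncPotential hf hAB)
    (abs_truncPotential_le hf hAB) (hfderiv ▸ hL)
  simp only [hself, heatSemigroup_truncPotential hAB _ hf, mul_sub] at henergy
  rw [henergy, logAddExp_self, logAddExp_self, logAddExp_comm B A,
    integral_sub (integrable_mul_truncPotential hbelow hf)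
      (integrable_mul_truncPotential habove hf), ← greenForm_add hbelow habove hf]
  simp only [greenForm]
  ring

lemma ae_prod_sub_ne_zero :
    ∀ᵐ p ∂(volume : Measure E2).prod (volume : Measure E2), p.1 - p.2 ≠ 0 :=
  (quasiMeasurePreserving_sub volume volume).ae ae_ne_zero

lemma greenForm_eq_integral_prod_sub (hAB : A ≤ B) (hf : Integrable f) (hf₀ : ∫ x, f x = 0)
    (c : ℝ) :
    greenForm A B f = ∫ p : E2 × E2, f p.1 * (f p.2 * (truncGreen A B (‖p.1 - p.2‖ ^ 2) - c))
      ∂(volume.prod volume) := by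
  simp only [mul_sub, ← mul_assoc _ _ c]
  rw [integral_sub (integrable_prod_mul_truncGreen hAB hf) ((hf.mul_prod hf).mul_const c),
    ← greenForm_eq_integral_prod hAB hf, integral_mul_const, integral_prod_mul, hf₀]
  ring

lemma integral_mul_invLap2_eq_integral_prod
    (hlog : Integrable (fun p : E2 × E2 => f p.1 * (f p.2 * log ‖p.1 - p.2‖))
      (volume.prod volume)) :
    ∫ x, f x * invLap2 f x = ∫ p : E2 × E2, f p.1 * (f p.2 * (-(1 / (2 * π)) *
      log ‖p.1 - p.2‖)) ∂(volume.prod volume) := by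
  simp only [mul_left_comm _ (-(1 / (2 * π)))]
  rw [integral_const_mul, integral_prod _ hlog, ← integral_const_mul]
  congr 1 with x
  simp only [invLap2, integral_const_mul, mul_comm (f _) (log _)]
  ring

section Limits

variable {ι : Type*} {l : Filter ι} [l.IsCountablyGenerated] {a b : ι → ℝ}
  (hf : Integrable f) (hf₀ : ∫ x, f x = 0)
  (hlog : Integrable (fun p : E2 × E2 => f p.1 * (f p.2 * log ‖p.1 - p.2‖)) (volume.prod volume))
  (hab : ∀ n, a n ≤ b n) (ha : Tendsto a l atBot) (hb : Tendsto b l atTop)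
include hf hf₀ hlog hab ha hb

/-- Since `∫ f = 0`, the diverging constant `truncGreen a b 1` may be subtracted from the kernel. -/
lemma tendsto_greenForm :
    Tendsto (fun n => greenForm (a n) (b n) f) l (𝓝 (∫ x, f x * invLap2 f x)) := by
  simp only [fun n => greenForm_eq_integral_prod_sub (hab n) hf hf₀ (truncGreen (a n) (b n) 1)]
  rw [integral_mul_invLap2_eq_integral_prod hlog]
  refine tendsto_integral_filter_of_dominated_convergence
    (fun p => 1 / (2 * π) * ‖f p.1 * (f p.2 * log ‖p.1 - p.2‖)‖)
    (Eventually.of_forall fun n => ?_) (Eventually.of_forall fun n => ?_)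
    (hlog.norm.const_mul _) ?_
  · have hgreen := continuous_truncGreen (a n) (b n)
    exact hf.aestronglyMeasurable.comp_fst.mul
      (hf.aestronglyMeasurable.comp_snd.mul (Continuous.aestronglyMeasurable (by fun_prop)))
  · filter_upwards [ae_prod_sub_ne_zero] with p hp
    simp only [norm_mul]
    rw [mul_left_comm (1 / (2 * π)), mul_left_comm (1 / (2 * π))]
    gcongr
    exact abs_truncGreen_sub_le (hab n) (norm_pos_iff.2 hp)
  · filter_upwards [ae_prod_sub_ne_zero] with p hp
    exact ((tendsto_truncGreen_sub hab ha hb (norm_pos_iff.2 hp)).const_mul _).const_mul _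

lemma tendsto_integral_norm_sq_truncPotentialDeriv :
    Tendsto (fun n => ∫ x, ‖truncPotentialDeriv (a n) (b n) f x‖ ^ 2) l
      (𝓝 (∫ x, f x * invLap2 f x)) := by
  have ha' : Tendsto (fun n => a n + log 2) l atBot := tendsto_atBot_add_const_right _ _ ha
  have hinner := tendsto_greenForm hf hf₀ hlog (fun n => add_log_two_le_logAddExp (hab n)) ha'
    (tendsto_atTop_mono (fun n => le_logAddExp _ _) hb)
  have houter := tendsto_greenForm hf hf₀ hlog (fun n => add_le_add_left (hab n) (log 2)) ha'
    (tendsto_atTop_add_const_right _ _ hb)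
  have hlim := (hinner.const_mul 2).sub houter
  rw [two_mul, add_sub_cancel_right] at hlim
  exact hlim.congr fun n => (integral_norm_sq_truncPotentialDeriv (hab n) hf).symm

end Limits

end Energy

/-! ### Logarithmic energy of densities dominated by `μ_α` -/

/-- The truncated Riesz-type kernel `|z| ^ (β - 2) 1_{|z| < 1}`, integrable on the plane for
`0 < β`; it majorizes the logarithmic singularity against a power weight. -/
def localPower (β : ℝ) : E2 → ℝ :=
  (Metric.ball 0 1).indicator fun z => ‖z‖ ^ (β - 2)

lemma localPower_nonneg (β : ℝ) (z : E2) : 0 ≤ localPower β z :=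
  indicator_nonneg (fun _ _ => rpow_nonneg (norm_nonneg _) _) z

lemma localPower_neg (β : ℝ) (z : E2) : localPower β (-z) = localPower β z := by
  simp [localPower, indicator]

lemma localPower_of_norm_lt_one (β : ℝ) {z : E2} (hz : ‖z‖ < 1) :
    localPower β z = ‖z‖ ^ (β - 2) :=
  indicator_of_mem (by simpa using hz) _

lemma integrable_localPower {β : ℝ} (hβ : 0 < β) : Integrable (localPower β) := by
  refine IntegrableOn.integrable_indicator ?_ measurableSet_ball
  refine integrableOn_ball_of_norm_le_rpow (α := 2 - β) (C := 1) (by simp) (by simpa using hβ)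
    (Eventually.of_forall fun x => ?_) (measurable_norm.pow_const _).aestronglyMeasurable
  rw [norm_of_nonneg (rpow_nonneg (norm_nonneg x) _), one_mul, neg_sub]

lemma norm_rpow_mul_norm_rpow_le {β : ℝ} (hβ : 0 < β) (hβ' : β ≤ 1) {y z : E2} (hy : y ≠ 0)
    (hz : z ≠ 0) (hz1 : ‖z‖ < 1) :
    ‖y‖ ^ (2 * β - 2) * ‖z‖ ^ (-β) ≤ localPower β z + localPower β y := by
  have hsplit {t : ℝ} (ht : 0 < t) : t ^ (2 * β - 2) * t ^ (-β) = t ^ (β - 2) := by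
    rw [← rpow_add ht]; congr 1; ring
  have hz₀ := norm_pos_iff.2 hz
  have hy₀ := norm_pos_iff.2 hy
  rcases le_total ‖z‖ ‖y‖ with hzy | hyz
  · calc ‖y‖ ^ (2 * β - 2) * ‖z‖ ^ (-β)
        ≤ ‖z‖ ^ (2 * β - 2) * ‖z‖ ^ (-β) := by
          gcongr ?_ * _
          exact rpow_le_rpow_of_nonpos hz₀ hzy (by linarith)
      _ = localPower β z := by rw [hsplit hz₀, localPower_of_norm_lt_one β hz1]
      _ ≤ localPower β z + localPower β y := le_add_of_nonneg_right (localPower_nonneg β y)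
  · calc ‖y‖ ^ (2 * β - 2) * ‖z‖ ^ (-β)
        ≤ ‖y‖ ^ (2 * β - 2) * ‖y‖ ^ (-β) := by
          gcongr _ * ?_
          exact rpow_le_rpow_of_nonpos hy₀ hyz (by linarith)
      _ = localPower β y := by
          rw [hsplit hy₀, localPower_of_norm_lt_one β (hyz.trans_lt hz1)]
      _ ≤ localPower β z + localPower β y := le_add_of_nonneg_left (localPower_nonneg β z)

lemma abs_log_le_rpow_neg_div {r β : ℝ} (hβ : 0 < β) (hr : 0 < r) (hr1 : r ≤ 1) :
    |log r| ≤ r ^ (-β) / β := by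
  have h := log_le_rpow_div (inv_nonneg.2 hr.le) hβ
  rwa [log_inv, inv_rpow hr.le, ← rpow_neg hr.le, ← abs_of_nonpos (log_nonpos hr.le hr1)] at h

section MuAlphaLog

variable {α : ℝ}

lemma muAlpha_le_norm_rpow (hα : -1 < α) (x : E2) :
    muAlpha α x ≤ (1 + α) / π * ‖x‖ ^ (2 * (1 + α) - 2) := by
  have hα₀ : 0 < 1 + α := by linarith
  have hpow := rpow_nonneg (norm_nonneg x) (2 * (1 + α))
  rw [muAlpha, show 2 * (1 + α) - 2 = 2 * α by ring]
  exact div_le_self (by positivity) (one_le_pow₀ (by linarith))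

lemma muAlpha_mul_abs_log_le_of_norm_lt_one (hα : -1 < α) (hα' : α ≤ 0) {x y : E2}
    (hy : y ≠ 0) (hxy : x - y ≠ 0) (hlt : ‖x - y‖ < 1) :
    muAlpha α y * |log ‖x - y‖| ≤
      1 / π * (localPower (1 + α) (x - y) + localPower (1 + α) y) := by
  have hα₀ : 0 < 1 + α := by linarith
  calc muAlpha α y * |log ‖x - y‖|
      ≤ (1 + α) / π * ‖y‖ ^ (2 * (1 + α) - 2) * (‖x - y‖ ^ (-(1 + α)) / (1 + α)) := by
        gcongr
        · exact muAlpha_le_norm_rpow hα y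
        · exact abs_log_le_rpow_neg_div hα₀ (norm_pos_iff.2 hxy) hlt.le
    _ = 1 / π * (‖y‖ ^ (2 * (1 + α) - 2) * ‖x - y‖ ^ (-(1 + α))) := by field_simp
    _ ≤ _ := by
        gcongr
        exact norm_rpow_mul_norm_rpow_le hα₀ (by linarith) hy hxy hlt

lemma muAlpha_mul_abs_log_le_of_one_le_norm (hα : -1 < α) (hα' : α ≤ 0) {x y : E2}
    (hle : 1 ≤ ‖x - y‖) :
    muAlpha α y * |log ‖x - y‖| ≤
      1 / (1 + α) * (‖x‖ ^ (1 + α) * muAlpha α y + ‖y‖ ^ (1 + α) * muAlpha α y) := by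
  have hα₀ : 0 < 1 + α := by linarith
  have hμ := muAlpha_nonneg hα y
  have hsub : ‖x - y‖ ^ (1 + α) ≤ ‖x‖ ^ (1 + α) + ‖y‖ ^ (1 + α) :=
    (rpow_le_rpow (norm_nonneg _) (norm_sub_le x y) hα₀.le).trans
      (rpow_add_le_add_rpow (norm_nonneg x) (norm_nonneg y) hα₀.le (by linarith))
  calc muAlpha α y * |log ‖x - y‖|
      ≤ muAlpha α y * (‖x - y‖ ^ (1 + α) / (1 + α)) := by
        rw [abs_of_nonneg (log_nonneg hle)]
        gcongr
        exact log_le_rpow_div (norm_nonneg _) hα₀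
    _ ≤ muAlpha α y * ((‖x‖ ^ (1 + α) + ‖y‖ ^ (1 + α)) / (1 + α)) := by gcongr
    _ = _ := by ring

/-- The majorant of `μ_α(y) |log |x - y||`: the first bracket controls the singularity on the
diagonal, the second the growth at infinity. -/
def muAlphaLogMajorant (α : ℝ) (x y : E2) : ℝ :=
  1 / π * (localPower (1 + α) (x - y) + localPower (1 + α) y) +
    1 / (1 + α) * (‖x‖ ^ (1 + α) * muAlpha α y + ‖y‖ ^ (1 + α) * muAlpha α y)

lemma muAlpha_mul_abs_log_le (hα : -1 < α) (hα' : α ≤ 0) {x y : E2} (hy : y ≠ 0)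
    (hxy : x - y ≠ 0) : muAlpha α y * |log ‖x - y‖| ≤ muAlphaLogMajorant α x y := by
  have hα₀ : 0 < 1 + α := by linarith
  have hμ := muAlpha_nonneg hα y
  rcases lt_or_ge ‖x - y‖ 1 with hlt | hge
  · exact (muAlpha_mul_abs_log_le_of_norm_lt_one hα hα' hy hxy hlt).trans
      (le_add_of_nonneg_right (by positivity))
  · have hdiag := add_nonneg (localPower_nonneg (1 + α) (x - y)) (localPower_nonneg (1 + α) y)
    exact (muAlpha_mul_abs_log_le_of_one_le_norm hα hα' hge).trans
      (le_add_of_nonneg_left (by positivity))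

lemma integrable_muAlpha_mul_muAlphaLogMajorant (hα : -1 < α) (hα' : α ≤ 0) :
    Integrable (fun p : E2 × E2 => muAlpha α p.1 * muAlphaLogMajorant α p.1 p.2)
      (volume.prod volume) := by
  have hμ := integrable_muAlpha hα hα'
  have hmom := integrable_norm_rpow_mul_muAlpha hα hα'
  have hker : Integrable (localPower (1 + α)) := integrable_localPower (by linarith)
  have hdiag : Integrable (fun p : E2 × E2 => muAlpha α p.1 * localPower (1 + α) (p.1 - p.2))
      (volume.prod volume) := by
    refine (hμ.convolution_integrand (ContinuousLinearMap.mul ℝ ℝ) hker).swap.congr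
      (Eventually.of_forall fun p => ?_)
    simp only [Function.comp_apply, Prod.fst_swap, Prod.snd_swap,
      ContinuousLinearMap.mul_apply', ← localPower_neg _ (p.2 - p.1), neg_sub]
  have hsum := ((hdiag.add (hμ.mul_prod hker)).const_mul (1 / π)).add
    (((hmom.mul_prod hμ).add (hμ.mul_prod hmom)).const_mul (1 / (1 + α)))
  refine hsum.congr (Eventually.of_forall fun p => ?_)
  simp only [Pi.add_apply, muAlphaLogMajorant]
  ring

lemma integrable_prod_mul_log_of_abs_le_muAlpha (hα : -1 < α) (hα' : α ≤ 0) {f : E2 → ℝ} {C : ℝ}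
    (hf : AEStronglyMeasurable f) (hC : ∀ x, |f x| ≤ C * muAlpha α x) :
    Integrable (fun p : E2 × E2 => f p.1 * (f p.2 * log ‖p.1 - p.2‖)) (volume.prod volume) := by
  refine ((integrable_muAlpha_mul_muAlphaLogMajorant hα hα').const_mul (C * C)).mono' ?_ ?_
  · have hlog : Measurable fun p : E2 × E2 => log ‖p.1 - p.2‖ := measurable_log.comp (by fun_prop)
    exact hf.comp_fst.mul (hf.comp_snd.mul hlog.aestronglyMeasurable)
  · have hsnd : ∀ᵐ p ∂((volume : Measure E2).prod (volume : Measure E2)), p.2 ≠ 0 :=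
      Measure.quasiMeasurePreserving_snd.ae ae_ne_zero
    filter_upwards [ae_prod_sub_ne_zero, hsnd] with p hp hp₂
    have hμ := muAlpha_nonneg hα p.1
    have hC₁ : 0 ≤ C * muAlpha α p.1 := (abs_nonneg _).trans (hC _)
    have : 0 ≤ C * muAlpha α p.2 := (abs_nonneg _).trans (hC _)
    rw [norm_mul, norm_mul, norm_eq_abs, norm_eq_abs, norm_eq_abs]
    calc |f p.1| * (|f p.2| * |log ‖p.1 - p.2‖|)
        ≤ C * muAlpha α p.1 * (C * muAlpha α p.2 * |log ‖p.1 - p.2‖|) := by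
          gcongr <;> exact hC _
      _ = C * C * (muAlpha α p.1 * (muAlpha α p.2 * |log ‖p.1 - p.2‖|)) := by ring
      _ ≤ C * C * (muAlpha α p.1 * muAlphaLogMajorant α p.1 p.2) := by
          have := mul_self_nonneg C
          gcongr
          exact muAlpha_mul_abs_log_le hα hα' hp₂ hp

end MuAlphaLog

/-! ### Gibbs densities and the Gibbs variational principle -/

/-- The probability density `e^ψ w / ∫ e^ψ w dν`, i.e. the weight `w` tilted by `ψ`. -/
def gibbsDensity {X : Type*} [MeasurableSpace X] (ν : Measure X) (w ψ : X → ℝ) (x : X) : ℝ :=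
  exp (ψ x) * w x / ∫ y, exp (ψ y) * w y ∂ν

section GibbsDensity

variable {X : Type*} [MeasurableSpace X] {ν : Measure X} {w ψ χ : X → ℝ} {M N : ℝ}

lemma gibbsDensity_nonneg (hw₀ : ∀ x, 0 ≤ w x) (x : X) : 0 ≤ gibbsDensity ν w ψ x :=
  div_nonneg (mul_nonneg (exp_pos _).le (hw₀ x))
    (integral_nonneg fun y => mul_nonneg (exp_pos _).le (hw₀ y))

lemma abs_gibbsDensity_sub_le (hw₀ : ∀ x, 0 ≤ w x) (hM : ∀ x, |ψ x| ≤ M) (x : X) :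
    |gibbsDensity ν w ψ x - w x| ≤ (exp M / (∫ y, exp (ψ y) * w y ∂ν) + 1) * w x := by
  have hZ : 0 ≤ ∫ y, exp (ψ y) * w y ∂ν :=
    integral_nonneg fun y => mul_nonneg (exp_pos _).le (hw₀ y)
  have hx := hw₀ x
  have hle : gibbsDensity ν w ψ x ≤ exp M / (∫ y, exp (ψ y) * w y ∂ν) * w x := by
    rw [gibbsDensity, div_mul_eq_mul_div]
    gcongr
    exact (le_abs_self _).trans (hM x)
  have hnonneg : 0 ≤ gibbsDensity ν w ψ x := gibbsDensity_nonneg hw₀ x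
  rw [abs_le]
  constructor <;> linarith

variable (hw : Integrable w ν) (hψ : AEStronglyMeasurable ψ ν) (hM : ∀ x, |ψ x| ≤ M)
include hw hψ hM

lemma integrable_gibbsDensity : Integrable (gibbsDensity ν w ψ) ν :=
  (integrable_exp_mul hw hψ hM).div_const _

lemma integrable_gibbsDensity_mul (hχ : AEStronglyMeasurable χ ν) (hN : ∀ x, |χ x| ≤ N) :
    Integrable (fun x => gibbsDensity ν w ψ x * χ x) ν :=
  (integrable_gibbsDensity hw hψ hM).mul_bdd hχ (Eventually.of_forall hN)

variable (hw₀ : ∀ x, 0 ≤ w x) (hpos : 0 < ∫ x, w x ∂ν)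
include hw₀ hpos

lemma integral_gibbsDensity : ∫ x, gibbsDensity ν w ψ x ∂ν = 1 := by
  simp only [gibbsDensity]
  rw [integral_div, div_self (integral_exp_mul_pos hw hw₀ hpos hψ hM).ne']

lemma integral_gibbsDensity_mul_log :
    ∫ x, gibbsDensity ν w ψ x * log (gibbsDensity ν w ψ x / w x) ∂ν =
      (∫ x, gibbsDensity ν w ψ x * ψ x ∂ν) - log (∫ x, exp (ψ x) * w x ∂ν) := by
  set Z := ∫ x, exp (ψ x) * w x ∂ν with hZ_def
  have hZ : 0 < Z := integral_exp_mul_pos hw hw₀ hpos hψ hM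
  have hpoint (x : X) : gibbsDensity ν w ψ x * log (gibbsDensity ν w ψ x / w x) =
      gibbsDensity ν w ψ x * ψ x - gibbsDensity ν w ψ x * log Z := by
    rcases eq_or_ne (w x) 0 with hx | hx
    · simp [gibbsDensity, hx]
    · have hratio : gibbsDensity ν w ψ x / w x = exp (ψ x) / Z := by
        rw [gibbsDensity, ← hZ_def]; field_simp
      rw [hratio, log_div (exp_pos _).ne' hZ.ne', log_exp, mul_sub]
  simp only [hpoint]
  rw [integral_sub (integrable_gibbsDensity_mul hw hψ hM hψ hM)
      ((integrable_gibbsDensity hw hψ hM).mul_const _), integral_mul_const,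
    integral_gibbsDensity hw hψ hM hw₀ hpos, one_mul]

lemma integral_gibbsDensity_mul_sub_log_le (hχ : AEStronglyMeasurable χ ν)
    (hN : ∀ x, |χ x| ≤ N) :
    (∫ x, gibbsDensity ν w ψ x * χ x ∂ν) - log (∫ x, exp (χ x) * w x ∂ν) ≤
      (∫ x, gibbsDensity ν w ψ x * ψ x ∂ν) - log (∫ x, exp (ψ x) * w x ∂ν) := by
  set Z := ∫ x, exp (ψ x) * w x ∂ν with hZ_def
  set W := ∫ x, exp (χ x) * w x ∂ν with hW_def
  have hZ : 0 < Z := integral_exp_mul_pos hw hw₀ hpos hψ hM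
  have hW : 0 < W := integral_exp_mul_pos hw hw₀ hpos hχ hN
  have htilt (x : X) : gibbsDensity ν w χ x =
      gibbsDensity ν w ψ x * exp (χ x - ψ x + (log Z - log W)) := by
    rw [gibbsDensity, gibbsDensity, ← hZ_def, ← hW_def, exp_add, exp_sub, exp_sub, exp_log hZ,
      exp_log hW]
    field_simp
  have hpoint (x : X) : gibbsDensity ν w ψ x * χ x - gibbsDensity ν w ψ x * ψ x +
      gibbsDensity ν w ψ x * (log Z - log W + 1) ≤ gibbsDensity ν w χ x := by
    have h := mul_le_mul_of_nonneg_left (add_one_le_exp (χ x - ψ x + (log Z - log W)))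
      (gibbsDensity_nonneg (ν := ν) (ψ := ψ) hw₀ x)
    rw [htilt]
    linarith
  have hint := integrable_gibbsDensity hw hψ hM
  have hintχ := integrable_gibbsDensity_mul hw hψ hM hχ hN
  have hintψ := integrable_gibbsDensity_mul hw hψ hM hψ hM
  have hle := integral_mono ((hintχ.sub hintψ).add (hint.mul_const (log Z - log W + 1)))
    (integrable_gibbsDensity hw hχ hN) hpoint
  rw [integral_add' (hintχ.sub hintψ) (hint.mul_const _), integral_sub' hintχ hintψ,
    integral_mul_const, integral_gibbsDensity hw hψ hM hw₀ hpos,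
    integral_gibbsDensity hw hχ hN hw₀ hpos] at hle
  linarith

end GibbsDensity

/-! ### Duality between the Dirichlet energy and the logarithmic energy -/

section Duality

variable {f u : E2 → ℝ} {A B M L c : ℝ}

lemma clm_apply_le_sq_add_sq {E : Type*} [NormedAddCommGroup E] [NormedSpace ℝ E]
    (hc : 0 < c) (ℓ : E →L[ℝ] ℝ) (x : E) :
    |ℓ x| ≤ c * ‖ℓ‖ ^ 2 + 1 / (4 * c) * ‖x‖ ^ 2 := by
  have hsq : c * ‖ℓ‖ ^ 2 + 1 / (4 * c) * ‖x‖ ^ 2 - ‖ℓ‖ * ‖x‖ =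
      c * (‖ℓ‖ - ‖x‖ / (2 * c)) ^ 2 := by
    field_simp; ring
  have hnonneg : 0 ≤ c * (‖ℓ‖ - ‖x‖ / (2 * c)) ^ 2 := by positivity
  have hop : |ℓ x| ≤ ‖ℓ‖ * ‖x‖ := ℓ.le_opNorm x
  linarith

lemma integral_mul_heatSemigroup_sub_le (hAB : A ≤ B) (hf : Integrable f) (hu : ContDiff ℝ 1 u)
    (hM : ∀ x, |u x| ≤ M) (hL : ∀ x, ‖fderiv ℝ u x‖ ≤ L)
    (henergy : Integrable fun x => ‖gradient u x‖ ^ 2) (hc : 0 < c) :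
    ∫ y, f y * (heatSemigroup A u y - heatSemigroup B u y) ≤
      c * (∫ x, ‖truncPotentialDeriv A B f x‖ ^ 2) + 1 / (4 * c) * ∫ x, ‖gradient u x‖ ^ 2 := by
  have hφ := (integrable_norm_sq_truncPotentialDeriv hf hAB).const_mul c
  have hgrad := henergy.const_mul (1 / (4 * c))
  rw [← integral_truncPotentialDeriv_gradient hAB hf hu hM hL, ← integral_const_mul,
    ← integral_const_mul, ← integral_add hφ hgrad]
  exact (le_norm_self _).trans (norm_integral_le_of_norm_le (hφ.add hgrad)
    (Eventually.of_forall fun x => clm_apply_le_sq_add_sq hc _ _))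

lemma tendsto_integral_mul_heatSemigroup_sub {ι : Type*} {l : Filter ι} [l.IsCountablyGenerated]
    {a b : ι → ℝ} (hf : Integrable f) (hu : Continuous u) (hM : ∀ x, |u x| ≤ M)
    (hlim : Tendsto u (cocompact E2) (𝓝 0)) (ha : Tendsto a l atBot) (hb : Tendsto b l atTop) :
    Tendsto (fun n => ∫ y, f y * (heatSemigroup (a n) u y - heatSemigroup (b n) u y)) l
      (𝓝 (∫ y, f y * u y)) := by
  refine tendsto_integral_filter_of_dominated_convergence (fun y => ‖f y‖ * (M + M))
    (Eventually.of_forall fun n => hf.aestronglyMeasurable.mul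
      ((aestronglyMeasurable_heatSemigroup hu _).sub (aestronglyMeasurable_heatSemigroup hu _)))
    (Eventually.of_forall fun n => Eventually.of_forall fun y => ?_) (hf.norm.mul_const _)
    (Eventually.of_forall fun y => ?_)
  · rw [norm_mul]
    gcongr
    exact (norm_sub_le _ _).trans
      (add_le_add (abs_heatSemigroup_le hM _ y) (abs_heatSemigroup_le hM _ y))
  · simpa only [sub_zero] using ((tendsto_heatSemigroup_atBot hu hM ha y).sub
      (tendsto_heatSemigroup_atTop hu hM hlim hb y)).const_mul (f y)

lemma neg_natCast_le_natCast (n : ℕ) : -(n : ℝ) ≤ n := neg_le_self n.cast_nonneg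

lemma tendsto_neg_natCast_atBot : Tendsto (fun n : ℕ => -(n : ℝ)) atTop atBot :=
  tendsto_neg_atTop_atBot.comp tendsto_natCast_atTop_atTop

lemma integral_mul_le_integral_mul_invLap2_add (hf : Integrable f) (hf₀ : ∫ x, f x = 0)
    (hlog : Integrable (fun p : E2 × E2 => f p.1 * (f p.2 * log ‖p.1 - p.2‖))
      (volume.prod volume))
    (hu : ContDiff ℝ 1 u) (hM : ∀ x, |u x| ≤ M) (hL : ∀ x, ‖fderiv ℝ u x‖ ≤ L)
    (hlim : Tendsto u (cocompact E2) (𝓝 0)) (henergy : Integrable fun x => ‖gradient u x‖ ^ 2)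
    (hc : 0 < c) :
    ∫ x, f x * u x ≤ c * (∫ x, f x * invLap2 f x) + 1 / (4 * c) * ∫ x, ‖gradient u x‖ ^ 2 :=
  le_of_tendsto_of_tendsto'
    (tendsto_integral_mul_heatSemigroup_sub hf hu.continuous hM hlim tendsto_neg_natCast_atBot
      tendsto_natCast_atTop_atTop)
    (((tendsto_integral_norm_sq_truncPotentialDeriv hf hf₀ hlog neg_natCast_le_natCast
      tendsto_neg_natCast_atBot tendsto_natCast_atTop_atTop).const_mul c).add_const _)
    fun n => integral_mul_heatSemigroup_sub_le (neg_natCast_le_natCast n) hf hu hM hL henergy hc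

end Duality

section Main

variable {α : ℝ} {u : E2 → ℝ} {A B M : ℝ}

lemma log_integral_exp_truncPotential_muAlpha_le (hα : -1 < α) (hα' : α ≤ 0) (hAB : A ≤ B)
    {f : E2 → ℝ} (hf : Integrable f) (t : ℝ) :
    log (∫ x, exp (t * truncPotential A B f x) * muAlpha α x) ≤
      t ^ 2 / (16 * π * (1 + α)) * (∫ x, ‖truncPotentialDeriv A B f x‖ ^ 2) +
        t * ∫ x, truncPotential A B f x * muAlpha α x := by
  have hsq (x : E2) : ‖fderiv ℝ (fun x => t * truncPotential A B f x) x‖ ^ 2 =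
      t ^ 2 * ‖truncPotentialDeriv A B f x‖ ^ 2 := by
    rw [((hasFDerivAt_truncPotential hf hAB x).const_mul t).fderiv, norm_smul, mul_pow,
      norm_eq_abs, sq_abs]
  have hlim := (tendsto_truncPotential_cocompact hf hAB).const_mul t
  rw [mul_zero] at hlim
  have henergy : Integrable fun x => ‖fderiv ℝ (fun x => t * truncPotential A B f x) x‖ ^ 2 := by
    simpa only [hsq] using (integrable_norm_sq_truncPotentialDeriv hf hAB).const_mul (t ^ 2)
  have honofri := log_integral_exp_muAlpha_le hα hα'
    (contDiff_const.mul (contDiff_truncPotential hf hAB)) hlim henergy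
  simp only [hsq, mul_assoc t] at honofri
  rw [integral_const_mul, integral_const_mul, ← mul_assoc, one_div_mul_eq_div] at honofri
  exact honofri

lemma greenForm_gibbsDensity_sub_le (hα : -1 < α) (hα' : α ≤ 0) (hAB : A ≤ B)
    (hu : AEStronglyMeasurable u) (hM : ∀ x, |u x| ≤ M) :
    2 * (4 * π * (1 + α)) *
        greenForm A B (fun x => gibbsDensity volume (muAlpha α) u x - muAlpha α x) -
      4 * π * (1 + α) * (∫ x, ‖truncPotentialDeriv A B
        (fun x => gibbsDensity volume (muAlpha α) u x - muAlpha α x) x‖ ^ 2) ≤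
      (∫ x, gibbsDensity volume (muAlpha α) u x * u x) - log (∫ x, exp (u x) * muAlpha α x) := by
  have hα₀ : 0 < 1 + α := by linarith
  have hμ := integrable_muAlpha hα hα'
  have hv := integrable_gibbsDensity hμ hu hM
  set v := gibbsDensity volume (muAlpha α) u
  have hf : Integrable fun x => v x - muAlpha α x := hv.sub hμ
  set φ := truncPotential A B fun x => v x - muAlpha α x
  set t := 2 * (4 * π * (1 + α)) with ht_def
  have hφ : AEStronglyMeasurable φ :=
    (contDiff_truncPotential hf hAB).continuous.aestronglyMeasurable
  have hbound := abs_truncPotential_le hf hAB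
  have htbound (x : E2) : |t * φ x| ≤ |t| * _ :=
    (abs_mul _ _).trans_le (mul_le_mul_of_nonneg_left (hbound x) (abs_nonneg t))
  have honofri := log_integral_exp_truncPotential_muAlpha_le hα hα' hAB hf t
  have hgibbs := integral_gibbsDensity_mul_sub_log_le hμ hu hM
    (muAlpha_nonneg hα) (by simp [integral_muAlpha hα hα']) (hφ.const_mul t) htbound
  have hform : greenForm A B (fun x => v x - muAlpha α x) =
      (∫ x, v x * φ x) - ∫ x, φ x * muAlpha α x := by
    rw [greenForm, ← integral_sub (hv.mul_bdd hφ (Eventually.of_forall hbound))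
      (integrable_mul_of_abs_le hμ hφ hbound)]
    congr 1; ext x; ring
  have hcoef : t ^ 2 / (16 * π * (1 + α)) = 4 * π * (1 + α) := by
    rw [ht_def]; field_simp; ring
  simp only [mul_left_comm _ t] at hgibbs
  rw [integral_const_mul] at hgibbs
  rw [hcoef] at honofri
  rw [hform]
  linarith

section LogEnergy

variable (hα : -1 < α) (hα' : α ≤ 0) (hu : AEStronglyMeasurable u) (hM : ∀ x, |u x| ≤ M)
include hα hα' hu hM

lemma integrable_gibbsDensity_sub_muAlpha :
    Integrable fun x => gibbsDensity volume (muAlpha α) u x - muAlpha α x :=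
  (integrable_gibbsDensity (integrable_muAlpha hα hα') hu hM).sub (integrable_muAlpha hα hα')

lemma integral_gibbsDensity_sub_muAlpha :
    ∫ x, (gibbsDensity volume (muAlpha α) u x - muAlpha α x) = 0 := by
  have hμ := integrable_muAlpha hα hα'
  have hmass := integral_muAlpha hα hα'
  rw [integral_sub (integrable_gibbsDensity hμ hu hM) hμ, hmass, integral_gibbsDensity hμ hu hM
    (muAlpha_nonneg hα) (by rw [hmass]; exact one_pos), sub_self]

lemma integrable_prod_gibbsDensity_sub_muAlpha_mul_log :
    Integrable (fun p : E2 × E2 => (gibbsDensity volume (muAlpha α) u p.1 - muAlpha α p.1) *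
      ((gibbsDensity volume (muAlpha α) u p.2 - muAlpha α p.2) * log ‖p.1 - p.2‖))
      (volume.prod volume) :=
  integrable_prod_mul_log_of_abs_le_muAlpha hα hα'
    (integrable_gibbsDensity_sub_muAlpha hα hα' hu hM).aestronglyMeasurable
    (abs_gibbsDensity_sub_le (muAlpha_nonneg hα) hM)

lemma logEnergy_gibbsDensity_sub_muAlpha_le :
    4 * π * (1 + α) * (∫ x, (gibbsDensity volume (muAlpha α) u x - muAlpha α x) *
        invLap2 (fun y => gibbsDensity volume (muAlpha α) u y - muAlpha α y) x) ≤
      ∫ x, gibbsDensity volume (muAlpha α) u x *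
        log (gibbsDensity volume (muAlpha α) u x / muAlpha α x) := by
  have hf := integrable_gibbsDensity_sub_muAlpha hα hα' hu hM
  have hf₀ := integral_gibbsDensity_sub_muAlpha hα hα' hu hM
  have hlog := integrable_prod_gibbsDensity_sub_muAlpha_mul_log hα hα' hu hM
  have hform := tendsto_greenForm hf hf₀ hlog neg_natCast_le_natCast tendsto_neg_natCast_atBot
    tendsto_natCast_atTop_atTop
  have hnorm := tendsto_integral_norm_sq_truncPotentialDeriv hf hf₀ hlog neg_natCast_le_natCast
    tendsto_neg_natCast_atBot tendsto_natCast_atTop_atTop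
  have hle := le_of_tendsto' ((hform.const_mul (2 * (4 * π * (1 + α)))).sub
    (hnorm.const_mul (4 * π * (1 + α))))
    fun n : ℕ => greenForm_gibbsDensity_sub_le hα hα' (neg_natCast_le_natCast n) hu hM
  rw [integral_gibbsDensity_mul_log (integrable_muAlpha hα hα') hu hM (muAlpha_nonneg hα)
    (by rw [integral_muAlpha hα hα']; exact one_pos)]
  linarith

end LogEnergy

lemma entropy_gibbsDensity_muAlpha_le (hα : -1 < α) (hα' : α ≤ 0) (hu : ContDiff ℝ 1 u)
    (hM : ∀ x, |u x| ≤ M) {L : ℝ} (hL : ∀ x, ‖fderiv ℝ u x‖ ≤ L)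
    (hlim : Tendsto u (cocompact E2) (𝓝 0)) (henergy : Integrable fun x => ‖gradient u x‖ ^ 2) :
    (∫ x, gibbsDensity volume (muAlpha α) u x *
        log (gibbsDensity volume (muAlpha α) u x / muAlpha α x)) ≤
      4 * π * (1 + α) * (∫ x, (gibbsDensity volume (muAlpha α) u x - muAlpha α x) *
        invLap2 (fun y => gibbsDensity volume (muAlpha α) u y - muAlpha α y) x) +
      (1 / (16 * π * (1 + α)) * (∫ x, ‖gradient u x‖ ^ 2) -
        log (∫ x, exp (u x) * muAlpha α x) + ∫ x, u x * muAlpha α x) := by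
  have hα₀ : 0 < 1 + α := by linarith
  have hmeas := hu.continuous.aestronglyMeasurable (μ := volume)
  have hμ := integrable_muAlpha hα hα'
  have hpair : ∫ x, (gibbsDensity volume (muAlpha α) u x - muAlpha α x) * u x =
      (∫ x, gibbsDensity volume (muAlpha α) u x * u x) - ∫ x, u x * muAlpha α x := by
    rw [← integral_sub (integrable_gibbsDensity_mul hμ hmeas hM hmeas hM)
      (integrable_mul_of_abs_le hμ hmeas hM)]
    congr 1; ext x; ring
  have hdual := integral_mul_le_integral_mul_invLap2_add
    (integrable_gibbsDensity_sub_muAlpha hα hα' hmeas hM)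
    (integral_gibbsDensity_sub_muAlpha hα hα' hmeas hM)
    (integrable_prod_gibbsDensity_sub_muAlpha_mul_log hα hα' hmeas hM) hu hM hL hlim henergy
    (c := 4 * π * (1 + α)) (by positivity)
  rw [hpair, show 4 * (4 * π * (1 + α)) = 16 * π * (1 + α) by ring] at hdual
  rw [integral_gibbsDensity_mul_log hμ hmeas hM (muAlpha_nonneg hα)
    (by rw [integral_muAlpha hα hα']; exact one_pos)]
  linarith

end Main

lemma integrable_norm_gradient_sq {E : Type*} [NormedAddCommGroup E] [InnerProductSpace ℝ E]
    [CompleteSpace E] [MeasurableSpace E] [OpensMeasurableSpace E] {μ : Measure E}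
    [IsFiniteMeasureOnCompacts μ] {u : E → ℝ} (hu : ContDiff ℝ 1 u) (hc : HasCompactSupport u) :
    Integrable (fun x => ‖gradient u x‖ ^ 2) μ := by
  have hsupp : HasCompactSupport fun x => ‖fderiv ℝ u x‖ ^ 2 :=
    (hc.fderiv ℝ).comp_left (g := fun ℓ : E →L[ℝ] ℝ => ‖ℓ‖ ^ 2) (by simp)
  have hcont : Continuous fun x => ‖fderiv ℝ u x‖ ^ 2 :=
    (hu.continuous_fderiv one_ne_zero).norm.pow 2
  simpa only [norm_gradient] using hcont.integrable_of_hasCompactSupport hsupp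

theorem improved_onofri_alpha_general (α : ℝ) (hα1 : -1 < α) (hα2 : α ≤ 0)
    (u : EuclideanSpace ℝ (Fin 2) → ℝ) (hu : ContDiff ℝ 1 u) (hlip : ∃ K, LipschitzWith K u)
    (hlim : Tendsto u (cocompact (EuclideanSpace ℝ (Fin 2))) (𝓝 0))
    (henergy : Integrable fun x => ‖gradient u x‖ ^ 2)
    (v : EuclideanSpace ℝ (Fin 2) → ℝ)
    (hv : v = fun x => Real.exp (u x) * muAlpha α x / ∫ y, Real.exp (u y) * muAlpha α y) :
    0 ≤ (∫ x, v x * Real.log (v x / muAlpha α x)) -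
        4 * Real.pi * (1 + α) *
          ∫ x, (v x - muAlpha α x) * invLap2 (fun y => v y - muAlpha α y) x ∧
      (∫ x, v x * Real.log (v x / muAlpha α x)) -
        4 * Real.pi * (1 + α) *
          (∫ x, (v x - muAlpha α x) * invLap2 (fun y => v y - muAlpha α y) x) ≤
      1 / (16 * Real.pi * (1 + α)) * (∫ x, ‖gradient u x‖ ^ 2) -
        Real.log (∫ x, Real.exp (u x) * muAlpha α x) + ∫ x, u x * muAlpha α x := by
  obtain ⟨K, hK⟩ := hlip
  obtain ⟨M, hM⟩ := exists_abs_le_of_tendsto_cocompact hu.continuous hlim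
  have hv_gibbs : v = gibbsDensity volume (muAlpha α) u := hv
  rw [hv_gibbs]
  exact ⟨sub_nonneg.2 (logEnergy_gibbsDensity_sub_muAlpha_le hα1 hα2
      hu.continuous.aestronglyMeasurable hM),
    sub_le_iff_le_add'.2 (entropy_gibbsDensity_muAlpha_le hα1 hα2 hu hM
      (fun _ => norm_fderiv_le_of_lipschitz ℝ hK) hlim henergy)⟩

/-- the improved weighted Onofri inequality: the deficit in the
logarithmic HLS inequality for `μ_α` is bounded by the deficit in the α-weighted
Onofri inequality, for `α ∈ (−1, 0]`. -/
theorem improved_onofri_alpha (α : ℝ) (hα1 : -1 < α) (hα2 : α ≤ 0)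
    (u : EuclideanSpace ℝ (Fin 2) → ℝ) (hu : ContDiff ℝ (⊤ : ℕ∞) u) (hc : HasCompactSupport u)
    (v : EuclideanSpace ℝ (Fin 2) → ℝ)
    (hv : v = fun x => Real.exp (u x) * muAlpha α x / ∫ y, Real.exp (u y) * muAlpha α y) :
    0 ≤ (∫ x, v x * Real.log (v x / muAlpha α x)) -
        4 * Real.pi * (1 + α) *
          ∫ x, (v x - muAlpha α x) * invLap2 (fun y => v y - muAlpha α y) x ∧
      (∫ x, v x * Real.log (v x / muAlpha α x)) -
        4 * Real.pi * (1 + α) *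
          (∫ x, (v x - muAlpha α x) * invLap2 (fun y => v y - muAlpha α y) x) ≤
      1 / (16 * Real.pi * (1 + α)) * (∫ x, ‖gradient u x‖ ^ 2) -
        Real.log (∫ x, Real.exp (u x) * muAlpha α x) + ∫ x, u x * muAlpha α x := by
  have hu₁ : ContDiff ℝ 1 u := hu.of_le (by norm_cast)
  exact improved_onofri_alpha_general α hα1 hα2 u hu₁
    (ContDiff.lipschitzWith_of_hasCompactSupport hc hu₁ one_ne_zero)
    hc.is_zero_at_infty (integrable_norm_gradient_sq hu₁ hc) v hv
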